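/- Let Ω ⊂ ℝⁿ be a simply connected, bounded Lipschitz domain, let f ∈ C²([0,∞)) be strictly convex with f(0) = f'(0) = 0, satisfying the linear growth condition νt − L ≤ f(t) ≤ L(t+1) and the bound f''(t) ≤ L(1+t)⁻¹ for all t ≥ 0, and let T₀ ∈ W^{2,∞}(Ω;ℝ^{N×n}) satisfy ‖T₀‖_{L^∞(Ω;ℝ^{N×n})} < f^∞(1). Then the dual problem associated to the minimisation of 𝔉 (with integrand F(·) = f(|·|)) possesses a unique solution σ ∈ W^{1,2}_loc(Ω;ℝ^{N×n}) ∩ L^∞_⊥(Ω;ℝ^{N×n}), and it is given by σ = f'(|∇u|)|∇u|⁻¹ ∇u − T₀ ℒⁿ-almost everywhere in Ω, where u ∈ W^{1,1}(Ω;ℝ^N) is the minimiser of 𝔉 in W^{1,1}(Ω;ℝ^N). -/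

import Mathlib

open MeasureTheory Filter Topology Set
open scoped ENNReal RealInnerProductSpace

noncomputable section

/-- Euclidean space `ℝⁿ`. -/
abbrev EVec (n : ℕ) := EuclideanSpace ℝ (Fin n)

/-- Frobenius inner product of two "matrices". -/
def mdot {ι κ : Type*} [Fintype ι] [Fintype κ] (A B : ι → κ → ℝ) : ℝ :=
  ∑ a, ∑ i, A a i * B a i

/-- Frobenius norm. -/
noncomputable def mnorm {ι κ : Type*} [Fintype ι] [Fintype κ] (A : ι → κ → ℝ) : ℝ :=
  Real.sqrt (mdot A A)

/-- Euclidean norm of a vector given as a tuple. -/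
noncomputable def vnorm {ι : Type*} [Fintype ι] (v : ι → ℝ) : ℝ :=
  Real.sqrt (∑ a, v a ^ 2)

/-- `Ω ⊆ ℝⁿ` is a (nonempty, open, connected) Lipschitz domain: every boundary point has
a neighbourhood on which `Ω` can be flattened to a half space by a bi-Lipschitz map. -/
def IsLipschitzDomain {n : ℕ} (Ω : Set (EVec n)) : Prop :=
  IsOpen Ω ∧ Ω.Nonempty ∧ IsConnected Ω ∧
  ∀ x ∈ frontier Ω, ∃ (U : Set (EVec n)) (h hinv : EVec n → EVec n) (K : NNReal)
      (e : EVec n),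
    ‖e‖ = 1 ∧ IsOpen U ∧ x ∈ U ∧ LipschitzOnWith K h U ∧
    LipschitzOnWith K hinv (h '' U) ∧ (∀ y ∈ U, hinv (h y) = y) ∧
    h '' (U ∩ Ω) = (h '' U) ∩ {y : EVec n | 0 < ⟪e, y⟫}

/-- `Du` is the weak (distributional) gradient of `u` on `Ω`, and both are integrable;
i.e. `u ∈ W^{1,1}(Ω; ℝ^ι)` with weak gradient `Du`. -/
def HasWeakDerivOn {n : ℕ} {ι : Type*} [Fintype ι] (Ω : Set (EVec n))
    (u : EVec n → ι → ℝ) (Du : EVec n → ι → Fin n → ℝ) : Prop :=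
  IntegrableOn u Ω volume ∧ IntegrableOn Du Ω volume ∧
  ∀ φ : EVec n → ℝ, ContDiff ℝ 1 φ → HasCompactSupport φ → tsupport φ ⊆ Ω →
    ∀ (a : ι) (i : Fin n),
      ∫ x in Ω, u x a * fderiv ℝ φ x (EuclideanSpace.single i 1) =
        - ∫ x in Ω, Du x a i * φ x

/-- `u ∈ W^{1,2}(Ω;ℝ^ι)` with weak gradient `Du`. -/
def MemW12 {n : ℕ} {ι : Type*} [Fintype ι] (Ω : Set (EVec n))
    (u : EVec n → ι → ℝ) (Du : EVec n → ι → Fin n → ℝ) : Prop :=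
  HasWeakDerivOn Ω u Du ∧ IntegrableOn (fun x => vnorm (u x) ^ 2) Ω volume ∧
    IntegrableOn (fun x => mnorm (Du x) ^ 2) Ω volume

/-- vanishing mean value `(u)_Ω = 0`. -/
def ZeroMean {n : ℕ} {ι : Type*} [Fintype ι] (Ω : Set (EVec n))
    (u : EVec n → ι → ℝ) : Prop :=
  ∀ a : ι, ∫ x in Ω, u x a = 0

/-- The `L^∞(Ω)` norm of a matrix field (w.r.t. the pointwise Frobenius norm). -/
noncomputable def linfNormOn {n N : ℕ} (Ω : Set (EVec n))
    (T : EVec n → Fin N → Fin n → ℝ) : ℝ≥0∞ :=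
  essSup (fun x => ENNReal.ofReal (mnorm (T x))) (volume.restrict Ω)

/-- `T ∈ W^{1,∞}(Ω)`: bounded and Lipschitz on `Ω`. -/
def MemW1inf {n N : ℕ} (Ω : Set (EVec n)) (T : EVec n → Fin N → Fin n → ℝ) : Prop :=
  ∃ C : NNReal, (∀ x ∈ Ω, ‖T x‖ ≤ C) ∧ LipschitzOnWith C T Ω

/-- `T ∈ W^{2,∞}(Ω)`: `T` is bounded with bounded Lipschitz derivative on `Ω`. -/
def MemW2inf {n N : ℕ} (Ω : Set (EVec n)) (T : EVec n → Fin N → Fin n → ℝ) : Prop :=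
  ∃ (C : NNReal) (DT : EVec n → EVec n →L[ℝ] (Fin N → Fin n → ℝ)),
    (∀ x ∈ Ω, ‖T x‖ ≤ C) ∧ (∀ x ∈ Ω, HasFDerivWithinAt T (DT x) Ω x) ∧
    (∀ x ∈ Ω, ‖DT x‖ ≤ C) ∧ LipschitzOnWith C DT Ω

/-- The nonlinear map `A(z) = f'(|z|) z / |z|` (equal to `0` at `z = 0`). -/
noncomputable def Amap {N n : ℕ} (f' : ℝ → ℝ) (z : Fin N → Fin n → ℝ) :
    Fin N → Fin n → ℝ :=
  fun a i => (f' (mnorm z) / mnorm z) * z a i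

/-- `u` is a weak solution of the Neumann problem for the integrand `f(|·|)` and datum `T₀`. -/
def IsWeakSolution {n N : ℕ} (Ω : Set (EVec n)) (f' : ℝ → ℝ)
    (T₀ : EVec n → Fin N → Fin n → ℝ)
    (u : EVec n → Fin N → ℝ) (Du : EVec n → Fin N → Fin n → ℝ) : Prop :=
  HasWeakDerivOn Ω u Du ∧
  ∀ φ Dφ, HasWeakDerivOn Ω φ Dφ →
    ∫ x in Ω, mdot (Amap f' (Du x)) (Dφ x) = ∫ x in Ω, mdot (T₀ x) (Dφ x)

/-- The functional `𝔉[w] = ∫_Ω (f(|∇w|) − T₀ · ∇w) dx` (as a function of the gradient). -/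
noncomputable def FF {n N : ℕ} (Ω : Set (EVec n)) (f : ℝ → ℝ)
    (T₀ : EVec n → Fin N → Fin n → ℝ) (Du : EVec n → Fin N → Fin n → ℝ) : ℝ :=
  ∫ x in Ω, (f (mnorm (Du x)) - mdot (T₀ x) (Du x))

/-- The regularised functional `𝔉_k[w] = 𝔉[w] + (2k)⁻¹ ∫_Ω |∇w|² dx`. -/
noncomputable def FFk {n N : ℕ} (Ω : Set (EVec n)) (f : ℝ → ℝ)
    (T₀ : EVec n → Fin N → Fin n → ℝ) (k : ℕ)
    (Du : EVec n → Fin N → Fin n → ℝ) : ℝ :=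
  FF Ω f T₀ Du + (2 * (k : ℝ))⁻¹ * ∫ x in Ω, mnorm (Du x) ^ 2

end

/-- The functional `𝓕[w] = ∫_Ω (F(∇w) − T₀·∇w) dx` for a general integrand `F`. -/
noncomputable def FFgen {n N : ℕ} (Ω : Set (EVec n)) (F : (Fin N → Fin n → ℝ) → ℝ)
    (T₀ : EVec n → Fin N → Fin n → ℝ) (Du : EVec n → Fin N → Fin n → ℝ) : ℝ :=
  ∫ x in Ω, (F (Du x) - mdot (T₀ x) (Du x))

/-- The elementary matrix with a `1` in position `(a,i)`. -/
def basisMat {N n : ℕ} (a : Fin N) (i : Fin n) : Fin N → Fin n → ℝ :=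
  fun a' i' => if a' = a ∧ i' = i then 1 else 0

/-- The gradient `D_z F(z)` of `F : ℝ^{N×n} → ℝ`, as a matrix. -/
noncomputable def DFmat {N n : ℕ} (F : (Fin N → Fin n → ℝ) → ℝ)
    (z : Fin N → Fin n → ℝ) : Fin N → Fin n → ℝ :=
  fun a i => fderiv ℝ F z (basisMat a i)

/-- `χ ∈ L^∞_⊥(Ω;ℝ^{N×n})`: a bounded measurable matrix field which annihilates all
`W^{1,1}`-gradients. -/
def MemLinfPerp {n N : ℕ} (Ω : Set (EVec n)) (χ : EVec n → Fin N → Fin n → ℝ) : Prop :=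
  AEStronglyMeasurable χ (volume.restrict Ω) ∧ (∃ C : ℝ, ∀ x ∈ Ω, mnorm (χ x) ≤ C) ∧
  ∀ (w : EVec n → Fin N → ℝ) (Dw : EVec n → Fin N → Fin n → ℝ),
    HasWeakDerivOn Ω w Dw → ∫ x in Ω, mdot (χ x) (Dw x) = 0

/-- The shifted convex conjugate `F*(z*) + F(0) = sup_w (z*·w − F(w) + F(0)) ∈ [0,∞]`,
valued in `ℝ≥0∞` so that infeasible points (`F*(z*) = ∞`) are handled correctly. -/
noncomputable def FstarShift {N n : ℕ} (F : (Fin N → Fin n → ℝ) → ℝ)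
    (z : Fin N → Fin n → ℝ) : ℝ≥0∞ :=
  ⨆ w : Fin N → Fin n → ℝ, ENNReal.ofReal (mdot z w - F w + F 0)

/-- The dual functional `ℛ_{T₀}[χ] = −∫_Ω F*(T₀+χ) dx`, valued in `EReal` (it equals
`F(0)·|Ω| − ∫_Ω (F*(T₀+χ) + F(0)) dx`, where the last integrand is nonnegative and the
value is `−∞` if `F*(T₀+χ)` is not integrable). -/
noncomputable def Rdual {n N : ℕ} (Ω : Set (EVec n)) (F : (Fin N → Fin n → ℝ) → ℝ)
    (T₀ χ : EVec n → Fin N → Fin n → ℝ) : EReal :=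
  ((F 0 * (volume Ω).toReal : ℝ) : EReal) -
    ((∫⁻ x in Ω, FstarShift F (T₀ x + χ x) : ℝ≥0∞) : EReal)

/-- Locally integrable weak (distributional) gradient on `Ω`. -/
def HasLocWeakDerivOn {n : ℕ} {ι : Type*} [Fintype ι] (Ω : Set (EVec n))
    (u : EVec n → ι → ℝ) (Du : EVec n → ι → Fin n → ℝ) : Prop :=
  (∀ K : Set (EVec n), IsCompact K → K ⊆ Ω → IntegrableOn Du K volume) ∧
  ∀ φ : EVec n → ℝ, ContDiff ℝ 1 φ → HasCompactSupport φ → tsupport φ ⊆ Ω →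
    ∀ (a : ι) (i : Fin n),
      ∫ x in Ω, u x a * fderiv ℝ φ x (EuclideanSpace.single i 1) =
        - ∫ x in Ω, Du x a i * φ x

open MeasureTheory Filter Topology Set
open scoped ENNReal RealInnerProductSpace

structure GoodF (f f' : ℝ → ℝ) (L : ℝ) : Prop where
  Lpos : 0 < L
  f0 : f 0 = 0
  conv : ∀ r s, 0 ≤ r → 0 ≤ s → f r + f' r * (s - r) ≤ f s
  nonneg : ∀ t, 0 ≤ t → 0 ≤ f' t
  leL : ∀ t, 0 ≤ t → f' t ≤ L
  mono3 : ∀ r s, 0 ≤ r → 0 ≤ s → (f' s - f' r) * (s - r) ≤ 2 * L / (1 + r) * (s - r) ^ 2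
  quot : ∀ t, 0 ≤ t → f' t * (1 + t) ≤ 2 * L * t

theorem goodF_of {ν L : ℝ} (hν : 0 < ν) (hνL : ν ≤ L)
    {f f' f'' : ℝ → ℝ}
    (hderiv : ∀ t ∈ Set.Ici (0:ℝ), HasDerivWithinAt f (f' t) (Set.Ici 0) t)
    (hderiv' : ∀ t ∈ Set.Ici (0:ℝ), HasDerivWithinAt f' (f'' t) (Set.Ici 0) t)
    (hstrict : StrictConvexOn ℝ (Set.Ici 0) f)
    (hf0 : f 0 = 0) (hf'0 : f' 0 = 0)
    (hgrowth : ∀ t ∈ Set.Ici (0:ℝ), ν * t - L ≤ f t ∧ f t ≤ L * (t + 1))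
    (hsec : ∀ t ∈ Set.Ici (0:ℝ), f'' t ≤ L * (1 + t)⁻¹) : GoodF f f' L := by
  have Lpos : 0 < L := by linarith
  have hconv : ∀ r s, 0 ≤ r → 0 ≤ s → f r + f' r * (s - r) ≤ f s := by
    intro r s hr hs
    rcases lt_trichotomy r s with h | h | h
    · have := hstrict.convexOn.le_slope_of_hasDerivWithinAt (x := r) (y := s) hr hs h (hderiv r hr)
      rw [slope_def_field, le_div_iff₀ (by linarith)] at this
      linarith
    · subst h; simp
    · have := hstrict.convexOn.slope_le_of_hasDerivWithinAt (x := s) (y := r) hs hr h (hderiv r hr)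
      rw [slope_def_field, div_le_iff₀ (by linarith)] at this
      linarith
  have hmono : ∀ r s, 0 ≤ r → r ≤ s → f' r ≤ f' s := by
    intro r s hr hrs
    rcases hrs.eq_or_lt with h | h
    · rw [h]
    · have h1 := hconv r s hr (hr.trans hrs)
      have h2 := hconv s r (hr.trans hrs) hr
      have : (f' s - f' r) * (s - r) ≥ 0 := by nlinarith
      by_contra hc
      push Not at hc
      nlinarith
  have hnn : ∀ t, 0 ≤ t → 0 ≤ f' t := fun t ht => hf'0 ▸ hmono 0 t le_rfl ht
  have hleL : ∀ t, 0 ≤ t → f' t ≤ L := by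
    intro t ht
    by_contra hc
    push Not at hc
    set d := f' t - L with hd
    have hdpos : 0 < d := by linarith
    -- f s ≥ f t + f' t (s - t), f s ≤ L (s+1)
    have key : ∀ s, 0 ≤ s → f t + f' t * (s - t) ≤ L * (s + 1) := fun s hs =>
      (hconv t s ht hs).trans (hgrowth s hs).2
    have hft : 0 ≤ f t := by have := hconv 0 t le_rfl ht; rw [hf0, hf'0] at this; linarith
    have h1 := key ((L + f' t * t + 1) / d) (by have := hnn t ht; positivity)
    have h2 : d * ((L + f' t * t + 1) / d) = L + f' t * t + 1 := by field_simp
    nlinarith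
  have hlip : ∀ r s, 0 ≤ r → r ≤ s → f' s - f' r ≤ L * (1 + r)⁻¹ * (s - r) := by
    intro r s hr hrs
    have hd : ∀ x ∈ Ico r s, HasDerivWithinAt f' (f'' x) (Ici x) x := fun x hx =>
      (hderiv' x (hr.trans hx.1)).mono (fun y hy => (hr.trans hx.1).trans hy)
    have hc : ContinuousOn f' (Icc r s) := fun x hx =>
      ((hderiv' x (hr.trans hx.1)).continuousWithinAt).mono (fun y hy => hr.trans hy.1)
    have := image_le_of_deriv_right_le_deriv_boundary (f := f') (f' := f'') (a := r) (b := s)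
      hc hd (B := fun x => f' r + L * (1 + r)⁻¹ * (x - r)) (B' := fun _ => L * (1 + r)⁻¹) (by simp)
      (by fun_prop) (fun x hx => by
        have : HasDerivAt (fun x => f' r + L * (1 + r)⁻¹ * (x - r)) (L * (1 + r)⁻¹) x := by
          simpa using (((hasDerivAt_id x).sub_const r).const_mul (L * (1 + r)⁻¹)).const_add (f' r)
        exact this.hasDerivWithinAt)
      (fun x hx => (hsec x (hr.trans hx.1)).trans (by
        have := hx.1
        gcongr)) (x := s) ⟨hrs, le_rfl⟩
    linarith
  refine ⟨Lpos, hf0, hconv, hnn, hleL, ?_, ?_⟩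
  · intro r s hr hs
    rcases le_total r s with h | h
    · have h1 := hlip r s hr h
      have h2 : L * (1 + r)⁻¹ ≤ 2 * L / (1 + r) := by
        rw [← div_eq_mul_inv]; gcongr; linarith
      have h3 : 0 ≤ s - r := by linarith
      nlinarith [mul_le_mul_of_nonneg_right h1 h3, mul_le_mul_of_nonneg_right h2 (sq_nonneg (s - r))]
    · have h3 : 0 ≤ r - s := by linarith
      suffices f' r - f' s ≤ 2 * L / (1 + r) * (r - s) by nlinarith
      by_cases h4 : 1 + r ≤ 2 * (1 + s)
      · have h1 := hlip s r hs h
        have h2 : L * (1 + s)⁻¹ ≤ 2 * L / (1 + r) := by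
          rw [← div_eq_mul_inv, div_le_div_iff₀ (by linarith) (by linarith)]
          nlinarith
        nlinarith
      · push Not at h4
        have h1 := hleL r hr
        have h2 := hnn s hs
        rw [div_mul_eq_mul_div, le_div_iff₀ (by linarith)]
        nlinarith
  · intro t ht
    have h1 := hlip 0 t le_rfl ht
    have h2 := hleL t ht
    simp [hf'0] at h1
    nlinarith

section inner
variable {E : Type*} [NormedAddCommGroup E] [InnerProductSpace ℝ E]

noncomputable def AE (f' : ℝ → ℝ) (z : E) : E := (f' ‖z‖ / ‖z‖) • z

variable {f f' : ℝ → ℝ} {L : ℝ}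

theorem AE_zero : AE f' (0 : E) = 0 := by simp [AE]

theorem GoodF.norm_AE_le (h : GoodF f f' L) (z : E) : ‖AE f' z‖ ≤ L := by
  have h1 := h.nonneg _ (norm_nonneg z)
  rw [AE, norm_smul, Real.norm_eq_abs, abs_of_nonneg (by positivity)]
  rcases eq_or_ne z 0 with rfl | hz
  · simp [h.Lpos.le]
  · have : 0 < ‖z‖ := norm_pos_iff.2 hz
    rw [div_mul_cancel₀ _ this.ne']
    exact h.leL _ this.le

/-- gradient inequality -/
theorem GoodF.grad (h : GoodF f f' L) (a b : E) : f ‖a‖ + ⟪AE f' a, b - a⟫ ≤ f ‖b‖ := by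
  have h1 := h.conv ‖a‖ ‖b‖ (norm_nonneg _) (norm_nonneg _)
  have h0 := h.nonneg _ (norm_nonneg a)
  refine le_trans ?_ h1
  gcongr
  rw [AE, real_inner_smul_left, inner_sub_right, real_inner_self_eq_norm_sq]
  rcases eq_or_ne a 0 with rfl | ha
  · simp; have := h.nonneg 0 le_rfl; positivity
  · have hp : 0 < ‖a‖ := norm_pos_iff.2 ha
    have h2 := real_inner_le_norm a b
    calc f' ‖a‖ / ‖a‖ * (⟪a, b⟫ - ‖a‖ ^ 2) ≤ f' ‖a‖ / ‖a‖ * (‖a‖ * ‖b‖ - ‖a‖ ^ 2) := by gcongr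
      _ = f' ‖a‖ * (‖b‖ - ‖a‖) := by field_simp

theorem GoodF.upper (h : GoodF f f' L) (a b : E) :
    f ‖b‖ ≤ f ‖a‖ + ⟪AE f' a, b - a⟫ + 3 * L / (1 + ‖a‖) * ‖b - a‖ ^ 2 := by
  have hL := h.Lpos
  have h1 := h.conv ‖b‖ ‖a‖ (norm_nonneg _) (norm_nonneg _)
  have h3 := h.mono3 ‖a‖ ‖b‖ (norm_nonneg _) (norm_nonneg _)
  have h0 := h.nonneg _ (norm_nonneg a)
  have hq := h.quot _ (norm_nonneg a)
  have hsq : (‖b‖ - ‖a‖) ^ 2 ≤ ‖b - a‖ ^ 2 := by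
    rw [← sq_abs (‖b‖ - ‖a‖)]
    have := abs_norm_sub_norm_le b a
    gcongr
  have h4 : f ‖b‖ ≤ f ‖a‖ + f' ‖a‖ * (‖b‖ - ‖a‖) + 2 * L / (1 + ‖a‖) * ‖b - a‖ ^ 2 := by
    have : 2 * L / (1 + ‖a‖) * (‖b‖ - ‖a‖) ^ 2 ≤ 2 * L / (1 + ‖a‖) * ‖b - a‖ ^ 2 := by gcongr
    nlinarith
  have h5 : f' ‖a‖ * (‖b‖ - ‖a‖) ≤ ⟪AE f' a, b - a⟫ + L / (1 + ‖a‖) * ‖b - a‖ ^ 2 := by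
    rw [AE, real_inner_smul_left, inner_sub_right, real_inner_self_eq_norm_sq]
    rcases eq_or_ne a 0 with rfl | ha
    · have : f' 0 = 0 := by
        have := h.quot 0 le_rfl
        have := h.nonneg 0 le_rfl
        simp at *; linarith
      simp [this]; positivity
    · have hp : 0 < ‖a‖ := norm_pos_iff.2 ha
      have h6 : f' ‖a‖ / ‖a‖ ≤ 2 * L / (1 + ‖a‖) := by
        rw [div_le_div_iff₀ hp (by positivity)]; linarith
      have h7 : ‖a‖ * ‖b‖ - ⟪a, b⟫ ≤ ‖b - a‖ ^ 2 / 2 := by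
        rw [@norm_sub_sq_real, real_inner_comm]
        nlinarith [sq_nonneg (‖a‖ - ‖b‖)]
      have h8 : f' ‖a‖ * (‖b‖ - ‖a‖) = f' ‖a‖ / ‖a‖ * (⟪a, b⟫ - ‖a‖ ^ 2)
          + f' ‖a‖ / ‖a‖ * (‖a‖ * ‖b‖ - ⟪a, b⟫) := by field_simp; ring
      have h9 : f' ‖a‖ / ‖a‖ * (‖a‖ * ‖b‖ - ⟪a, b⟫) ≤ 2 * L / (1 + ‖a‖) * (‖b - a‖ ^ 2 / 2) := by
        have := real_inner_le_norm a b
        apply mul_le_mul h6 h7 (by linarith) (by positivity)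
      rw [h8]
      have : 2 * L / (1 + ‖a‖) * (‖b - a‖ ^ 2 / 2) = L / (1 + ‖a‖) * ‖b - a‖ ^ 2 := by ring
      linarith
  have h6 : 3 * L / (1 + ‖a‖) * ‖b - a‖ ^ 2 = 2 * L / (1 + ‖a‖) * ‖b - a‖ ^ 2
    + L / (1 + ‖a‖) * ‖b - a‖ ^ 2 := by ring
  linarith

theorem GoodF.breg (h : GoodF f f' L) (a b : E) :
    (1 + ‖b‖) * ‖AE f' b - AE f' a‖ ^ 2 / (12 * L) ≤ f ‖b‖ - f ‖a‖ - ⟪AE f' a, b - a⟫ := by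
  have hL := h.Lpos
  set d := AE f' b - AE f' a with hd
  set t : ℝ := (1 + ‖b‖) / (6 * L) with ht
  have h1 := h.upper b (b - t • d)
  have h2 := h.grad a (b - t • d)
  have e1 : ⟪AE f' b, b - t • d - b⟫ = - t * ⟪AE f' b, d⟫ := by
    rw [sub_sub_cancel_left, inner_neg_right, real_inner_smul_right]; ring
  have e2 : ⟪AE f' a, b - t • d - a⟫ = ⟪AE f' a, b - a⟫ - t * ⟪AE f' a, d⟫ := by
    rw [show b - t • d - a = (b - a) - t • d by abel, inner_sub_right, real_inner_smul_right]
  have e3 : ⟪AE f' b, d⟫ - ⟪AE f' a, d⟫ = ‖d‖ ^ 2 := by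
    rw [← inner_sub_left, ← hd, real_inner_self_eq_norm_sq]
  have e4 : ‖b - t • d - b‖ ^ 2 = t ^ 2 * ‖d‖ ^ 2 := by
    rw [sub_sub_cancel_left, norm_neg, norm_smul, mul_pow, Real.norm_eq_abs, sq_abs]
  rw [e1, e4] at h1
  rw [e2] at h2
  have hb : 0 < 1 + ‖b‖ := by positivity
  have e5 : 3 * L / (1 + ‖b‖) * (t ^ 2 * ‖d‖ ^ 2) = t / 2 * ‖d‖ ^ 2 := by
    rw [ht]; field_simp; ring
  have e6 : (1 + ‖b‖) * ‖d‖ ^ 2 / (12 * L) = t / 2 * ‖d‖ ^ 2 := by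
    rw [ht]; field_simp; ring
  rw [e6]
  rw [e5] at h1
  have : t * ⟪AE f' b, d⟫ - t * ⟪AE f' a, d⟫ = t * ‖d‖ ^ 2 := by rw [← mul_sub, e3]
  linarith

theorem GoodF.coco (h : GoodF f f' L) (a b : E) :
    (1 + ‖a‖) * ‖AE f' b - AE f' a‖ ^ 2 / (12 * L) ≤ ⟪AE f' b - AE f' a, b - a⟫ := by
  have h1 := h.breg b a
  have h2 := h.grad a b
  rw [norm_sub_rev] at h1
  have : ⟪AE f' b, a - b⟫ = - ⟪AE f' b, b - a⟫ := by rw [← neg_sub, inner_neg_right]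
  rw [inner_sub_left]
  linarith

theorem GoodF.lip (h : GoodF f f' L) : LipschitzWith (Real.toNNReal (12 * L)) (AE f' : E → E) := by
  have hL := h.Lpos
  apply LipschitzWith.of_dist_le_mul
  intro b a
  rw [dist_eq_norm, dist_eq_norm, Real.coe_toNNReal _ (by positivity)]
  have h1 := h.coco a b
  have h2 := real_inner_le_norm (AE f' b - AE f' a) (b - a)
  rcases (norm_nonneg (AE f' b - AE f' a)).eq_or_lt with h0 | h0
  · rw [← h0]; positivity
  · have h3 : (1 + ‖a‖) * ‖AE f' b - AE f' a‖ ^ 2 ≤ (‖AE f' b - AE f' a‖ * ‖b - a‖) * (12 * L) := by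
      rw [div_le_iff₀ (by positivity)] at h1
      nlinarith
    have h4 : ‖AE f' b - AE f' a‖ * ‖AE f' b - AE f' a‖ ≤ ‖AE f' b - AE f' a‖ * (12 * L * ‖b - a‖) := by
      nlinarith [norm_nonneg a, sq_nonneg ‖AE f' b - AE f' a‖]
    exact le_of_mul_le_mul_left h4 h0

theorem GoodF.f_nonneg (h : GoodF f f' L) {t : ℝ} (ht : 0 ≤ t) : 0 ≤ f t := by
  have := h.conv 0 t le_rfl ht
  have := h.nonneg 0 le_rfl
  have h0 := h.f0
  nlinarith

theorem GoodF.f_lip (h : GoodF f f' L) (a b : E) : f ‖b‖ - f ‖a‖ ≤ L * ‖b - a‖ := by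
  have h1 := h.grad b a
  have h2 := real_inner_le_norm (AE f' b) (b - a)
  have h3 := h.norm_AE_le b
  have h4 : ⟪AE f' b, a - b⟫ = - ⟪AE f' b, b - a⟫ := by rw [← neg_sub, inner_neg_right]
  nlinarith [norm_nonneg (b - a)]

theorem GoodF.f_lipW (h : GoodF f f' L) : LipschitzWith (Real.toNNReal L) (fun z : E => f ‖z‖) := by
  apply LipschitzWith.of_dist_le_mul
  intro b a
  rw [Real.coe_toNNReal _ h.Lpos.le, Real.dist_eq, dist_eq_norm, abs_le]
  have h1 := h.f_lip a b
  have h2 := h.f_lip b a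
  rw [norm_sub_rev] at h2
  constructor <;> linarith

end inner

theorem f_coercive {f f' : ℝ → ℝ} {L finf θ : ℝ} (h : GoodF f f' L)
    (hfinf : Filter.Tendsto (fun t => f t / t) Filter.atTop (nhds finf)) (hθ : θ < finf)
    (hθ0 : 0 ≤ θ) : ∃ C, 0 ≤ C ∧ ∀ t, 0 ≤ t → θ * t - C ≤ f t := by
  have h1 := (hfinf.eventually (lt_mem_nhds hθ)).and (eventually_gt_atTop 0)
  obtain ⟨t0, ht0⟩ := eventually_atTop.1 h1
  refine ⟨θ * |t0|, by positivity, fun t ht => ?_⟩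
  rcases le_total t0 t with h2 | h2
  · have := (ht0 t h2)
    rw [lt_div_iff₀ this.2] at this
    have : 0 ≤ θ * |t0| := by positivity
    linarith
  · have := h.f_nonneg ht
    have : t ≤ |t0| := h2.trans (le_abs_self _)
    nlinarith

open MeasureTheory Filter Topology Set
open scoped ENNReal RealInnerProductSpace

abbrev MM (N n : ℕ) := EuclideanSpace ℝ (Fin N × Fin n)
abbrev VV (N : ℕ) := EuclideanSpace ℝ (Fin N)

noncomputable def toM (N n : ℕ) : (Fin N → Fin n → ℝ) →L[ℝ] MM N n :=
  LinearMap.toContinuousLinearMap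
    { toFun := fun z => WithLp.toLp 2 (fun p => z p.1 p.2)
      map_add' := fun x y => by ext p; simp
      map_smul' := fun c x => by ext p; simp }

@[simp] theorem toM_apply {N n : ℕ} (z : Fin N → Fin n → ℝ) (p : Fin N × Fin n) :
    toM N n z p = z p.1 p.2 := rfl

noncomputable def ofM (N n : ℕ) : MM N n →L[ℝ] (Fin N → Fin n → ℝ) :=
  LinearMap.toContinuousLinearMap
    { toFun := fun m a i => m (a, i)
      map_add' := fun x y => by ext a i; simp
      map_smul' := fun c x => by ext a i; simp }

@[simp] theorem ofM_apply {N n : ℕ} (m : MM N n) (a : Fin N) (i : Fin n) :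
    ofM N n m a i = m (a, i) := rfl

@[simp] theorem toM_ofM {N n : ℕ} (m : MM N n) : toM N n (ofM N n m) = m := by
  ext p; simp

@[simp] theorem ofM_toM {N n : ℕ} (m : Fin N → Fin n → ℝ) : ofM N n (toM N n m) = m := by
  ext a i; simp

theorem mdot_eq {N n : ℕ} (A B : Fin N → Fin n → ℝ) : mdot A B = ⟪toM N n A, toM N n B⟫ := by
  rw [mdot, PiLp.inner_apply, Fintype.sum_prod_type]
  simp [mul_comm]

theorem mnorm_eq {N n : ℕ} (A : Fin N → Fin n → ℝ) : mnorm A = ‖toM N n A‖ := by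
  rw [mnorm, mdot_eq, real_inner_self_eq_norm_sq, Real.sqrt_sq (norm_nonneg _)]

theorem toM_Amap {N n : ℕ} (f' : ℝ → ℝ) (z : Fin N → Fin n → ℝ) :
    toM N n (Amap f' z) = AE f' (toM N n z) := by
  ext p; simp [Amap, AE, mnorm_eq]

theorem HasWeakDerivOn.add_smul {n : ℕ} {ι : Type*} [Fintype ι] {Ω : Set (EVec n)}
    {u w : EVec n → ι → ℝ} {Du Dw : EVec n → ι → Fin n → ℝ}
    (hu : HasWeakDerivOn Ω u Du) (hw : HasWeakDerivOn Ω w Dw) (t : ℝ) :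
    HasWeakDerivOn Ω (fun x => u x + t • w x) (fun x => Du x + t • Dw x) := by
  refine ⟨hu.1.add (hw.1.smul t), hu.2.1.add (hw.2.1.smul t), ?_⟩
  intro φ hφ hc hs a i
  have hd : Continuous (fun x => fderiv ℝ φ x (EuclideanSpace.single i 1)) :=
    (hφ.continuous_fderiv one_ne_zero).clm_apply continuous_const
  have hdc : HasCompactSupport (fun x => fderiv ℝ φ x (EuclideanSpace.single i 1)) :=
    hc.fderiv_apply (𝕜 := ℝ) _
  obtain ⟨C1, hC1⟩ := hd.bounded_above_of_compact_support hdc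
  obtain ⟨C2, hC2⟩ := hφ.continuous.bounded_above_of_compact_support hc
  have I1 : ∀ u : EVec n → ι → ℝ, IntegrableOn u Ω volume →
      Integrable (fun x => u x a * fderiv ℝ φ x (EuclideanSpace.single i 1)) (volume.restrict Ω) := by
    intro u hu
    have : Integrable (fun x => u x a) (volume.restrict Ω) := hu.eval a
    exact this.mul_bdd (c := C1) hd.aestronglyMeasurable (ae_of_all _ hC1)
  have I2 : ∀ u : EVec n → ι → Fin n → ℝ, IntegrableOn u Ω volume →
      Integrable (fun x => u x a i * φ x) (volume.restrict Ω) := by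
    intro u hu
    have : Integrable (fun x => u x a i) (volume.restrict Ω) := (hu.eval a).eval i
    exact this.mul_bdd (c := C2) hφ.continuous.aestronglyMeasurable (ae_of_all _ hC2)
  have e1 := hu.2.2 φ hφ hc hs a i
  have e2 := hw.2.2 φ hφ hc hs a i
  calc ∫ x in Ω, (u x + t • w x) a * fderiv ℝ φ x (EuclideanSpace.single i 1)
      = ∫ x in Ω, (u x a * fderiv ℝ φ x (EuclideanSpace.single i 1)
          + t * (w x a * fderiv ℝ φ x (EuclideanSpace.single i 1))) := by
        congr 1; ext x; simp; ring
    _ = _ := by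
        rw [integral_add (I1 u hu.1) ((I1 w hw.1).const_mul t), integral_const_mul, e1, e2]
        have : ∀ x, (Du x + t • Dw x) a i * φ x = Du x a i * φ x + t * (Dw x a i * φ x) := by
          intro x; simp; ring
        simp_rw [this]
        rw [integral_add (I2 Du hu.2.1) ((I2 Dw hw.2.1).const_mul t), integral_const_mul]
        ring

section EL
variable {n N : ℕ} {Ω : Set (EVec n)} {f f' : ℝ → ℝ} {L : ℝ}

theorem integrable_inner_bdd {α E : Type*} [MeasurableSpace α] {μ : Measure α}
    [NormedAddCommGroup E] [InnerProductSpace ℝ E] {a b : α → E} {C : ℝ}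
    (ha : AEStronglyMeasurable a μ) (hC : ∀ᵐ x ∂μ, ‖a x‖ ≤ C) (hb : Integrable b μ) :
    Integrable (fun x => ⟪a x, b x⟫) μ := by
  refine (hb.norm.const_mul C).mono' (ha.inner hb.aestronglyMeasurable) ?_
  filter_upwards [hC] with x hx
  exact (norm_inner_le_norm _ _).trans (by gcongr)

theorem EL (h : GoodF f f' L) (hfin : volume Ω ≠ ∞)
    {T₀ : EVec n → Fin N → Fin n → ℝ} {CT : ℝ}
    (hTm : AEStronglyMeasurable T₀ (volume.restrict Ω))
    (hTb : ∀ᵐ x ∂(volume.restrict Ω), ‖toM N n (T₀ x)‖ ≤ CT)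
    {u : EVec n → Fin N → ℝ} {Du : EVec n → Fin N → Fin n → ℝ}
    (hu : HasWeakDerivOn Ω u Du)
    (hmin : ∀ (w : EVec n → Fin N → ℝ) (Dw : EVec n → Fin N → Fin n → ℝ),
      HasWeakDerivOn Ω w Dw →
        FFgen Ω (fun z => f (mnorm z)) T₀ Du ≤ FFgen Ω (fun z => f (mnorm z)) T₀ Dw)
    {w : EVec n → Fin N → ℝ} {Dw : EVec n → Fin N → Fin n → ℝ}
    (hw : HasWeakDerivOn Ω w Dw) :
    ∫ x in Ω, ⟪AE f' (toM N n (Du x)) - toM N n (T₀ x), toM N n (Dw x)⟫ = 0 := by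
  have : IsFiniteMeasure (volume.restrict Ω) := ⟨by simpa using hfin.lt_top⟩
  have iDu : Integrable (fun x => toM N n (Du x)) (volume.restrict Ω) :=
    (toM N n).integrable_comp hu.2.1
  have mT : AEStronglyMeasurable (fun x => toM N n (T₀ x)) (volume.restrict Ω) :=
    (toM N n).continuous.comp_aestronglyMeasurable hTm
  have ff : ∀ g : EVec n → MM N n, Integrable g (volume.restrict Ω) →
      Integrable (fun x => f ‖g x‖) (volume.restrict Ω) := by
    intro g hg
    have := (h.f_lipW (E := MM N n)).comp_memLp (by simp [h.f0]) (memLp_one_iff_integrable.2 hg)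
    exact memLp_one_iff_integrable.1 this
  have mA : ∀ g : EVec n → MM N n, Integrable g (volume.restrict Ω) →
      AEStronglyMeasurable (fun x => AE f' (g x)) (volume.restrict Ω) := fun g hg =>
    h.lip.continuous.comp_aestronglyMeasurable hg.aestronglyMeasurable
  -- one-sided
  have key : ∀ (w : EVec n → Fin N → ℝ) (Dw : EVec n → Fin N → Fin n → ℝ),
      HasWeakDerivOn Ω w Dw →
      0 ≤ ∫ x in Ω, ⟪AE f' (toM N n (Du x)) - toM N n (T₀ x), toM N n (Dw x)⟫ := by
    intro w Dw hw
    have iDw : Integrable (fun x => toM N n (Dw x)) (volume.restrict Ω) :=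
      (toM N n).integrable_comp hw.2.1
    have step : ∀ t : ℝ, 0 < t → 0 ≤ ∫ x in Ω,
        ⟪AE f' (toM N n (Du x) + t • toM N n (Dw x)) - toM N n (T₀ x), toM N n (Dw x)⟫ := by
      intro t ht
      have h1 := hmin _ _ (hu.add_smul hw t)
      simp only [FFgen, mnorm_eq, mdot_eq, map_add, map_smul] at h1
      have it : Integrable (fun x => toM N n (Du x) + t • toM N n (Dw x)) (volume.restrict Ω) :=
        iDu.add (iDw.smul t)
      have i1 := (ff _ iDu).sub (integrable_inner_bdd mT hTb iDu)
      have i2 := (ff _ it).sub (integrable_inner_bdd mT hTb it)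
      simp only [Pi.sub_def] at i1 i2
      have i3 := integrable_inner_bdd (a := fun x => AE f' (toM N n (Du x) + t • toM N n (Dw x)) - toM N n (T₀ x)) (C := L + CT) ((mA _ it).sub mT)
        (by filter_upwards [hTb] with x hx
            exact (norm_sub_le _ _).trans (add_le_add (h.norm_AE_le _) hx)) iDw
      have h2 : ∫ x in Ω, ((f ‖toM N n (Du x) + t • toM N n (Dw x)‖ - ⟪toM N n (T₀ x), toM N n (Du x) + t • toM N n (Dw x)⟫) - (f ‖toM N n (Du x)‖ - ⟪toM N n (T₀ x), toM N n (Du x)⟫)) ≤ ∫ x in Ω, t *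
        ⟪AE f' (toM N n (Du x) + t • toM N n (Dw x)) - toM N n (T₀ x), toM N n (Dw x)⟫ := by
        apply integral_mono (i2.sub i1) (i3.const_mul t)
        intro x
        have := h.grad (toM N n (Du x) + t • toM N n (Dw x)) (toM N n (Du x))
        simp only [sub_add_cancel_left, inner_neg_right, real_inner_smul_right, inner_sub_left,
          inner_add_right, Pi.sub_apply] at this ⊢
        linarith
      rw [integral_sub i2 i1, integral_const_mul] at h2
      have h3 : 0 ≤ t * _ := le_trans (by simpa using h1) h2
      exact nonneg_of_mul_nonneg_right h3 ht
    have lim : Tendsto (fun t : ℝ => ∫ x in Ω,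
        ⟪AE f' (toM N n (Du x) + t • toM N n (Dw x)) - toM N n (T₀ x), toM N n (Dw x)⟫)
        (𝓝[>] 0) (𝓝 (∫ x in Ω, ⟪AE f' (toM N n (Du x)) - toM N n (T₀ x), toM N n (Dw x)⟫)) := by
      apply tendsto_integral_filter_of_dominated_convergence (fun x => (L + CT) * ‖toM N n (Dw x)‖)
      · filter_upwards with t
        exact ((mA _ (iDu.add (iDw.smul t))).sub mT).inner iDw.aestronglyMeasurable
      · filter_upwards with t
        filter_upwards [hTb] with x hx
        refine (norm_inner_le_norm _ _).trans ?_
        gcongr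
        exact (norm_sub_le _ _).trans (add_le_add (h.norm_AE_le _) hx)
      · exact iDw.norm.const_mul _
      · filter_upwards with x
        have hc : Continuous (fun t : ℝ => ⟪AE f' (toM N n (Du x) + t • toM N n (Dw x)) - toM N n (T₀ x), toM N n (Dw x)⟫) := by
          have := h.lip (E := MM N n) |>.continuous
          fun_prop
        have := hc.tendsto 0
        simp only [zero_smul, add_zero] at this
        exact this.mono_left nhdsWithin_le_nhds
    exact ge_of_tendsto lim (by filter_upwards [self_mem_nhdsWithin] with t ht using step t ht)
  have h1 := key w Dw hw
  have hz : HasWeakDerivOn Ω (fun _ => (0 : Fin N → ℝ)) (fun _ => (0 : Fin N → Fin n → ℝ)) := by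
    refine ⟨integrableOn_zero, integrableOn_zero, ?_⟩
    intros; simp
  have h2 := key _ _ (hz.add_smul hw (-1))
  simp only [zero_add, map_smul, real_inner_smul_right, integral_const_mul] at h2
  linarith
end EL

open MeasureTheory Filter Topology Set
open scoped ENNReal RealInnerProductSpace

section dual
variable {n N : ℕ} {Ω : Set (EVec n)} {f f' : ℝ → ℝ} {L : ℝ}

theorem fs_def (h : GoodF f f' L) (z : Fin N → Fin n → ℝ) :
    FstarShift (fun z => f (mnorm z)) z =
      ⨆ w : Fin N → Fin n → ℝ, ENNReal.ofReal (⟪toM N n z, toM N n w⟫ - f ‖toM N n w‖) := by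
  simp only [FstarShift, mdot_eq, mnorm_eq, map_zero, norm_zero, h.f0, add_zero]

theorem fs_ge (h : GoodF f f' L) (z w : Fin N → Fin n → ℝ) :
    ENNReal.ofReal (⟪toM N n z, toM N n w⟫ - f ‖toM N n w‖) ≤
    FstarShift (fun z => f (mnorm z)) z := by
  rw [fs_def h]
  exact le_iSup (fun w : Fin N → Fin n → ℝ =>
    ENNReal.ofReal (⟪toM N n z, toM N n w⟫ - f ‖toM N n w‖)) w

theorem fs_A (h : GoodF f f' L) (z w : Fin N → Fin n → ℝ) (hz : toM N n z = AE f' (toM N n w)) :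
    FstarShift (fun z => f (mnorm z)) z =
      ENNReal.ofReal (⟪toM N n z, toM N n w⟫ - f ‖toM N n w‖) := by
  refine le_antisymm ?_ (fs_ge h z w)
  rw [fs_def h]
  refine iSup_le fun w' => ENNReal.ofReal_le_ofReal ?_
  have := h.grad (toM N n w) (toM N n w')
  rw [← hz, inner_sub_right] at this
  linarith

theorem fs_eq_imp (h : GoodF f f' L) (z w : Fin N → Fin n → ℝ)
    (hz : FstarShift (fun z => f (mnorm z)) z ≤
      ENNReal.ofReal (⟪toM N n z, toM N n w⟫ - f ‖toM N n w‖))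
    (h0 : 0 ≤ ⟪toM N n z, toM N n w⟫ - f ‖toM N n w‖) :
    toM N n z = AE f' (toM N n w) := by
  have hL := h.Lpos
  set d := toM N n z - AE f' (toM N n w) with hd
  have h1 := (fs_ge h z (w + (1 / (6 * L)) • ofM N n d)).trans hz
  rw [ENNReal.ofReal_le_ofReal_iff h0, map_add, map_smul, toM_ofM] at h1
  have h2 := h.upper (toM N n w) (toM N n w + (1 / (6 * L)) • d)
  simp only [add_sub_cancel_left, inner_add_right, real_inner_smul_right] at h1 h2
  have h3 : ⟪toM N n z, d⟫ - ⟪AE f' (toM N n w), d⟫ = ‖d‖ ^ 2 := by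
    rw [← inner_sub_left, ← hd, real_inner_self_eq_norm_sq]
  have h4 : 3 * L / (1 + ‖toM N n w‖) * ‖(1 / (6 * L)) • d‖ ^ 2 ≤ 3 * L * ((1 / (6 * L)) * ‖d‖) ^ 2 := by
    rw [norm_smul, Real.norm_eq_abs, abs_of_pos (by positivity)]
    gcongr
    exact div_le_self (by positivity) (by linarith [norm_nonneg (toM N n w)])
  have h5 : 3 * L * ((1 / (6 * L)) * ‖d‖) ^ 2 = (1 / (6 * L)) * (‖d‖ ^ 2 / 2) := by
    field_simp; ring
  have h6 : (1 / (6 * L)) * ‖d‖ ^ 2 ≤ (1 / (6 * L)) * (‖d‖ ^ 2 / 2) := by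
    rw [← h3] at *
    linarith
  have h7 := le_of_mul_le_mul_left h6 (by positivity)
  have h8 : ‖d‖ ^ 2 ≤ 0 := by linarith
  have h9 : ‖d‖ = 0 := by nlinarith [norm_nonneg d]
  exact sub_eq_zero.1 (norm_eq_zero.1 h9)

theorem fs_meas (h : GoodF f f' L) :
    Measurable (FstarShift (N := N) (n := n) (fun z => f (mnorm z))) := by
  have : LowerSemicontinuous (FstarShift (N := N) (n := n) (fun z => f (mnorm z))) := by
    have e : (FstarShift (N := N) (n := n) (fun z => f (mnorm z))) = fun z =>
      ⨆ w : Fin N → Fin n → ℝ, ENNReal.ofReal (⟪toM N n z, toM N n w⟫ - f ‖toM N n w‖) := by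
      ext z; exact fs_def h z
    rw [e]
    apply lowerSemicontinuous_iSup
    intro w
    apply Continuous.lowerSemicontinuous
    exact ENNReal.continuous_ofReal.comp (by fun_prop)
  exact this.measurable

theorem T_meas (hΩ : IsOpen Ω) {T₀ : EVec n → Fin N → Fin n → ℝ} (hT : MemW2inf Ω T₀) :
    AEStronglyMeasurable T₀ (volume.restrict Ω) ∧ ∃ CT, ∀ x ∈ Ω, ‖toM N n (T₀ x)‖ ≤ CT := by
  obtain ⟨C, DT, h1, h2, -, -⟩ := hT
  have : ContinuousOn T₀ Ω := fun x hx => (h2 x hx).continuousWithinAt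
  refine ⟨this.aestronglyMeasurable hΩ.measurableSet, ‖toM N n‖ * C, fun x hx => ?_⟩
  exact ((toM N n).le_opNorm _).trans (by gcongr; exact h1 x hx)

theorem part1 (h : GoodF f f' L) (hO : IsOpen Ω) (hfin : volume Ω ≠ ∞)
    {T₀ : EVec n → Fin N → Fin n → ℝ} (hT : MemW2inf Ω T₀)
    {u : EVec n → Fin N → ℝ} {Du : EVec n → Fin N → Fin n → ℝ}
    (hu : HasWeakDerivOn Ω u Du)
    (hmin : ∀ (w : EVec n → Fin N → ℝ) (Dw : EVec n → Fin N → Fin n → ℝ),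
      HasWeakDerivOn Ω w Dw →
        FFgen Ω (fun z => f (mnorm z)) T₀ Du ≤ FFgen Ω (fun z => f (mnorm z)) T₀ Dw) :
    MemLinfPerp Ω (fun x => Amap f' (Du x) - T₀ x) := by
  obtain ⟨hTm, CT, hTb⟩ := T_meas hO hT
  have hA : (fun x => Amap f' (Du x)) = fun x => ofM N n (AE f' (toM N n (Du x))) := by
    ext1 x; rw [← toM_Amap, ofM_toM]
  have hTb' : ∀ᵐ x ∂(volume.restrict Ω), ‖toM N n (T₀ x)‖ ≤ CT :=
    (ae_restrict_iff' hO.measurableSet).2 (ae_of_all _ hTb)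
  refine ⟨?_, ⟨L + CT, fun x hx => ?_⟩, fun w Dw hw => ?_⟩
  · refine AEStronglyMeasurable.sub ?_ hTm
    rw [hA]
    have := h.lip (E := MM N n) |>.continuous
    have c : Continuous (fun z : Fin N → Fin n → ℝ => ofM N n (AE f' (toM N n z))) := by fun_prop
    exact c.comp_aestronglyMeasurable hu.2.1.aestronglyMeasurable
  · rw [mnorm_eq, map_sub, toM_Amap]
    exact (norm_sub_le _ _).trans (add_le_add (h.norm_AE_le _) (hTb x hx))
  · have := EL h hfin hTm hTb' hu hmin hw
    simpa only [mdot_eq, map_sub, toM_Amap] using this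

theorem part23 (h : GoodF f f' L) (hO : IsOpen Ω) (hfin : volume Ω ≠ ∞)
    {T₀ : EVec n → Fin N → Fin n → ℝ} (hT : MemW2inf Ω T₀)
    {u : EVec n → Fin N → ℝ} {Du : EVec n → Fin N → Fin n → ℝ}
    (hu : HasWeakDerivOn Ω u Du)
    (hmin : ∀ (w : EVec n → Fin N → ℝ) (Dw : EVec n → Fin N → Fin n → ℝ),
      HasWeakDerivOn Ω w Dw →
        FFgen Ω (fun z => f (mnorm z)) T₀ Du ≤ FFgen Ω (fun z => f (mnorm z)) T₀ Dw) 
    (χ : EVec n → Fin N → Fin n → ℝ) (hχ : MemLinfPerp Ω χ) :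
    (Rdual Ω (fun z => f (mnorm z)) T₀ χ ≤
        Rdual Ω (fun z => f (mnorm z)) T₀ (fun x => Amap f' (Du x) - T₀ x)) ∧
    (Rdual Ω (fun z => f (mnorm z)) T₀ χ =
        Rdual Ω (fun z => f (mnorm z)) T₀ (fun x => Amap f' (Du x) - T₀ x) →
      χ =ᵐ[volume.restrict Ω] fun x => Amap f' (Du x) - T₀ x) := by
  have hσ := part1 h hO hfin hT hu hmin
  obtain ⟨hTm, CT, hTb⟩ := T_meas hO hT
  have hTb' : ∀ᵐ x ∂(volume.restrict Ω), ‖toM N n (T₀ x)‖ ≤ CT :=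
    (ae_restrict_iff' hO.measurableSet).2 (ae_of_all _ hTb)
  have iDu : Integrable (fun x => toM N n (Du x)) (volume.restrict Ω) :=
    (toM N n).integrable_comp hu.2.1
  have mT : AEStronglyMeasurable (fun x => toM N n (T₀ x)) (volume.restrict Ω) :=
    (toM N n).continuous.comp_aestronglyMeasurable hTm
  have iF : Integrable (fun x => f ‖toM N n (Du x)‖) (volume.restrict Ω) := by
    have := (h.f_lipW (E := MM N n)).comp_memLp (by simp [h.f0]) (memLp_one_iff_integrable.2 iDu)
    exact memLp_one_iff_integrable.1 this
  have iTD := integrable_inner_bdd mT hTb' iDu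
  -- the function g_χ
  have main : ∀ χ : EVec n → Fin N → Fin n → ℝ, MemLinfPerp Ω χ →
      Integrable (fun x => ⟪toM N n (T₀ x + χ x), toM N n (Du x)⟫ - f ‖toM N n (Du x)‖)
        (volume.restrict Ω) ∧
      ∫ x in Ω, (⟪toM N n (T₀ x + χ x), toM N n (Du x)⟫ - f ‖toM N n (Du x)‖) =
      ∫ x in Ω, (⟪toM N n (T₀ x), toM N n (Du x)⟫ - f ‖toM N n (Du x)‖) := by
    intro χ ⟨hm, ⟨C, hC⟩, hp⟩
    have m1 : AEStronglyMeasurable (fun x => toM N n (χ x)) (volume.restrict Ω) :=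
      (toM N n).continuous.comp_aestronglyMeasurable hm
    have b1 : ∀ᵐ x ∂(volume.restrict Ω), ‖toM N n (χ x)‖ ≤ C :=
      (ae_restrict_iff' hO.measurableSet).2 (ae_of_all _ fun x hx => by
        rw [← mnorm_eq]; exact hC x hx)
    have i1 := integrable_inner_bdd m1 b1 iDu
    have e : ∀ x, ⟪toM N n (T₀ x + χ x), toM N n (Du x)⟫ - f ‖toM N n (Du x)‖ =
      (⟪toM N n (T₀ x), toM N n (Du x)⟫ - f ‖toM N n (Du x)‖) + ⟪toM N n (χ x), toM N n (Du x)⟫ := by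
      intro x; rw [map_add, inner_add_left]; ring
    have i2 := iTD.sub iF
    simp only [Pi.sub_def] at i2
    simp only [e]
    refine ⟨i2.add i1, ?_⟩
    rw [integral_add i2 i1]
    have := hp u Du hu
    simp only [mdot_eq] at this
    rw [this, add_zero]
  obtain ⟨iχ, eχ⟩ := main χ hχ
  obtain ⟨iσ, eσ⟩ := main _ hσ
  set σ := (fun x => Amap f' (Du x) - T₀ x) with hσd
  set gχ := (fun x => ⟪toM N n (T₀ x + χ x), toM N n (Du x)⟫ - f ‖toM N n (Du x)‖) with hgχ
  set gσ := (fun x => ⟪toM N n (T₀ x + σ x), toM N n (Du x)⟫ - f ‖toM N n (Du x)‖) with hgσ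
  have hTσ : ∀ x, toM N n (T₀ x + σ x) = AE f' (toM N n (Du x)) := by
    intro x; simp [hσd, toM_Amap]
  have fσ : ∀ x, FstarShift (fun z => f (mnorm z)) (T₀ x + σ x) = ENNReal.ofReal (gσ x) := by
    intro x; exact fs_A h _ _ (hTσ x)
  have gσ0 : ∀ x, 0 ≤ gσ x := by
    intro x
    have := h.grad (toM N n (Du x)) 0
    simp only [hgσ, hTσ]
    simp only [zero_sub, inner_neg_right, norm_zero, h.f0] at this
    linarith
  have Iσ : ∫⁻ x in Ω, FstarShift (fun z => f (mnorm z)) (T₀ x + σ x) = ENNReal.ofReal (∫ x in Ω, gσ x) := by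
    simp only [fσ]
    rw [ofReal_integral_eq_lintegral_ofReal iσ (ae_of_all _ gσ0)]
  have fχ : ∀ x, ENNReal.ofReal (gχ x) ≤ FstarShift (fun z => f (mnorm z)) (T₀ x + χ x) := by
    intro x; exact fs_ge h _ _
  have posp : ∫⁻ x in Ω, ENNReal.ofReal (gχ x) = ENNReal.ofReal (∫ x in Ω, max (gχ x) 0) := by
    have := iχ.pos_part
    rw [ofReal_integral_eq_lintegral_ofReal this (ae_of_all _ fun x => le_max_right _ _)]
    congr 1; ext x; simp [ENNReal.ofReal_max]
  have le1 : ∫ x in Ω, gχ x ≤ ∫ x in Ω, max (gχ x) 0 :=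
    integral_mono iχ iχ.pos_part fun x => le_max_left _ _
  have le2 : ∫⁻ x in Ω, ENNReal.ofReal (gχ x) ≤ ∫⁻ x in Ω, FstarShift (fun z => f (mnorm z)) (T₀ x + χ x) :=
    lintegral_mono fχ
  have le3 : ENNReal.ofReal (∫ x in Ω, gσ x) ≤ ∫⁻ x in Ω, ENNReal.ofReal (gχ x) := by
    rw [posp, eσ, ← eχ]; exact ENNReal.ofReal_le_ofReal le1
  have hF0 : f (mnorm (0 : Fin N → Fin n → ℝ)) = 0 := by simp [mnorm_eq, h.f0]
  have hR : ∀ χ, Rdual Ω (fun z => f (mnorm z)) T₀ χ =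
      - ((∫⁻ x in Ω, FstarShift (fun z => f (mnorm z)) (T₀ x + χ x) : ℝ≥0∞) : EReal) := by
    intro χ; rw [Rdual, hF0]; simp
  constructor
  · rw [hR, hR, Iσ, EReal.neg_le_neg_iff]
    exact_mod_cast le3.trans le2
  · intro heq
    rw [hR, hR, Iσ, neg_inj] at heq
    have heq' : ∫⁻ x in Ω, FstarShift (fun z => f (mnorm z)) (T₀ x + χ x) = ENNReal.ofReal (∫ x in Ω, gσ x) := by
      exact_mod_cast heq
    have e1 : ∫⁻ x in Ω, ENNReal.ofReal (gχ x) = ENNReal.ofReal (∫ x in Ω, gσ x) :=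
      le_antisymm (heq' ▸ le2) le3
    have pos : 0 ≤ ∫ x in Ω, gσ x := integral_nonneg gσ0
    have e2 : ∫ x in Ω, max (gχ x) 0 = ∫ x in Ω, gχ x := by
      rw [posp] at e1
      rw [eχ, ← eσ]
      exact (ENNReal.ofReal_eq_ofReal_iff (integral_nonneg fun x => le_max_right _ _) pos).1 e1
    have nn : ∀ᵐ x ∂(volume.restrict Ω), 0 ≤ gχ x := by
      have h0 : ∫ x in Ω, (max (gχ x) 0 - gχ x) = 0 := by
        rw [integral_sub iχ.pos_part iχ, e2, sub_self]
      have h0 := (integral_eq_zero_iff_of_nonneg (fun x => by simp) (iχ.pos_part.sub iχ)).1 h0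
      filter_upwards [h0] with x hx
      simp at hx
      have : max (gχ x) 0 = gχ x := by linarith
      rw [← this]; exact le_max_right _ _
    have aeq := ae_eq_of_ae_le_of_lintegral_le (ae_of_all (volume.restrict Ω) fχ)
      (by rw [e1]; exact ENNReal.ofReal_ne_top)
      ((fs_meas h).comp_aemeasurable (hTm.add hχ.1).aemeasurable) (by rw [e1, ← heq'])
    filter_upwards [aeq, nn] with x hx hx0
    have := fs_eq_imp h (T₀ x + χ x) (Du x) hx.ge hx0
    rw [← hTσ] at this
    have := congrArg (ofM N n) this
    simpa using this
end dual

open MeasureTheory Filter Topology Set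
open scoped ENNReal RealInnerProductSpace

section WGsec
variable {n N : ℕ}

noncomputable abbrev ee (n : ℕ) (i : Fin n) : EVec n := EuclideanSpace.single i (1:ℝ)

/-- weak gradient on the open set `S` -/
def WG (S : Set (EVec n)) (v : EVec n → VV N) (g : EVec n → MM N n) : Prop :=
  ∀ φ : EVec n → ℝ, ContDiff ℝ 1 φ → HasCompactSupport φ → tsupport φ ⊆ S →
    ∀ (a : Fin N) (i : Fin n), ∫ x, v x a * fderiv ℝ φ x (ee n i) = - ∫ x, g x (a, i) * φ x

noncomputable def tens (v : VV N) (ξ : EVec n) : MM N n := WithLp.toLp 2 (fun p => v p.1 * ξ p.2)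

@[simp] theorem tens_apply (v : VV N) (ξ : EVec n) (p : Fin N × Fin n) : tens v ξ p = v p.1 * ξ p.2 := rfl

theorem norm_tens (v : VV N) (ξ : EVec n) : ‖tens v ξ‖ = ‖v‖ * ‖ξ‖ := by
  rw [EuclideanSpace.norm_eq, EuclideanSpace.norm_eq, EuclideanSpace.norm_eq, ← Real.sqrt_mul (by positivity)]
  congr 1
  rw [Fintype.sum_prod_type, Finset.sum_mul_sum]
  simp [mul_pow]

noncomputable def gr (η : EVec n → ℝ) (x : EVec n) : EVec n := WithLp.toLp 2 (fun i => fderiv ℝ η x (ee n i))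

@[simp] theorem gr_apply (η : EVec n → ℝ) (x : EVec n) (i : Fin n) : gr η x i = fderiv ℝ η x (ee n i) := rfl

theorem continuous_gr {η : EVec n → ℝ} (hη : ContDiff ℝ 1 η) : Continuous (gr η) := by
  have h := hη.continuous_fderiv one_ne_zero
  have : Continuous (fun x => (fun i => fderiv ℝ η x (ee n i) : Fin n → ℝ)) := by
    refine continuous_pi fun i => h.clm_apply continuous_const
  exact (PiLp.continuous_toLp 2 _).comp this

theorem tens_bilin_cont {α : Type*} [TopologicalSpace α] {v : α → VV N} {ξ : α → EVec n}
    (hv : Continuous v) (hξ : Continuous ξ) : Continuous fun x => tens (v x) (ξ x) := by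
  refine (PiLp.continuous_toLp 2 _).comp (continuous_pi fun p => ?_)
  fun_prop

theorem tens_cont : Continuous (fun q : VV N × EVec n => tens q.1 q.2) :=
  tens_bilin_cont continuous_fst continuous_snd

theorem contDiff_fd {φ : EVec n → ℝ} (hφ : ContDiff ℝ 1 φ) (e : EVec n) :
    Continuous (fun x => fderiv ℝ φ x e) :=
  (hφ.continuous_fderiv one_ne_zero).clm_apply continuous_const

/-- integrability of component times continuous compactly supported -/
theorem int_comp {ι : Type*} [Fintype ι] {v : EVec n → EuclideanSpace ℝ ι}
    (hv : LocallyIntegrable v) {ψ : EVec n → ℝ} (hψ : Continuous ψ) (hc : HasCompactSupport ψ) (a : ι) :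
    Integrable (fun x => v x a * ψ x) := by
  have h1 : Integrable (fun x => ψ x • v x) :=
    hv.integrable_smul_left_of_hasCompactSupport hψ hc
  have := (EuclideanSpace.proj (𝕜 := ℝ) a).integrable_comp h1
  refine this.congr (ae_of_all _ fun x => ?_)
  simp [mul_comm]

theorem WG.sub {S : Set (EVec n)} {v v' : EVec n → VV N} {g g' : EVec n → MM N n}
    (h : WG S v g) (h' : WG S v' g') (iv : LocallyIntegrable v) (iv' : LocallyIntegrable v')
    (ig : LocallyIntegrable g) (ig' : LocallyIntegrable g') :
    WG S (fun x => v x - v' x) (fun x => g x - g' x) := by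
  intro φ hφ hc hs a i
  have hd := contDiff_fd hφ (ee n i)
  have hdc : HasCompactSupport (fun x => fderiv ℝ φ x (ee n i)) := hc.fderiv_apply (𝕜 := ℝ) _
  have e1 := h φ hφ hc hs a i
  have e2 := h' φ hφ hc hs a i
  simp only [PiLp.sub_apply, sub_mul]
  rw [integral_sub (int_comp iv hd hdc a) (int_comp iv' hd hdc a), e1, e2,
    integral_sub (int_comp ig hφ.continuous hc _) (int_comp ig' hφ.continuous hc _)]
  ring

theorem WG.smul {S : Set (EVec n)} {v : EVec n → VV N} {g : EVec n → MM N n}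
    (h : WG S v g) (c : ℝ) : WG S (fun x => c • v x) (fun x => c • g x) := by
  intro φ hφ hc hs a i
  have e1 := h φ hφ hc hs a i
  simp only [PiLp.smul_apply, smul_eq_mul, mul_assoc]
  rw [integral_const_mul, integral_const_mul, e1]; ring

theorem WG.translate {v : EVec n → VV N} {g : EVec n → MM N n}
    (h : WG univ v g) (c : EVec n) : WG univ (fun x => v (x + c)) (fun x => g (x + c)) := by
  intro φ hφ hc hs a i
  have e1 := h (fun x => φ (x - c)) (hφ.comp (contDiff_id.sub contDiff_const))
    (by
      have := hc.comp_homeomorph (Homeomorph.subRight c)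
      exact this) (subset_univ _) a i
  rw [← integral_sub_right_eq_self (fun x => v (x + c) a * fderiv ℝ φ x (ee n i)) c,
    ← integral_sub_right_eq_self (fun x => g (x + c) (a, i) * φ x) c]
  simp only [sub_add_cancel]
  rw [← e1]
  congr 1; ext x
  rw [fderiv_comp_sub]

theorem WG.mul {S : Set (EVec n)} {v : EVec n → VV N} {g : EVec n → MM N n}
    (h : WG S v g) (iv : LocallyIntegrable v) (ig : LocallyIntegrable g)
    {ζ : EVec n → ℝ} (hζ : ContDiff ℝ 1 ζ) (hζc : HasCompactSupport ζ) (hζS : tsupport ζ ⊆ S) :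
    WG univ (fun x => ζ x • v x) (fun x => ζ x • g x + tens (v x) (gr ζ x)) := by
  intro φ hφ hc _ a i
  have hd := contDiff_fd hζ (ee n i)
  have hdc : HasCompactSupport (fun x => fderiv ℝ ζ x (ee n i)) := hζc.fderiv_apply (𝕜 := ℝ) _
  have hd' := contDiff_fd hφ (ee n i)
  have e1 := h (fun x => ζ x * φ x) (hζ.mul hφ) hζc.mul_right
    ((tsupport_mul_subset_left).trans hζS) a i
  have hder : ∀ x, fderiv ℝ (fun x => ζ x * φ x) x (ee n i) =
      ζ x * fderiv ℝ φ x (ee n i) + φ x * fderiv ℝ ζ x (ee n i) := by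
    intro x
    have := fderiv_mul (hζ.differentiable one_ne_zero x) (hφ.differentiable one_ne_zero x)
    have e : (fun x => ζ x * φ x) = ζ * φ := rfl
    rw [e, this]; simp
  simp only [hder, mul_add] at e1
  have i1 := int_comp iv (hζ.continuous.mul hd') hζc.mul_right a
  have i2 := int_comp iv (hφ.continuous.mul hd) hdc.mul_left a
  have i3 := int_comp ig (hζ.continuous.mul hφ.continuous) hζc.mul_right (a, i)
  simp only [Pi.mul_apply] at i1 i2 i3
  rw [integral_add i1 i2] at e1
  have t1 : ∫ x, (ζ x • v x) a * fderiv ℝ φ x (ee n i) = ∫ x, v x a * (ζ x * fderiv ℝ φ x (ee n i)) := by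
    congr 1; ext x; simp; ring
  have t2 : ∫ x, (ζ x • g x + tens (v x) (gr ζ x)) (a, i) * φ x =
     ∫ x, (g x (a,i) * (ζ x * φ x) + v x a * (φ x * fderiv ℝ ζ x (ee n i))) := by
    congr 1; ext x; simp; ring
  rw [t1, t2, integral_add i3 i2]
  linarith
end WGsec

open MeasureTheory Filter Topology Set
open scoped ENNReal RealInnerProductSpace

theorem hilbert_solve {H : Type*} [NormedAddCommGroup H] [InnerProductSpace ℝ H] [CompleteSpace H]
    (Vs : Submodule ℝ H) (hcl : IsClosed (Vs : Set H)) (𝒩 : H → H) (K ε : ℝ) (hε : 0 < ε)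
    (hK : ∀ x y, ‖𝒩 x - 𝒩 y‖ ≤ K * ‖x - y‖) (hm : ∀ x y, ε * ‖x - y‖ ^ 2 ≤ ⟪𝒩 x - 𝒩 y, x - y⟫) :
    ∃ v ∈ Vs, ∀ ψ ∈ Vs, ⟪𝒩 v, ψ⟫ = 0 := by
  have : CompleteSpace Vs := hcl.completeSpace_coe
  obtain ⟨M, hM⟩ : ∃ M, M = |K| + ε := ⟨_, rfl⟩
  have hM0 : 0 < M := by rw [hM]; positivity
  have hεM : ε ≤ M := by rw [hM]; linarith [abs_nonneg K]
  have hKM : ∀ x y, ‖𝒩 x - 𝒩 y‖ ≤ M * ‖x - y‖ := fun x y => (hK x y).trans (by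
    gcongr; rw [hM]; linarith [le_abs_self K])
  set t : ℝ := ε / M ^ 2 with ht
  have ht0 : 0 < t := by positivity
  let Φ : Vs → Vs := fun v => v - t • Vs.orthogonalProjectionOnto (𝒩 v)
  have hq1 : ε ^ 2 / M ^ 2 ≤ 1 := by rw [div_le_one (by positivity)]; gcongr
  have key : ∀ x y : Vs, ‖Φ x - Φ y‖ ^ 2 ≤ (1 - ε ^ 2 / M ^ 2) * ‖x - y‖ ^ 2 := by
    intro x y
    have e : Φ x - Φ y = (x - y) - t • Vs.orthogonalProjectionOnto (𝒩 x - 𝒩 y) := by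
      simp only [Φ, map_sub, smul_sub]; abel
    rw [e, norm_sub_sq_real]
    have e2 : ⟪x - y, t • Vs.orthogonalProjectionOnto (𝒩 x - 𝒩 y)⟫ = t * ⟪𝒩 x - 𝒩 y, (x:H) - y⟫ := by
      rw [real_inner_smul_right, real_inner_comm, Submodule.inner_orthogonalProjectionOnto_eq_of_mem_right]
      simp
    have e3 : ‖t • Vs.orthogonalProjectionOnto (𝒩 x - 𝒩 y)‖ ≤ t * (M * ‖x - y‖) := by
      rw [norm_smul, Real.norm_eq_abs, abs_of_pos ht0]
      gcongr
      exact (Submodule.norm_orthogonalProjectionOnto_apply_le _ _).trans (hKM x y)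
    have e4 := hm x y
    rw [e2]
    have e5 : ‖t • Vs.orthogonalProjectionOnto (𝒩 x - 𝒩 y)‖ ^ 2 ≤ (t * (M * ‖x - y‖)) ^ 2 := by gcongr
    have e6 : ‖(x:H) - y‖ = ‖x - y‖ := rfl
    rw [e6] at e4
    have e7 : t * (ε * ‖x - y‖ ^ 2) ≤ t * ⟪𝒩 x - 𝒩 y, (x:H) - y⟫ := by gcongr
    have e8 : t * (ε * ‖x - y‖ ^ 2) = ε ^ 2 / M ^ 2 * ‖x - y‖ ^ 2 := by rw [ht]; ring
    have e9 : (t * (M * ‖x - y‖)) ^ 2 = ε ^ 2 / M ^ 2 * ‖x - y‖ ^ 2 := by rw [ht]; field_simp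
    linarith
  have hc : ContractingWith (Real.toNNReal (Real.sqrt (1 - ε ^ 2 / M ^ 2))) Φ := by
    constructor
    · rw [Real.toNNReal_lt_one, Real.sqrt_lt' one_pos]
      have : 0 < ε ^ 2 / M ^ 2 := by positivity
      linarith
    · apply LipschitzWith.of_dist_le_mul
      intro x y
      rw [dist_eq_norm, dist_eq_norm, Real.coe_toNNReal _ (Real.sqrt_nonneg _)]
      have := Real.sqrt_le_sqrt (key x y)
      rwa [Real.sqrt_sq (norm_nonneg _), Real.sqrt_mul (by linarith), Real.sqrt_sq (norm_nonneg _)] at this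
  have hfix := hc.fixedPoint_isFixedPt
  set v := ContractingWith.fixedPoint Φ hc with hv
  refine ⟨v, v.2, fun ψ hψ => ?_⟩
  have h0 : Vs.orthogonalProjectionOnto (𝒩 v) = 0 := by
    have : Φ v = v := hfix
    simp only [Φ, sub_eq_self] at this
    exact (smul_eq_zero.1 this).resolve_left ht0.ne'
  have := Submodule.inner_orthogonalProjectionOnto_eq_of_mem_right (K := Vs) ⟨ψ, hψ⟩ (𝒩 v)
  rw [h0] at this
  simpa using this.symm

open MeasureTheory Filter Topology Set
open scoped ENNReal RealInnerProductSpace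

section lemR
variable {n N : ℕ} {f f' : ℝ → ℝ} {L : ℝ}

abbrev PP (N n : ℕ) := WithLp 2 (VV N × MM N n)

noncomputable def mkP (v : VV N) (g : MM N n) : PP N n := WithLp.toLp 2 (v, g)

@[simp] theorem mkP_fst (v : VV N) (g : MM N n) : (mkP v g).fst = v := rfl
@[simp] theorem mkP_snd (v : VV N) (g : MM N n) : (mkP v g).snd = g := rfl

theorem memLp_mkP {v : EVec n → VV N} {g : EVec n → MM N n} {p : ℝ≥0∞} (hv : MemLp v p) (hg : MemLp g p) :
    MemLp (fun x => mkP (v x) (g x)) p := by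
  have h1 := ((WithLp.prodContinuousLinearEquiv 2 ℝ (VV N) (MM N n)).symm.toContinuousLinearMap.comp
    (ContinuousLinearMap.inl ℝ (VV N) (MM N n))).comp_memLp' hv
  have h2 := ((WithLp.prodContinuousLinearEquiv 2 ℝ (VV N) (MM N n)).symm.toContinuousLinearMap.comp
    (ContinuousLinearMap.inr ℝ (VV N) (MM N n))).comp_memLp' hg
  have e : (fun x => mkP (v x) (g x)) =
     (((WithLp.prodContinuousLinearEquiv 2 ℝ (VV N) (MM N n)).symm.toContinuousLinearMap.comp
    (ContinuousLinearMap.inl ℝ (VV N) (MM N n))) ∘ v +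
    ((WithLp.prodContinuousLinearEquiv 2 ℝ (VV N) (MM N n)).symm.toContinuousLinearMap.comp
    (ContinuousLinearMap.inr ℝ (VV N) (MM N n))) ∘ g) := by
    ext1 x
    simp [mkP, ← WithLp.toLp_add]
  rw [e]
  exact h1.add h2

noncomputable def JJ (f' : ℝ → ℝ) (z : PP N n) : PP N n := mkP 0 (AE f' z.snd)

theorem JJ_sub (x y : PP N n) : JJ f' x - JJ f' y = mkP 0 (AE f' x.snd - AE f' y.snd) := by
  simp [JJ, mkP, ← WithLp.toLp_sub]

theorem JJ_lip (h : GoodF f f' L) : LipschitzWith (Real.toNNReal (12 * L)) (JJ f' : PP N n → PP N n) := by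
  apply LipschitzWith.of_dist_le_mul
  intro x y
  have h1 := (h.lip (E := MM N n)).dist_le_mul x.snd y.snd
  rw [dist_eq_norm, JJ_sub, dist_eq_norm]
  have e : ‖mkP (0 : VV N) (AE f' x.snd - AE f' y.snd)‖ = ‖AE f' x.snd - AE f' y.snd‖ := by
    rw [← sq_eq_sq₀ (norm_nonneg _) (norm_nonneg _), WithLp.prod_norm_sq_eq_of_L2]; simp
  rw [e, ← dist_eq_norm]
  refine h1.trans ?_
  gcongr
  rw [dist_eq_norm]
  rw [← sq_le_sq₀ (norm_nonneg _) (norm_nonneg _), WithLp.prod_norm_sq_eq_of_L2]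
  simp

theorem JJ_mono (h : GoodF f f' L) (x y : PP N n) : 0 ≤ ⟪JJ f' x - JJ f' y, x - y⟫ := by
  rw [JJ_sub, WithLp.prod_inner_apply]
  have h1 := h.coco y.snd x.snd
  have hL := h.Lpos
  have h2 : 0 ≤ (1 + ‖y.snd‖) * ‖AE f' x.snd - AE f' y.snd‖ ^ 2 / (12 * L) := by positivity
  have h3 := h2.trans h1
  simpa using h3

set_option maxHeartbeats 1000000 in
theorem lemmaR (h : GoodF f f' L) {ε : ℝ} (hε : 0 < ε) {K3 : Set (EVec n)} (hK3 : MeasurableSet K3)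
    {U : EVec n → VV N} {G T : EVec n → MM N n} (mU : MemLp U 2) (mG : MemLp G 2) (hUG : WG univ U G)
    (mT : MemLp T 2) :
    ∃ (v : EVec n → VV N) (g : EVec n → MM N n), MemLp v 2 ∧ MemLp g 2 ∧ WG univ v g ∧
      (∀ᵐ x, x ∉ K3 → v x = U x ∧ g x = G x) ∧
      ∀ (ψ : EVec n → VV N) (Dψ : EVec n → MM N n), MemLp ψ 2 → MemLp Dψ 2 → WG univ ψ Dψ →
        (∀ᵐ x, x ∉ K3 → ψ x = 0 ∧ Dψ x = 0) →
        ∫ x, (⟪AE f' (g x) + ε • g x - T x, Dψ x⟫ + ε * ⟪v x, ψ x⟫) = 0 := by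
  have two : (1:ℝ≥0∞) ≤ 2 := by norm_num
  -- the set of test elements
  let Q : (EVec n → ℝ) → Fin N → Fin n → EVec n → PP N n := fun φ a i x =>
    mkP (fderiv ℝ φ x (ee n i) • EuclideanSpace.single a 1) (φ x • EuclideanSpace.single (a, i) 1)
  let B : Set (Lp (PP N n) 2 (volume : Measure (EVec n))) :=
    {q | (∃ φ : EVec n → ℝ, ContDiff ℝ 1 φ ∧ HasCompactSupport φ ∧ ∃ a i, q =ᵐ[volume] Q φ a i) ∨
      ∀ᵐ x, x ∈ K3 → q x = 0}
  let Vs : Submodule ℝ (Lp (PP N n) 2 (volume : Measure (EVec n))) := (Submodule.span ℝ B)ᗮ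
  have memV : ∀ p, p ∈ Vs ↔ ∀ q ∈ B, ⟪q, p⟫ = 0 := by
    intro p
    constructor
    · intro hp q hq
      exact (Submodule.mem_orthogonal _ _).1 hp q (Submodule.subset_span hq)
    · intro hp
      rw [Submodule.mem_orthogonal]
      intro q hq
      induction hq using Submodule.span_induction with
      | mem q hq => exact hp q hq
      | zero => simp
      | add a b _ _ ha hb => rw [inner_add_left, ha, hb, add_zero]
      | smul c a _ ha => rw [real_inner_smul_left, ha, mul_zero]
  have mQ : ∀ φ a i, ContDiff ℝ 1 φ → HasCompactSupport φ → MemLp (Q φ a i) 2 := by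
    intro φ a i hφ hc
    have hd := contDiff_fd hφ (ee n i)
    have hdc : HasCompactSupport (fun x => fderiv ℝ φ x (ee n i)) := hc.fderiv_apply (𝕜 := ℝ) _
    apply memLp_mkP
    · exact (hd.smul continuous_const).memLp_of_hasCompactSupport hdc.smul_right
    · exact (hφ.continuous.smul continuous_const).memLp_of_hasCompactSupport hc.smul_right
  have innerQ : ∀ φ a i (v : VV N) (g : MM N n) x, ⟪Q φ a i x, mkP v g⟫ =
      v a * fderiv ℝ φ x (ee n i) + g (a, i) * φ x := by
    intro φ a i v g x
    rw [WithLp.prod_inner_apply]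
    simp [Q, mkP, real_inner_smul_left, EuclideanSpace.inner_single_left, mul_comm]
  -- splitting integrals
  have split : ∀ φ a i, ContDiff ℝ 1 φ → HasCompactSupport φ → ∀ (v : EVec n → VV N) (g : EVec n → MM N n),
      MemLp v 2 → MemLp g 2 →
      ∫ x, ⟪Q φ a i x, mkP (v x) (g x)⟫ = (∫ x, v x a * fderiv ℝ φ x (ee n i)) + ∫ x, g x (a, i) * φ x := by
    intro φ a i hφ hc v g hv hg
    have hd := contDiff_fd hφ (ee n i)
    have hdc : HasCompactSupport (fun x => fderiv ℝ φ x (ee n i)) := hc.fderiv_apply (𝕜 := ℝ) _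
    simp only [innerQ]
    rw [integral_add (int_comp (hv.locallyIntegrable two) hd hdc a)
      (int_comp (hg.locallyIntegrable two) hφ.continuous hc _)]
  have fwd : ∀ p ∈ Vs, WG univ (fun x => (p x).fst) (fun x => (p x).snd) ∧
      ∀ᵐ x, x ∉ K3 → p x = 0 := by
    intro p hp
    rw [memV] at hp
    constructor
    · intro φ hφ hc _ a i
      have h1 := hp ((mQ φ a i hφ hc).toLp) (Or.inl ⟨φ, hφ, hc, a, i, MemLp.coeFn_toLp _⟩)
      rw [L2.inner_def] at h1
      have h2 : ∫ x, ⟪Q φ a i x, mkP (p x).fst (p x).snd⟫ = 0 := by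
        rw [← h1]
        refine integral_congr_ae ?_
        filter_upwards [(mQ φ a i hφ hc).coeFn_toLp] with x hx
        rw [hx]; rfl
      rw [split φ a i hφ hc (fun x => (p x).fst) (fun x => (p x).snd) ((WithLp.fstL 2 ℝ (VV N) (MM N n)).comp_memLp' (Lp.memLp p))
        ((WithLp.sndL 2 ℝ (VV N) (MM N n)).comp_memLp' (Lp.memLp p))] at h2
      linarith
    · have mI : MemLp (K3ᶜ.indicator p) 2 := (Lp.memLp p).indicator hK3.compl
      have h1 := hp mI.toLp (Or.inr (by
        filter_upwards [mI.coeFn_toLp] with x hx hx3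
        rw [hx]; simp [hx3]))
      rw [L2.inner_def] at h1
      have h2 : ∫ x, ‖K3ᶜ.indicator p x‖ ^ 2 = 0 := by
        rw [← h1]
        refine integral_congr_ae ?_
        filter_upwards [mI.coeFn_toLp] with x hx
        rw [hx]
        by_cases hx3 : x ∈ K3ᶜ
        · simp only [indicator_of_mem hx3, real_inner_self_eq_norm_sq]
        · simp only [indicator_of_notMem hx3]; simp
      rw [integral_eq_zero_iff_of_nonneg (fun x => by positivity)
        ((memLp_two_iff_integrable_sq_norm mI.1).1 mI)] at h2
      filter_upwards [h2] with x hx hx3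
      rw [indicator_of_mem (by exact hx3)] at hx
      simpa using hx
  have bwd : ∀ (ψ : EVec n → VV N) (Dψ : EVec n → MM N n) (mψ : MemLp ψ 2) (mD : MemLp Dψ 2), WG univ ψ Dψ →
        (∀ᵐ x, x ∉ K3 → ψ x = 0 ∧ Dψ x = 0) → (memLp_mkP mψ mD).toLp ∈ Vs := by
    intro ψ Dψ mψ mD hw h0
    rw [memV]
    rintro q (⟨φ, hφ, hc, a, i, hq⟩ | hq)
    · rw [L2.inner_def]
      have h2 : ∫ x, ⟪Q φ a i x, mkP (ψ x) (Dψ x)⟫ = 0 := by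
        rw [split φ a i hφ hc _ _ mψ mD, hw φ hφ hc (subset_univ _) a i]; ring
      rw [← h2]
      refine integral_congr_ae ?_
      filter_upwards [(memLp_mkP mψ mD).coeFn_toLp, hq] with x hx hx2
      rw [hx, hx2]
    · rw [L2.inner_def]
      refine integral_eq_zero_of_ae ?_
      filter_upwards [(memLp_mkP mψ mD).coeFn_toLp, hq, h0] with x hx hx2 hx3
      by_cases hxK : x ∈ K3
      · rw [hx2 hxK]; simp
      · have := hx3 hxK
        rw [hx, this.1, this.2]
        have : mkP (0 : VV N) (0 : MM N n) = 0 := rfl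
        rw [this]; simp
  -- operator
  have J0 : JJ f' (0 : PP N n) = 0 := by
    simp only [JJ]
    have : (0 : PP N n).snd = 0 := rfl
    rw [this, AE_zero]; rfl
  let JL : Lp (PP N n) 2 (volume : Measure (EVec n)) → Lp (PP N n) 2 (volume : Measure (EVec n)) :=
    (JJ_lip h).compLp J0
  let p0 := (memLp_mkP mU mG).toLp
  let τ := (memLp_mkP (MemLp.zero (ε := VV N)) mT).toLp
  let 𝒩 : Lp (PP N n) 2 (volume : Measure (EVec n)) → Lp (PP N n) 2 (volume : Measure (EVec n)) :=
    fun p => ε • (p0 + p) + JL (p0 + p) - τ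
  have Nsub : ∀ x y, 𝒩 x - 𝒩 y = ε • (x - y) + (JL (p0 + x) - JL (p0 + y)) := by
    intro x y; simp only [𝒩, smul_add, smul_sub]; abel
  obtain ⟨w, hwV, hw⟩ := hilbert_solve Vs (Submodule.isClosed_orthogonal _) 𝒩 (ε + 12 * L) ε hε
    (by
      intro x y
      rw [Nsub, add_mul]
      refine (norm_add_le _ _).trans (add_le_add ?_ ?_)
      · rw [norm_smul, Real.norm_eq_abs, abs_of_pos hε]
      · have := (JJ_lip h).norm_compLp_sub_le J0 (p0 + x) (p0 + y)
        rw [Real.coe_toNNReal _ (by have := h.Lpos; positivity)] at this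
        simpa using this)
    (by
      intro x y
      rw [Nsub, inner_add_left, real_inner_smul_left, real_inner_self_eq_norm_sq]
      have : 0 ≤ ⟪JL (p0 + x) - JL (p0 + y), x - y⟫ := by
        have e : x - y = (p0 + x) - (p0 + y) := by abel
        rw [e, L2.inner_def]
        refine integral_nonneg_of_ae ?_
        filter_upwards [(JJ_lip h).coeFn_compLp J0 (p0 + x), (JJ_lip h).coeFn_compLp J0 (p0 + y),
          Lp.coeFn_sub (JL (p0 + x)) (JL (p0 + y)), Lp.coeFn_sub (p0 + x) (p0 + y)] with a h1 h2 h3 h4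
        rw [h3, h4]
        simp only [Pi.sub_apply, Pi.zero_apply]
        rw [h1, h2]
        exact JJ_mono h _ _
      linarith)
  obtain ⟨hwG, hw0⟩ := fwd w hwV
  have mw1 : MemLp (fun x => (w x).fst) 2 := (WithLp.fstL 2 ℝ (VV N) (MM N n)).comp_memLp' (Lp.memLp w)
  have mw2 : MemLp (fun x => (w x).snd) 2 := (WithLp.sndL 2 ℝ (VV N) (MM N n)).comp_memLp' (Lp.memLp w)
  have hneg : WG univ (fun x => U x - (-1:ℝ) • (w x).fst) (fun x => G x - (-1:ℝ) • (w x).snd) :=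
    hUG.sub (hwG.smul (-1)) (mU.locallyIntegrable two) ((mw1.const_smul (-1:ℝ)).locallyIntegrable two)
      (mG.locallyIntegrable two) ((mw2.const_smul (-1:ℝ)).locallyIntegrable two)
  simp only [neg_smul, one_smul, sub_neg_eq_add] at hneg
  refine ⟨fun x => U x + (w x).fst, fun x => G x + (w x).snd, mU.add mw1, mG.add mw2, hneg, ?_, ?_⟩
  · filter_upwards [hw0] with x hx hx3
    rw [hx hx3]
    have e1 : (0 : PP N n).snd = 0 := rfl
    have e2 : (0 : PP N n).fst = 0 := rfl
    rw [e1, e2, add_zero, add_zero]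
    exact ⟨rfl, rfl⟩
  · intro ψ Dψ mψ mD hψ h0
    have h1 := hw _ (bwd ψ Dψ mψ mD hψ h0)
    rw [L2.inner_def] at h1
    rw [← h1]
    refine integral_congr_ae ?_
    filter_upwards [(memLp_mkP mψ mD).coeFn_toLp, Lp.coeFn_sub (ε • (p0 + w) + JL (p0 + w)) τ,
      Lp.coeFn_add (ε • (p0 + w)) (JL (p0 + w)), Lp.coeFn_smul ε (p0 + w), (JJ_lip h).coeFn_compLp J0 (p0 + w),
      Lp.coeFn_add p0 w, (memLp_mkP mU mG).coeFn_toLp,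
      (memLp_mkP (MemLp.zero (ε := VV N)) mT).coeFn_toLp] with x h1 h2 h3 h4 h5 h6 h7 h8
    have e : (𝒩 w) x = ε • (mkP (U x) (G x) + w x) + JJ f' (mkP (U x) (G x) + w x) - mkP 0 (T x) := by
      rw [h2, Pi.sub_apply, h3, Pi.add_apply, h4, Pi.smul_apply, h5, Function.comp, h6, Pi.add_apply, h7, h8]
      rfl
    rw [e, h1, WithLp.prod_inner_apply]
    have e1 : (ε • (mkP (U x) (G x) + w x) + JJ f' (mkP (U x) (G x) + w x) - mkP 0 (T x)).fst =
      ε • (U x + (w x).fst) + 0 - 0 := rfl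
    have e2 : (ε • (mkP (U x) (G x) + w x) + JJ f' (mkP (U x) (G x) + w x) - mkP 0 (T x)).snd =
      ε • (G x + (w x).snd) + AE f' (G x + (w x).snd) - T x := rfl
    have e3 : (mkP (ψ x) (Dψ x)).ofLp = (ψ x, Dψ x) := rfl
    change _ = ⟪(ε • (mkP (U x) (G x) + w x) + JJ f' (mkP (U x) (G x) + w x) - mkP 0 (T x)).fst, ψ x⟫ +
      ⟪(ε • (mkP (U x) (G x) + w x) + JJ f' (mkP (U x) (G x) + w x) - mkP 0 (T x)).snd, Dψ x⟫
    rw [e1, e2, add_zero, sub_zero, real_inner_smul_left, add_comm (ε • (G x + (w x).snd))]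
    ring
end lemR

open MeasureTheory Filter Topology Set
open scoped ENNReal RealInnerProductSpace

section P7
variable {n N : ℕ}

theorem mp_add (c : EVec n) : MeasurePreserving (fun x : EVec n => x + c) volume volume :=
  measurePreserving_add_right volume c

theorem memLp_translate {E : Type*} [NormedAddCommGroup E] {p : ℝ≥0∞} {g : EVec n → E} (hg : MemLp g p)
    (c : EVec n) : MemLp (fun x => g (x + c)) p :=
  hg.comp_measurePreserving (mp_add c)

theorem translate_cont {E : Type*} [NormedAddCommGroup E] {p : ℝ≥0∞} [Fact (1 ≤ p)] (hp : p ≠ ∞)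
    {g : EVec n → E} (hg : MemLp g p) :
    Tendsto (fun y : EVec n => eLpNorm (fun x => g (x + y) - g x) p volume) (𝓝 0) (𝓝 0) := by
  let Φ : EVec n → C(EVec n, EVec n) := fun y => ⟨fun x => x + y, by fun_prop⟩
  have hΦ : Continuous Φ := by
    apply ContinuousMap.continuous_of_continuous_uncurry
    have : Continuous (fun q : EVec n × EVec n => q.2 + q.1) := by fun_prop
    exact this
  have hΦm : ∀ y, MeasurePreserving (Φ y) volume volume := fun y => mp_add y
  have h1 := (Filter.Tendsto.compMeasurePreservingLp (tendsto_const_nhds (x := hg.toLp) (f := 𝓝 (0 : EVec n)))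
    (hΦ.tendsto 0) hΦm (hΦm 0) hp)
  have h2 := tendsto_iff_edist_tendsto_0.1 h1
  refine h2.congr fun y => ?_
  rw [Lp.edist_def]
  apply eLpNorm_congr_ae
  filter_upwards [Lp.coeFn_compMeasurePreserving hg.toLp (hΦm y), Lp.coeFn_compMeasurePreserving hg.toLp (hΦm 0),
    hg.coeFn_toLp, (hΦm y).quasiMeasurePreserving.ae hg.coeFn_toLp] with x h3 h4 h5 h6
  simp only [Pi.sub_apply]
  rw [h3, h4]
  simp only [Function.comp]
  have e : (Φ 0) x = x := by simp [Φ]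
  rw [h6, e, h5]
  rfl

theorem l2_cs {α : Type*} [MeasurableSpace α] {μ : Measure α} {a b : α → ℝ} (ha : MemLp a 2 μ) (hb : MemLp b 2 μ) :
    |∫ x, a x * b x ∂μ| ≤ (eLpNorm a 2 μ).toReal * (eLpNorm b 2 μ).toReal := by
  have := abs_real_inner_le_norm (ha.toLp a) (hb.toLp b)
  rw [Lp.norm_toLp, Lp.norm_toLp, L2.inner_def] at this
  have e : ∫ x, ⟪(ha.toLp a) x, (hb.toLp b) x⟫ ∂μ = ∫ x, a x * b x ∂μ := by
    refine integral_congr_ae ?_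
    filter_upwards [ha.coeFn_toLp, hb.coeFn_toLp] with x h1 h2
    rw [h1, h2]; simp [mul_comm]
  rwa [e] at this

theorem l2_sq {α : Type*} [MeasurableSpace α] {μ : Measure α} {a : α → ℝ} (ha : MemLp a 2 μ) :
    ∫ x, a x ^ 2 ∂μ = (eLpNorm a 2 μ).toReal ^ 2 := by
  have := real_inner_self_eq_norm_sq ha.toLp
  rw [Lp.norm_toLp, L2.inner_def] at this
  rw [← this]
  refine integral_congr_ae ?_
  filter_upwards [ha.coeFn_toLp] with x h1
  rw [h1]; simp [sq]

theorem l2_dual {q : EVec n → ℝ} (hq : MemLp q 2) {ω : ℝ}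
    (h : ∀ φ : EVec n → ℝ, ContDiff ℝ 1 φ → HasCompactSupport φ →
      |∫ x, q x * φ x| ≤ ω * (eLpNorm φ 2 volume).toReal) :
    (eLpNorm q 2 volume).toReal ≤ ω := by
  have hcl : IsClosed {k : Lp ℝ 2 (volume : Measure (EVec n)) | |⟪hq.toLp, k⟫| ≤ ω * ‖k‖} :=
    isClosed_le (by fun_prop) (by fun_prop)
  have hd := Lp.dense_hasCompactSupport_contDiff (F := ℝ) (μ := (volume : Measure (EVec n))) (p := 2) (by norm_num)
  have hall : ∀ k : Lp ℝ 2 (volume : Measure (EVec n)), |⟪hq.toLp, k⟫| ≤ ω * ‖k‖ := by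
    intro k
    have : closure {f : Lp ℝ 2 (volume : Measure (EVec n)) | ∃ g : EVec n → ℝ, f =ᵐ[volume] g ∧ HasCompactSupport g ∧ ContDiff ℝ (⊤ : ℕ∞) g} ⊆ _ := closure_minimal (t := {k : Lp ℝ 2 (volume : Measure (EVec n)) | |⟪hq.toLp, k⟫| ≤ ω * ‖k‖}) (by
      rintro k ⟨φ, hφk, hc, hφ⟩
      have hφ1 : ContDiff ℝ 1 φ := hφ.of_le (by exact_mod_cast le_top)
      have mφ : MemLp φ 2 := hφ1.continuous.memLp_of_hasCompactSupport hc
      have := h φ hφ1 hc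
      have e1 : ‖k‖ = (eLpNorm φ 2 volume).toReal := by
        rw [Lp.norm_def, eLpNorm_congr_ae hφk]
      have e2 : ⟪hq.toLp, k⟫ = ∫ x, q x * φ x := by
        rw [L2.inner_def]
        refine integral_congr_ae ?_
        filter_upwards [hq.coeFn_toLp, hφk] with x h1 h2
        rw [h1, h2]; simp [mul_comm]
      simp only [mem_ofPred_eq]
      rw [e1, e2]; exact this) hcl
    exact this (hd k)
  have h1 := hall hq.toLp
  rw [real_inner_self_eq_norm_sq, abs_of_nonneg (by positivity), Lp.norm_toLp] at h1
  set A := (eLpNorm q 2 volume).toReal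
  have hA : 0 ≤ A := ENNReal.toReal_nonneg
  rcases hA.eq_or_lt with h0 | h0
  · rw [← h0]
    by_contra hω
    push Not at hω
    -- need ω ≥ 0
    have h2 : ∃ φ : EVec n → ℝ, ContDiff ℝ 1 φ ∧ HasCompactSupport φ ∧ 0 < (eLpNorm φ 2 volume).toReal := by
      let b : ContDiffBump (0 : EVec n) := default
      have hc : HasCompactSupport b := b.hasCompactSupport
      have mb : MemLp b 2 := b.continuous.memLp_of_hasCompactSupport hc
      refine ⟨b, b.contDiff, hc, ENNReal.toReal_pos ?_ mb.2.ne⟩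
      intro h0
      rw [eLpNorm_eq_zero_iff mb.1 (by norm_num)] at h0
      have := (Continuous.ae_eq_iff_eq volume b.continuous continuous_const).1 h0
      have h3 := congrFun this 0
      have h4 : b (0 : EVec n) = 1 := b.one_of_mem_closedBall (by simp [b.rIn_pos.le])
      rw [h4] at h3
      exact one_ne_zero h3
    obtain ⟨φ, h3, h4, h5⟩ := h2
    have := h φ h3 h4
    have := abs_nonneg (∫ x, q x * φ x)
    nlinarith
  · nlinarith

theorem L4 {v : EVec n → ℝ} (hv : LocallyIntegrable v) {φ : EVec n → ℝ} (hφ : ContDiff ℝ 1 φ)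
    (hc : HasCompactSupport φ) (e : EVec n) (t₀ : ℝ) :
    HasDerivAt (fun t : ℝ => ∫ x, v x * φ (x - t • e)) (∫ x, v x * (- fderiv ℝ φ (x - t₀ • e) e)) t₀ := by
  obtain ⟨C, hC⟩ := (contDiff_fd hφ e).bounded_above_of_compact_support (hc.fderiv_apply (𝕜 := ℝ) _)
  let S : Set (EVec n) := (fun q : EVec n × ℝ => q.1 + q.2 • e) '' (tsupport φ ×ˢ Icc (t₀ - 1) (t₀ + 1))
  have hS : IsCompact S := (hc.isCompact.prod isCompact_Icc).image (by fun_prop)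
  have hz : ∀ x ∉ S, ∀ t ∈ Metric.ball t₀ 1, fderiv ℝ φ (x - t • e) e = 0 := by
    intro x hx t ht
    have : x - t • e ∉ tsupport φ := by
      intro hm
      apply hx
      refine ⟨(x - t • e, t), ⟨hm, ?_⟩, by simp⟩
      rw [Real.ball_eq_Ioo] at ht
      exact Ioo_subset_Icc_self ht
    have h2 : fderiv ℝ φ (x - t • e) = 0 := by
      by_contra h3
      exact this (support_fderiv_subset ℝ h3)
    rw [h2]; simp
  have iS : Integrable (S.indicator fun x => ‖v x‖ * C) := by
    rw [integrable_indicator_iff hS.measurableSet]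
    exact (hv.integrableOn_isCompact hS).norm.mul_const C
  have comp : ∀ t : ℝ, Integrable (fun x => v x * φ (x - t • e)) := by
    intro t
    have h1 : Continuous (fun x => φ (x - t • e)) := hφ.continuous.comp (by fun_prop)
    have h2 : HasCompactSupport (fun x => φ (x - t • e)) := hc.comp_homeomorph (Homeomorph.subRight (t • e))
    have := hv.integrable_smul_left_of_hasCompactSupport h1 h2
    simpa [mul_comm] using this
  have := (hasDerivAt_integral_of_dominated_loc_of_deriv_le (μ := volume)
    (F := fun (t : ℝ) x => v x * φ (x - t • e)) (F' := fun t x => v x * (- fderiv ℝ φ (x - t • e) e))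
    (bound := S.indicator fun x => ‖v x‖ * C) (x₀ := t₀) (Metric.ball_mem_nhds t₀ one_pos)
    (Eventually.of_forall fun t => (comp t).aestronglyMeasurable) (comp t₀)
    (by
      refine hv.aestronglyMeasurable.mul ?_
      have := (contDiff_fd hφ e).comp (by fun_prop : Continuous fun x : EVec n => x - t₀ • e)
      exact this.neg.aestronglyMeasurable)
    (by
      refine ae_of_all _ fun x t ht => ?_
      by_cases hx : x ∈ S
      · rw [indicator_of_mem hx, norm_mul, norm_neg]
        gcongr
        exact hC _
      · rw [hz x hx t ht]; simp [hx]) iS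
    (by
      refine ae_of_all _ fun x t ht => ?_
      refine HasDerivAt.const_mul _ ?_
      have h1 : HasFDerivAt φ (fderiv ℝ φ (x - t • e)) (x - t • e) :=
        (hφ.differentiable one_ne_zero _).hasFDerivAt
      have h2 : HasDerivAt (fun t : ℝ => x - t • e) (-e) t := by
        have := ((hasDerivAt_id t).smul_const e).const_sub x
        simpa using this
      have := h1.comp_hasDerivAt t h2
      rw [map_neg] at this
      exact this))
  exact this.2

end P7

open MeasureTheory Filter Topology Set
open scoped ENNReal RealInnerProductSpace

section P8
variable {n N : ℕ}

theorem int_shift {v : EVec n → ℝ} (φ : EVec n → ℝ) (c : EVec n) :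
    ∫ x, v (x + c) * φ x = ∫ x, v x * φ (x - c) := by
  rw [← integral_sub_right_eq_self (fun x => v (x + c) * φ x) c]
  simp only [sub_add_cancel]

theorem L5 {v γ : EVec n → ℝ} (hv : MemLp v 2) (hγ : MemLp γ 2) (e : EVec n)
    (hw : ∀ φ : EVec n → ℝ, ContDiff ℝ 1 φ → HasCompactSupport φ →
      ∫ x, v x * fderiv ℝ φ x e = - ∫ x, γ x * φ x) :
    Tendsto (fun h : ℝ => (eLpNorm (fun x => h⁻¹ * (v (x + h • e) - v x) - γ x) 2 volume).toReal)
      (𝓝[>] 0) (𝓝 0) := by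
  have h2 : Fact ((1:ℝ≥0∞) ≤ 2) := ⟨by norm_num⟩
  rw [Metric.tendsto_nhdsWithin_nhds]
  intro ε hε
  have hc := translate_cont (by norm_num : (2:ℝ≥0∞) ≠ ∞) hγ
  have hc2 : Tendsto (fun t : ℝ => eLpNorm (fun x => γ (x + t • e) - γ x) 2 volume) (𝓝 0) (𝓝 0) := by
    refine hc.comp ?_
    have : Continuous (fun t : ℝ => t • e) := by fun_prop
    simpa using this.tendsto 0
  have hc3 := (ENNReal.tendsto_toReal (by simp : (0:ℝ≥0∞) ≠ ∞)).comp hc2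
  rw [Metric.tendsto_nhds_nhds] at hc3
  obtain ⟨δ, hδ, hc4⟩ := hc3 (ε/2) (by positivity)
  refine ⟨δ, hδ, fun {h} hh hhδ => ?_⟩
  have hh : 0 < h := hh
  rw [Real.dist_eq, sub_zero, abs_of_pos hh] at hhδ
  rw [Real.dist_eq, sub_zero, abs_of_nonneg ENNReal.toReal_nonneg]
  have mq : MemLp (fun x => h⁻¹ * (v (x + h • e) - v x) - γ x) 2 :=
    (((memLp_translate hv (h • e)).sub hv).const_mul h⁻¹).sub hγ
  refine lt_of_le_of_lt (l2_dual (ω := ε/2) mq ?_) (by linarith)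
  intro φ hφ hcφ
  have mφ : MemLp φ 2 := hφ.continuous.memLp_of_hasCompactSupport hcφ
  have lv : LocallyIntegrable v := hv.locallyIntegrable (by norm_num)
  have mm : ∀ {a : EVec n → ℝ}, MemLp a 2 → Integrable (fun x => a x * φ x) := fun ha =>
    ha.integrable_mul mφ
  let m : ℝ → ℝ := fun t => (∫ x, v x * φ (x - t • e)) - t * ∫ x, γ x * φ x
  have hm : ∀ t, HasDerivAt m (∫ x, (γ (x + t • e) - γ x) * φ x) t := by
    intro t
    have h1 := (L4 lv hφ hcφ e t).sub ((hasDerivAt_id t).mul_const (∫ x, γ x * φ x))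
    have e1 : (∫ x, v x * (- fderiv ℝ φ (x - t • e) e)) - 1 * (∫ x, γ x * φ x) =
        ∫ x, (γ (x + t • e) - γ x) * φ x := by
      have h3 := hw (fun x => φ (x - t • e)) (hφ.comp (contDiff_id.sub contDiff_const))
        (hcφ.comp_homeomorph (Homeomorph.subRight (t • e)))
      simp only [fderiv_comp_sub] at h3
      simp only [mul_neg, integral_neg, h3, sub_mul, neg_neg, one_mul]
      rw [integral_sub (mm (memLp_translate hγ (t • e))) (mm hγ), int_shift]
    rw [← e1]; exact h1
  have hbd : ∀ t ∈ Icc (0:ℝ) h, ‖∫ x, (γ (x + t • e) - γ x) * φ x‖ ≤ ε/2 * (eLpNorm φ 2 volume).toReal := by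
    intro t ht
    have h5 : MemLp (fun x => γ (x + t • e) - γ x) 2 := (memLp_translate hγ (t • e)).sub hγ
    refine (l2_cs h5 mφ).trans ?_
    gcongr
    have := @hc4 t (by rw [Real.dist_eq, sub_zero, abs_of_nonneg ht.1]; exact lt_of_le_of_lt ht.2 hhδ)
    rw [Real.dist_eq] at this
    simp only [Function.comp, ENNReal.toReal_zero, sub_zero] at this
    exact (le_abs_self _).trans this.le
  have h6 := (convex_Icc (0:ℝ) h).norm_image_sub_le_of_norm_hasDerivWithin_le
    (fun t _ => (hm t).hasDerivWithinAt) hbd (left_mem_Icc.2 hh.le) (right_mem_Icc.2 hh.le)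
  have e2 : ∫ x, (h⁻¹ * (v (x + h • e) - v x) - γ x) * φ x = h⁻¹ * (m h - m 0) := by
    have e3 : ∀ x, (h⁻¹ * (v (x + h • e) - v x) - γ x) * φ x =
      h⁻¹ * (v (x + h • e) * φ x - v x * φ x) - γ x * φ x := fun x => by ring
    simp only [e3]
    have i1 := mm (memLp_translate hv (h • e))
    have i2 := (i1.sub (mm hv)).const_mul h⁻¹
    simp only [Pi.sub_apply] at i2
    rw [integral_sub i2 (mm hγ), integral_const_mul,
      integral_sub i1 (mm hv), int_shift]
    simp only [m, zero_smul, sub_zero, zero_mul]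
    field_simp
    ring
  rw [e2, abs_mul, abs_of_pos (inv_pos.2 hh)]
  rw [sub_zero, Real.norm_eq_abs, Real.norm_eq_abs, abs_of_pos hh] at h6
  calc h⁻¹ * |m h - m 0| ≤ h⁻¹ * (ε / 2 * (eLpNorm φ 2 volume).toReal * h) := by gcongr
    _ = _ := by field_simp

theorem comp_memLp {ι : Type*} [Fintype ι] {v : EVec n → EuclideanSpace ℝ ι} (hv : MemLp v 2) (a : ι) :
    MemLp (fun x => v x a) 2 := (EuclideanSpace.proj (𝕜 := ℝ) a).comp_memLp' hv

/-- column of a matrix -/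
noncomputable def col (s : Fin n) (m : MM N n) : VV N := WithLp.toLp 2 (fun a => m (a, s))

@[simp] theorem col_apply (s : Fin n) (m : MM N n) (a : Fin N) : col s m a = m (a, s) := rfl

theorem norm_col_le (s : Fin n) (m : MM N n) : ‖col s m‖ ≤ ‖m‖ := by
  rw [EuclideanSpace.norm_eq, EuclideanSpace.norm_eq]
  apply Real.sqrt_le_sqrt
  rw [Fintype.sum_prod_type]
  refine Finset.sum_le_sum fun a _ => ?_
  exact Finset.single_le_sum (f := fun i => ‖m (a, i)‖^2) (fun i _ => by positivity) (Finset.mem_univ s)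

theorem col_cont (s : Fin n) : Continuous (col s : MM N n → VV N) := by
  refine (PiLp.continuous_toLp 2 _).comp (continuous_pi fun p => ?_)
  fun_prop

theorem col_memLp {g : EVec n → MM N n} (hg : MemLp g 2) (s : Fin n) : MemLp (fun x => col s (g x)) 2 :=
  hg.of_le ((col_cont s).comp_aestronglyMeasurable hg.1) (ae_of_all _ fun x => norm_col_le s _)

theorem L5v {v : EVec n → VV N} {g : EVec n → MM N n} (hv : MemLp v 2) (hg : MemLp g 2)
    (hw : WG univ v g) (s : Fin n) :
    Tendsto (fun h : ℝ => ∫ x, ‖h⁻¹ • (v (x + h • ee n s) - v x) - col s (g x)‖ ^ 2)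
      (𝓝[>] 0) (𝓝 0) := by
  have h1 : ∀ a : Fin N, Tendsto (fun h : ℝ => (eLpNorm (fun x => h⁻¹ * (v (x + h • ee n s) a - v x a) - g x (a, s)) 2 volume).toReal ^ 2)
      (𝓝[>] 0) (𝓝 0) := fun a => by
    have := (L5 (comp_memLp hv a) (comp_memLp hg (a, s)) (ee n s)
      (fun φ hφ hc => hw φ hφ hc (subset_univ _) a s)).pow 2
    simpa using this
  have h2 := tendsto_finsetSum Finset.univ (fun a _ => h1 a)
  simp only [Finset.sum_const_zero] at h2
  refine h2.congr fun h => ?_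
  have mq : ∀ a, MemLp (fun x => h⁻¹ * (v (x + h • ee n s) a - v x a) - g x (a, s)) 2 := fun a =>
    (((comp_memLp (memLp_translate hv (h • ee n s)) a).sub (comp_memLp hv a)).const_mul h⁻¹).sub (comp_memLp hg (a, s))
  simp only [EuclideanSpace.norm_sq_eq]
  rw [integral_finsetSum]
  · refine Finset.sum_congr rfl fun a _ => ?_
    rw [← l2_sq (mq a)]
    simp
  · intro a _
    refine (mq a).integrable_sq.congr (ae_of_all _ fun x => ?_)
    simp

end P8

open MeasureTheory Filter Topology Set
open scoped ENNReal RealInnerProductSpace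

section P9
variable {n N : ℕ}

theorem conv_swap {ρ V ψ : EVec n → ℝ} (hρ : Integrable ρ) (hV : Integrable V) (hψ : Continuous ψ)
    (hc : HasCompactSupport ψ) :
    ∫ x, (∫ t, ρ t * V (x - t)) * ψ x = ∫ t, ρ t * ∫ x, V (x - t) * ψ x := by
  obtain ⟨C, hC⟩ := hψ.bounded_above_of_compact_support hc
  have h1 := hρ.convolution_integrand (ContinuousLinearMap.mul ℝ ℝ) hV
  simp only [ContinuousLinearMap.mul_apply'] at h1
  have h2 : Integrable (fun p : EVec n × EVec n => (ρ p.2 * V (p.1 - p.2)) * ψ p.1) (volume.prod volume) :=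
    h1.mul_bdd (c := C) (hψ.comp continuous_fst).aestronglyMeasurable (ae_of_all _ fun p => hC p.1)
  have h3 := integral_integral_swap (f := fun x t => (ρ t * V (x - t)) * ψ x) h2
  simp only [integral_mul_const] at h3
  rw [h3]
  congr 1; ext t
  rw [← integral_const_mul]
  congr 1; ext x; ring

set_option maxHeartbeats 800000 in
theorem mollify {U0 : EVec n → VV N} {G0 : EVec n → MM N n} (iU : Integrable U0) (iG : Integrable G0)
    (hU : HasCompactSupport U0) (hG : HasCompactSupport G0) (hw : WG univ U0 G0) {δ : ℝ} (hδ : 0 < δ) :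
    ∃ (U : EVec n → VV N) (G : EVec n → MM N n), MemLp U 2 ∧ MemLp G 2 ∧ WG univ U G ∧ Integrable G ∧
      ∫ x, ‖G x - G0 x‖ ≤ δ := by
  have h1F : Fact ((1:ℝ≥0∞) ≤ 1) := ⟨le_rfl⟩
  have hc := translate_cont (by norm_num : (1:ℝ≥0∞) ≠ ∞) (memLp_one_iff_integrable.2 iG)
  have hc3 := (ENNReal.tendsto_toReal (by simp : (0:ℝ≥0∞) ≠ ∞)).comp hc
  rw [Metric.tendsto_nhds_nhds] at hc3
  obtain ⟨r, hr, hc4⟩ := hc3 δ hδ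
  let b : ContDiffBump (0 : EVec n) := ⟨r/4, r/2, by positivity, by linarith⟩
  let ρ : EVec n → ℝ := b.normed volume
  have cρ : Continuous ρ := b.continuous_normed
  have sρ : HasCompactSupport ρ := b.hasCompactSupport_normed
  have iρ : Integrable ρ := cρ.integrable_of_hasCompactSupport sρ
  have eρ : ∫ t, ρ t = 1 := b.integral_normed
  have nρ : ∀ t, 0 ≤ ρ t := b.nonneg_normed
  have zρ : ∀ t, ρ t ≠ 0 → ‖t‖ < r := by
    intro t ht
    have : t ∈ Metric.closedBall (0 : EVec n) (r/2) := by
      rw [← b.tsupport_normed_eq (μ := volume)]; exact subset_tsupport _ ht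
    rw [mem_closedBall_zero_iff] at this
    linarith
  let U : EVec n → VV N := fun x => ∫ t, ρ t • U0 (x - t)
  let G : EVec n → MM N n := fun x => ∫ t, ρ t • G0 (x - t)
  have eU : U = MeasureTheory.convolution ρ U0 (ContinuousLinearMap.lsmul ℝ ℝ) volume := by
    ext x; simp [U, MeasureTheory.convolution_def]
  have eG : G = MeasureTheory.convolution ρ G0 (ContinuousLinearMap.lsmul ℝ ℝ) volume := by
    ext x; simp [G, MeasureTheory.convolution_def]
  have cU : Continuous U := by
    rw [eU]; exact sρ.continuous_convolution_left _ cρ iU.locallyIntegrable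
  have cG : Continuous G := by
    rw [eG]; exact sρ.continuous_convolution_left _ cρ iG.locallyIntegrable
  have sU : HasCompactSupport U := by
    rw [eU]; exact sρ.convolution _ hU
  have sG : HasCompactSupport G := by
    rw [eG]; exact sρ.convolution _ hG
  have iUc : ∀ x, Integrable (fun t => ρ t • U0 (x - t)) := fun x => by
    have h1 : LocallyIntegrable (fun t => U0 (x - t)) := (iU.comp_sub_left x).locallyIntegrable
    exact h1.integrable_smul_left_of_hasCompactSupport cρ sρ
  have iGc : ∀ x, Integrable (fun t => ρ t • G0 (x - t)) := fun x => by
    have h1 : LocallyIntegrable (fun t => G0 (x - t)) := (iG.comp_sub_left x).locallyIntegrable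
    exact h1.integrable_smul_left_of_hasCompactSupport cρ sρ
  have iGG : Integrable G := cG.integrable_of_hasCompactSupport sG
  have cmp : ∀ x a, U x a = ∫ t, ρ t * U0 (x - t) a := fun x a => by
    have := (EuclideanSpace.proj (𝕜 := ℝ) a).integral_comp_comm (iUc x)
    simpa using this.symm
  have cmpG : ∀ x a, G x a = ∫ t, ρ t * G0 (x - t) a := fun x a => by
    have := (EuclideanSpace.proj (𝕜 := ℝ) a).integral_comp_comm (iGc x)
    simpa using this.symm
  refine ⟨U, G, cU.memLp_of_hasCompactSupport sU, cG.memLp_of_hasCompactSupport sG, ?_, iGG, ?_⟩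
  · intro φ hφ hcφ _ a i
    simp only [cmp, cmpG]
    have iU1 : Integrable (fun x => U0 x a) := (EuclideanSpace.proj (𝕜 := ℝ) a).integrable_comp iU
    have iG1 : Integrable (fun x => G0 x (a, i)) := (EuclideanSpace.proj (𝕜 := ℝ) (a, i)).integrable_comp iG
    rw [conv_swap iρ iU1 (contDiff_fd hφ _) (hcφ.fderiv_apply (𝕜 := ℝ) _),
      conv_swap iρ iG1 hφ.continuous hcφ, ← integral_neg]
    congr 1; ext t
    have := (hw.translate (-t)) φ hφ hcφ (subset_univ _) a i
    simp only [← sub_eq_add_neg] at this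
    rw [this]; ring
  · have i1 := iρ.convolution_integrand (ContinuousLinearMap.lsmul ℝ ℝ) iG
    have i2 : Integrable (fun p : EVec n × EVec n => ρ p.2 • G0 p.1) (volume.prod volume) :=
      (iρ.smul_prod iG).swap
    have i3 := i1.sub i2
    have i4 : Integrable (fun p : EVec n × EVec n => ρ p.2 * ‖G0 (p.1 - p.2) - G0 p.1‖) (volume.prod volume) := by
      refine i3.norm.congr (ae_of_all _ fun p => ?_)
      simp only [Pi.sub_apply, ContinuousLinearMap.lsmul_apply, ← smul_sub, norm_smul, Real.norm_eq_abs, abs_of_nonneg (nρ _)]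
    have hpt : ∀ x, ‖G x - G0 x‖ ≤ ∫ t, ρ t * ‖G0 (x - t) - G0 x‖ := by
      intro x
      have e1 : G0 x = ∫ t, ρ t • G0 x := by rw [integral_smul_const, eρ, one_smul]
      have : G x - G0 x = ∫ t, ρ t • (G0 (x - t) - G0 x) := by
        conv_lhs => rw [e1]
        simp only [G, smul_sub]
        rw [integral_sub (iGc x) (iρ.smul_const _)]
      rw [this]
      refine (norm_integral_le_integral_norm _).trans (le_of_eq ?_)
      congr 1; ext t
      rw [norm_smul, Real.norm_eq_abs, abs_of_nonneg (nρ _)]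
    calc ∫ x, ‖G x - G0 x‖ ≤ ∫ x, ∫ t, ρ t * ‖G0 (x - t) - G0 x‖ := by
          apply integral_mono (iGG.sub iG).norm i4.integral_prod_left hpt
      _ = ∫ t, ∫ x, ρ t * ‖G0 (x - t) - G0 x‖ :=
          integral_integral_swap (f := fun x t => ρ t * ‖G0 (x - t) - G0 x‖) i4
      _ ≤ ∫ t, ρ t * δ := by
          apply integral_mono i4.integral_prod_right (iρ.mul_const δ)
          intro t
          simp only [integral_const_mul]
          by_cases ht : ρ t = 0
          · simp [ht]
          · refine mul_le_mul_of_nonneg_left ?_ (nρ t)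
            have h5 := @hc4 (-t) (by simpa using zρ t ht)
            simp only [Function.comp, ENNReal.toReal_zero, Real.dist_eq, sub_zero] at h5
            have h6 : ∫ x, ‖G0 (x - t) - G0 x‖ = (eLpNorm (fun x => G0 (x + -t) - G0 x) 1 volume).toReal := by
              have i5 : Integrable (fun x => G0 (x + -t) - G0 x) := (iG.comp_add_right (-t)).sub iG
              rw [eLpNorm_one_eq_lintegral_enorm, integral_norm_eq_lintegral_enorm]
              · simp [sub_eq_add_neg]
              · simpa [sub_eq_add_neg] using i5.aestronglyMeasurable
            rw [h6]
            exact (le_abs_self _).trans h5.le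
      _ = δ := by rw [integral_mul_const, eρ, one_mul]

end P9

open MeasureTheory Filter Topology Set
open scoped ENNReal RealInnerProductSpace

section P10
variable {n N : ℕ} {f f' : ℝ → ℝ} {L : ℝ}

theorem int_inner {α E : Type*} [MeasurableSpace α] {μ : Measure α}
    [NormedAddCommGroup E] [InnerProductSpace ℝ E] {a b : α → E}
    (ha : MemLp a 2 μ) (hb : MemLp b 2 μ) : Integrable (fun x => ⟪a x, b x⟫) μ := by
  have h1 : Integrable (fun x => ‖a x‖ * ‖b x‖) μ := ha.norm.integrable_mul hb.norm
  exact h1.mono' (ha.1.inner hb.1) (ae_of_all _ fun x => norm_inner_le_norm _ _)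

theorem int_nsq {α E : Type*} [MeasurableSpace α] {μ : Measure α}
    [NormedAddCommGroup E] {a : α → E}
    (ha : MemLp a 2 μ) : Integrable (fun x => ‖a x‖ ^ 2) μ :=
  (memLp_two_iff_integrable_sq_norm ha.1).1 ha

theorem AE_memLp {α E : Type*} [MeasurableSpace α] {μ : Measure α}
    [NormedAddCommGroup E] [InnerProductSpace ℝ E] (h : GoodF f f' L) {a : α → E} (ha : MemLp a 2 μ) :
    MemLp (fun x => AE f' (a x)) 2 μ :=
  (h.lip (E := E)).comp_memLp AE_zero ha

theorem young_id {E : Type*} [NormedAddCommGroup E] [InnerProductSpace ℝ E] (a b : E) :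
    ‖a‖^2/2 - ‖b‖^2/2 ≤ ⟪a, a - b⟫ := by
  rw [inner_sub_right, real_inner_self_eq_norm_sq]
  have := real_inner_le_norm a b
  nlinarith [sq_nonneg (‖a‖ - ‖b‖)]

set_option maxHeartbeats 1000000 in
theorem approx (h : GoodF f f' L) {K3 : Set (EVec n)} (hK3 : IsCompact K3)
    {U0 : EVec n → VV N} {G0 : EVec n → MM N n} (iU : Integrable U0) (iG : Integrable G0)
    (hU : HasCompactSupport U0) (hG : HasCompactSupport G0) (hw : WG univ U0 G0)
    {T : EVec n → MM N n} (mT : MemLp T 2) {θ θ' C0 : ℝ} (hθ0 : 0 ≤ θ)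
    (hTθ : ∀ᵐ x, x ∈ K3 → ‖T x‖ ≤ θ) (hθ : θ < θ') (hC0 : 0 ≤ C0) (hco : ∀ t, 0 ≤ t → θ' * t - C0 ≤ f t)
    (hEL : ∀ (ψ : EVec n → VV N) (Dψ : EVec n → MM N n), MemLp ψ 2 → MemLp Dψ 2 → WG univ ψ Dψ →
        (∀ᵐ x, x ∉ K3 → ψ x = 0 ∧ Dψ x = 0) → ∫ x, ⟪AE f' (G0 x) - T x, Dψ x⟫ = 0) :
    ∃ Q, 0 ≤ Q ∧ ∀ δ, 0 < δ → δ ≤ 1 → ∃ ε, 0 < ε ∧ ε ≤ 1 ∧ ∃ (v : EVec n → VV N) (g : EVec n → MM N n),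
      MemLp v 2 ∧ MemLp g 2 ∧ WG univ v g ∧
      (∀ (ψ : EVec n → VV N) (Dψ : EVec n → MM N n), MemLp ψ 2 → MemLp Dψ 2 → WG univ ψ Dψ →
        (∀ᵐ x, x ∉ K3 → ψ x = 0 ∧ Dψ x = 0) →
        ∫ x, (⟪AE f' (g x) + ε • g x - T x, Dψ x⟫ + ε * ⟪v x, ψ x⟫) = 0) ∧
      ∫ x in K3, ‖g x‖ ≤ Q ∧ ε * ∫ x in K3, ‖g x‖ ^ 2 ≤ Q ∧
      ε * ∫ x in K3, ‖v x‖ ^ 2 ≤ Q ∧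
      ∫ x in K3, ‖AE f' (g x) - AE f' (G0 x)‖ ^ 2 ≤ Q * δ := by
  have hL := h.Lpos
  have hfK : volume K3 ≠ ∞ := hK3.measure_lt_top.ne
  have fK : IsFiniteMeasure (volume.restrict K3) := ⟨by simpa using hK3.measure_lt_top⟩
  set V := (volume.restrict K3).real univ with hV
  have V0 : 0 ≤ V := measureReal_nonneg
  set M := ∫ x, ‖G0 x‖ with hM
  have M0 : 0 ≤ M := integral_nonneg fun x => norm_nonneg _
  set Q0 := C0 * V + (L + θ) * (M + 1) + 1 with hQ0
  have Q00 : 0 ≤ Q0 := by positivity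
  have hd : 0 < θ' - θ := by linarith
  refine ⟨Q0/(θ' - θ) + 2 * Q0 + 12 * L * (2 * L + 1), by positivity, ?_⟩
  intro δ hδ hδ1
  obtain ⟨U, G, mU, mG, wUG, iGG, hclose⟩ := mollify iU iG hU hG hw hδ
  set S := (∫ x, ‖U x‖^2) + ∫ x, ‖G x‖^2 with hS
  have S0 : 0 ≤ S := add_nonneg (integral_nonneg fun x => by positivity) (integral_nonneg fun x => by positivity)
  set ε := δ/(1+S) with hε
  have ε0 : 0 < ε := by positivity
  have εS : ε * S ≤ δ := by
    rw [hε, div_mul_eq_mul_div, div_le_iff₀ (by positivity)]; nlinarith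
  have ε1 : ε ≤ 1 := by
    rw [hε, div_le_iff₀ (by positivity)]; nlinarith
  obtain ⟨v, g, mv, mg, wvg, hoff, heq⟩ := lemmaR h ε0 hK3.measurableSet mU mG wUG mT
  have two : (1:ℝ≥0∞) ≤ 2 := by norm_num
  have mψ : MemLp (fun x => v x - U x) 2 := mv.sub mU
  have mDψ : MemLp (fun x => g x - G x) 2 := mg.sub mG
  have wψ : WG univ (fun x => v x - U x) (fun x => g x - G x) :=
    wvg.sub wUG (mv.locallyIntegrable two) (mU.locallyIntegrable two) (mg.locallyIntegrable two) (mG.locallyIntegrable two)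
  have offψ : ∀ᵐ x, x ∉ K3 → v x - U x = 0 ∧ g x - G x = 0 := by
    filter_upwards [hoff] with x hx hxK
    rw [(hx hxK).1, (hx hxK).2]; simp
  have E1 := heq _ _ mψ mDψ wψ offψ
  have E2 := hEL _ _ mψ mDψ wψ offψ
  rw [← setIntegral_eq_integral_of_ae_compl_eq_zero (s := K3) (by
    filter_upwards [offψ] with x hx hxK
    first
    | (rw [(hx hxK).1, (hx hxK).2]; simp)
    | (rw [(hx hxK).2]; simp))] at E1 E2
  -- restricted memberships
  have rv := mv.restrict K3
  have rg := mg.restrict K3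
  have rU := mU.restrict K3
  have rG := mG.restrict K3
  have rT := mT.restrict K3
  have rAg := AE_memLp h rg
  have rψ := mψ.restrict K3
  have rDψ := mDψ.restrict K3
  have rAG0 : MemLp (fun x => AE f' (G0 x)) 2 (volume.restrict K3) :=
    MemLp.of_bound ((h.lip (E := MM N n)).continuous.comp_aestronglyMeasurable iG.aestronglyMeasurable.restrict) L
      (ae_of_all _ fun x => h.norm_AE_le _)
  have i1 : Integrable (fun x => ⟪AE f' (g x) + ε • g x - T x, g x - G x⟫ + ε * ⟪v x, v x - U x⟫) (volume.restrict K3) :=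
    (int_inner ((rAg.add (rg.const_smul ε)).sub rT) rDψ).add ((int_inner rv rψ).const_mul ε)
  have i2 : Integrable (fun x => ⟪AE f' (G0 x) - T x, g x - G x⟫) (volume.restrict K3) :=
    int_inner (rAG0.sub rT) rDψ
  have ig1 : Integrable (fun x => ‖g x‖) (volume.restrict K3) := (rg.integrable two).norm
  have ig2 := int_nsq rg
  have iv2 := int_nsq rv
  have iG2 := int_nsq rG
  have iU2 := int_nsq rU
  have iG1 : Integrable (fun x => ‖G x‖) (volume.restrict K3) := iGG.norm.restrict
  have iGd : Integrable (fun x => ‖G x - G0 x‖) (volume.restrict K3) := (iGG.sub iG).norm.restrict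
  have iAd : Integrable (fun x => ‖AE f' (g x) - AE f' (G0 x)‖^2) (volume.restrict K3) := int_nsq (rAg.sub rAG0)
  have sub1 : ∫ x in K3, ‖G x - G0 x‖ ≤ δ :=
    (setIntegral_le_integral (iGG.sub iG).norm (ae_of_all _ fun x => norm_nonneg _)).trans hclose
  have sub2 : ∫ x in K3, ‖G x‖ ≤ M + 1 := by
    refine (setIntegral_le_integral iGG.norm (ae_of_all _ fun x => norm_nonneg _)).trans ?_
    have : ∫ x, ‖G x‖ ≤ ∫ x, (‖G x - G0 x‖ + ‖G0 x‖) := by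
      refine integral_mono iGG.norm ((iGG.sub iG).norm.add iG.norm) fun x => ?_
      simpa using norm_add_le (G x - G0 x) (G0 x)
    rw [integral_add (f := fun x => ‖G x - G0 x‖) (iGG.sub iG).norm iG.norm] at this
    linarith
  have sub3 : (∫ x in K3, ‖U x‖^2) + ∫ x in K3, ‖G x‖^2 ≤ S :=
    add_le_add (setIntegral_le_integral (int_nsq mU) (ae_of_all _ fun x => by positivity))
      (setIntegral_le_integral (int_nsq mG) (ae_of_all _ fun x => by positivity))
  -- energy
  have hTθ' : ∀ᵐ x ∂(volume.restrict K3), ‖T x‖ ≤ θ := (ae_restrict_iff' hK3.measurableSet).2 hTθ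
  have en : ∫ x in K3, ((θ' - θ) * ‖g x‖ + ε/2 * ‖g x‖^2 + ε/2 * ‖v x‖^2 - (C0 + (L + θ) * ‖G x‖ + ε/2 * ‖U x‖^2 + ε/2 * ‖G x‖^2)) ≤ 0 := by
    rw [← E1]
    refine integral_mono_ae ((((ig1.const_mul _).add (ig2.const_mul _)).add (iv2.const_mul _)).sub
      ((((integrable_const _).add (iG1.const_mul _)).add (iU2.const_mul _)).add (iG2.const_mul _))) i1 ?_
    filter_upwards [hTθ'] with x hx
    have h1 := h.grad (g x) (G x)
    have h2 := hco _ (norm_nonneg (g x))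
    have h3 := h.f_lip (0 : MM N n) (G x)
    rw [norm_zero, h.f0, sub_zero] at h3
    have h4 := young_id (g x) (G x)
    have h5 := young_id (v x) (U x)
    have h6 : ⟪T x, g x - G x⟫ ≤ θ * (‖g x‖ + ‖G x‖) :=
      (real_inner_le_norm _ _).trans (mul_le_mul hx (norm_sub_le _ _) (norm_nonneg _) hθ0)
    have h7 : ⟪AE f' (g x), G x - g x⟫ = - ⟪AE f' (g x), g x - G x⟫ := by rw [← neg_sub, inner_neg_right]
    simp only [inner_add_left, inner_sub_left, real_inner_smul_left]
    have h8 := mul_le_mul_of_nonneg_left h4 ε0.le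
    have h9 := mul_le_mul_of_nonneg_left h5 ε0.le
    simp only [sub_zero] at h3
    nlinarith
  have j1 : Integrable (fun x => (θ' - θ) * ‖g x‖) (volume.restrict K3) := ig1.const_mul _
  have j2 : Integrable (fun x => ε/2 * ‖g x‖^2) (volume.restrict K3) := ig2.const_mul _
  have j3 : Integrable (fun x => ε/2 * ‖v x‖^2) (volume.restrict K3) := iv2.const_mul _
  have j4 : Integrable (fun _ : EVec n => C0) (volume.restrict K3) := integrable_const _
  have j5 : Integrable (fun x => (L + θ) * ‖G x‖) (volume.restrict K3) := iG1.const_mul _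
  have j6 : Integrable (fun x => ε/2 * ‖U x‖^2) (volume.restrict K3) := iU2.const_mul _
  have j7 : Integrable (fun x => ε/2 * ‖G x‖^2) (volume.restrict K3) := iG2.const_mul _
  have j12 : Integrable (fun x => (θ' - θ) * ‖g x‖ + ε/2 * ‖g x‖^2) (volume.restrict K3) := j1.add j2
  have j123 : Integrable (fun x => (θ' - θ) * ‖g x‖ + ε/2 * ‖g x‖^2 + ε/2 * ‖v x‖^2) (volume.restrict K3) := j12.add j3
  have j45 : Integrable (fun x => C0 + (L + θ) * ‖G x‖) (volume.restrict K3) := j4.add j5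
  have j456 : Integrable (fun x => C0 + (L + θ) * ‖G x‖ + ε/2 * ‖U x‖^2) (volume.restrict K3) := j45.add j6
  have j4567 : Integrable (fun x => C0 + (L + θ) * ‖G x‖ + ε/2 * ‖U x‖^2 + ε/2 * ‖G x‖^2) (volume.restrict K3) := j456.add j7
  rw [integral_sub j123 j4567, integral_add j12 j3, integral_add j1 j2, integral_add j456 j7, integral_add j45 j6,
    integral_add j4 j5] at en
  simp only [integral_const_mul, integral_const, smul_eq_mul] at en
  rw [← hV] at en
  have p1 : 0 ≤ ∫ x in K3, ‖g x‖ := integral_nonneg fun x => norm_nonneg _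
  have p2 : 0 ≤ ∫ x in K3, ‖g x‖^2 := integral_nonneg fun x => by positivity
  have p3 : 0 ≤ ∫ x in K3, ‖v x‖^2 := integral_nonneg fun x => by positivity
  have key : (θ' - θ) * (∫ x in K3, ‖g x‖) + ε/2 * (∫ x in K3, ‖g x‖^2) + ε/2 * (∫ x in K3, ‖v x‖^2) ≤ Q0 := by
    have := mul_le_mul_of_nonneg_left sub2 (by positivity : 0 ≤ L + θ)
    have := mul_le_mul_of_nonneg_left sub3 (by positivity : 0 ≤ ε/2)
    rw [hQ0]
    nlinarith
  have q1 : 0 ≤ (θ' - θ) * (∫ x in K3, ‖g x‖) := by positivity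
  have q2 : 0 ≤ ε/2 * (∫ x in K3, ‖g x‖^2) := by positivity
  have q3 : 0 ≤ ε/2 * (∫ x in K3, ‖v x‖^2) := by positivity
  have q4 : 0 ≤ Q0/(θ' - θ) := by positivity
  have q5 : 0 ≤ 12 * L * (2 * L + 1) := by positivity
  refine ⟨ε, ε0, ε1, v, g, mv, mg, wvg, heq, ?_, ?_, ?_, ?_⟩
  · have : ∫ x in K3, ‖g x‖ ≤ Q0/(θ' - θ) := by
      rw [le_div_iff₀ hd]; linarith
    linarith
  · linarith
  · linarith
  · have cl : ∫ x in K3, (‖AE f' (g x) - AE f' (G0 x)‖^2/(12*L) - (2 * L * ‖G x - G0 x‖ + ε/2 * ‖U x‖^2 + ε/2 * ‖G x‖^2)) ≤ 0 := by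
      have e3 : ∫ x in K3, (⟪AE f' (g x) + ε • g x - T x, g x - G x⟫ + ε * ⟪v x, v x - U x⟫ - ⟪AE f' (G0 x) - T x, g x - G x⟫) = 0 := by
        rw [integral_sub i1 i2, E1, E2, sub_zero]
      rw [← e3]
      refine integral_mono ((iAd.div_const _).sub (((iGd.const_mul _).add (iU2.const_mul _)).add (iG2.const_mul _))) (i1.sub i2) ?_
      intro x
      simp only
      have h1 := h.coco (G0 x) (g x)
      have h1' : ‖AE f' (g x) - AE f' (G0 x)‖^2/(12*L) ≤ ⟪AE f' (g x) - AE f' (G0 x), g x - G0 x⟫ := by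
        refine le_trans ?_ h1
        gcongr
        nlinarith [norm_nonneg (G0 x), sq_nonneg ‖AE f' (g x) - AE f' (G0 x)‖]
      have h4 := young_id (g x) (G x)
      have h5 := young_id (v x) (U x)
      have h8 := mul_le_mul_of_nonneg_left h4 ε0.le
      have h9 := mul_le_mul_of_nonneg_left h5 ε0.le
      have h6 : ⟪AE f' (g x) - AE f' (G0 x), G x - G0 x⟫ ≤ 2 * L * ‖G x - G0 x‖ := by
        refine (real_inner_le_norm _ _).trans ?_
        gcongr
        refine (norm_sub_le _ _).trans ?_
        linarith [h.norm_AE_le (g x), h.norm_AE_le (G0 x)]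
      have h10 : v x - U x = v x - U x := rfl
      have h0 := sq_nonneg ‖v x‖
      have h0' := sq_nonneg ‖g x‖
      have h11 : ⟪AE f' (g x) + ε • g x - T x, g x - G x⟫ + ε * ⟪v x, v x - U x⟫ - ⟪AE f' (G0 x) - T x, g x - G x⟫
        = ⟪AE f' (g x) - AE f' (G0 x), g x - G0 x⟫ - ⟪AE f' (g x) - AE f' (G0 x), G x - G0 x⟫
          + ε * ⟪g x, g x - G x⟫ + ε * ⟪v x, v x - U x⟫ := by
        simp only [inner_add_left, inner_sub_left, real_inner_smul_left, inner_sub_right]; ring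
      rw [h11]
      nlinarith
    have k1 : Integrable (fun x => ‖AE f' (g x) - AE f' (G0 x)‖^2/(12*L)) (volume.restrict K3) := iAd.div_const _
    have k2 : Integrable (fun x => 2 * L * ‖G x - G0 x‖) (volume.restrict K3) := iGd.const_mul _
    have k23 : Integrable (fun x => 2 * L * ‖G x - G0 x‖ + ε/2 * ‖U x‖^2) (volume.restrict K3) := k2.add j6
    have k234 : Integrable (fun x => 2 * L * ‖G x - G0 x‖ + ε/2 * ‖U x‖^2 + ε/2 * ‖G x‖^2) (volume.restrict K3) := k23.add j7
    rw [integral_sub k1 k234, integral_add k23 j7, integral_add k2 j6, integral_div] at cl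
    simp only [integral_const_mul] at cl
    have : (∫ x in K3, ‖AE f' (g x) - AE f' (G0 x)‖ ^ 2)/(12*L) ≤ (2 * L + 1) * δ := by
      have := mul_le_mul_of_nonneg_left sub3 (by positivity : 0 ≤ ε/2)
      nlinarith
    rw [div_le_iff₀ (by positivity)] at this
    have : 0 ≤ (Q0/(θ' - θ) + 2 * Q0) * δ := by positivity
    nlinarith

end P10

open MeasureTheory Filter Topology Set
open scoped ENNReal RealInnerProductSpace

section P11
variable {n N : ℕ} {f f' : ℝ → ℝ} {L : ℝ}

noncomputable def dq {E : Type*} [NormedAddCommGroup E] [NormedSpace ℝ E] (h : ℝ) (c : EVec n) (a : EVec n → E)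
    (x : EVec n) : E := h⁻¹ • (a (x + c) - a x)

theorem dq_memLp {E : Type*} [NormedAddCommGroup E] [NormedSpace ℝ E] {a : EVec n → E} (ha : MemLp a 2)
    (h : ℝ) (c : EVec n) : MemLp (dq h c a) 2 :=
  ((memLp_translate ha c).sub ha).const_smul h⁻¹

theorem dq_sbp {E : Type*} [NormedAddCommGroup E] [InnerProductSpace ℝ E] {a b : EVec n → E}
    (ha : MemLp a 2) (hb : MemLp b 2) (h : ℝ) (c : EVec n) :
    ∫ x, ⟪a x, dq h (-c) b x⟫ = ∫ x, ⟪dq h c a x, b x⟫ := by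
  simp only [dq, real_inner_smul_right, real_inner_smul_left, inner_sub_left, inner_sub_right, integral_const_mul]
  congr 1
  rw [integral_sub (int_inner ha (memLp_translate hb (-c))) (int_inner ha hb),
    integral_sub (int_inner (memLp_translate ha c) hb) (int_inner ha hb)]
  congr 1
  rw [← integral_add_right_eq_self (fun x => ⟪a x, b (x + -c)⟫) c]
  simp

theorem gr_sq {η : EVec n → ℝ} (hη : ContDiff ℝ 1 η) (x : EVec n) :
    gr (fun x => η x ^ 2) x = (2 * η x) • gr η x := by
  ext i
  have h1 : DifferentiableAt ℝ η x := hη.differentiable one_ne_zero x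
  simp only [gr_apply, PiLp.smul_apply, smul_eq_mul]
  rw [fderiv_fun_pow 2 h1]
  simp

theorem gr_zero_of_notMem {η : EVec n → ℝ} {x : EVec n} (hx : x ∉ tsupport η) : gr η x = 0 := by
  have h2 : fderiv ℝ η x = 0 := by
    by_contra h3
    exact hx (support_fderiv_subset ℝ h3)
  ext i; simp [h2]

/-- pointwise Caccioppoli inequality -/
theorem cacc_pt {E : Type*} [NormedAddCommGroup E] [InnerProductSpace ℝ E] {L ε η c0 V γ : ℝ} (hL : 0 < L) (hε : 0 < ε)
    (hη : 0 ≤ η) (hγ : 0 ≤ γ) (hc0 : 0 ≤ c0) (hV : 0 ≤ V) (dA dg t : E) (ht : ‖t‖ ≤ 2 * η * c0 * V)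
    (hco : (1 + γ) * ‖dA‖^2/(12*L) ≤ ⟪dA, dg⟫) :
    η^2 * ‖dA‖^2/(24*L) ≤ ⟪dA + ε • dg, η^2 • dg + t⟫ + c0^2 * (24*L*(V^2/(1+γ)) + ε * V^2) := by
  have e : ⟪dA + ε • dg, η^2 • dg + t⟫ = η^2 * ⟪dA, dg⟫ + ε * η^2 * ‖dg‖^2 + ⟪dA, t⟫ + ε * ⟪dg, t⟫ := by
    simp only [inner_add_left, inner_add_right, real_inner_smul_left, real_inner_smul_right, real_inner_self_eq_norm_sq]
    ring
  rw [e]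
  have h1 : -(‖dA‖ * (2 * η * c0 * V)) ≤ ⟪dA, t⟫ := by
    have := abs_real_inner_le_norm dA t
    have h2 := neg_abs_le ⟪dA, t⟫
    have h3 : ‖dA‖ * ‖t‖ ≤ ‖dA‖ * (2 * η * c0 * V) := by gcongr
    linarith
  have h2 : -(‖dg‖ * (2 * η * c0 * V)) ≤ ⟪dg, t⟫ := by
    have := abs_real_inner_le_norm dg t
    have h2 := neg_abs_le ⟪dg, t⟫
    have h3 : ‖dg‖ * ‖t‖ ≤ ‖dg‖ * (2 * η * c0 * V) := by gcongr
    linarith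
  have h3 := mul_le_mul_of_nonneg_left h2 hε.le
  have h4 := mul_le_mul_of_nonneg_left hco (sq_nonneg η)
  have h5 : 2 * η * c0 * V * ‖dA‖ ≤ η^2 * ((1+γ) * ‖dA‖^2/(24*L)) + c0^2 * (24*L*(V^2/(1+γ))) := by
    have hp : 0 < 1 + γ := by linarith
    have : η^2 * ((1+γ) * ‖dA‖^2/(24*L)) + c0^2 * (24*L*(V^2/(1+γ))) - 2 * η * c0 * V * ‖dA‖ =
      (1+γ)/(24*L) * (η * ‖dA‖ - 24*L/(1+γ) * c0 * V)^2 := by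
      field_simp; ring
    have : 0 ≤ (1+γ)/(24*L) * (η * ‖dA‖ - 24*L/(1+γ) * c0 * V)^2 := by positivity
    linarith
  have h6 : ε * (‖dg‖ * (2 * η * c0 * V)) ≤ ε * η^2 * ‖dg‖^2 + c0^2 * (ε * V^2) := by
    have : 0 ≤ ε * (η * ‖dg‖ - c0 * V)^2 := by positivity
    nlinarith
  have h7 : η^2 * ‖dA‖^2/(24*L) ≤ η^2 * ((1+γ) * ‖dA‖^2/(24*L)) := by
    rw [mul_div_assoc]
    gcongr
    nlinarith [sq_nonneg ‖dA‖]
  have h8 : η^2 * ((1+γ) * ‖dA‖^2/(12*L)) = 2 * (η^2 * ((1+γ) * ‖dA‖^2/(24*L))) := by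
    field_simp; ring
  nlinarith

theorem dv_bounds {γ ρ V ε : ℝ} (hγ : 0 ≤ γ) (hρ : 0 ≤ ρ) (hV : 0 ≤ V) (h : V ≤ γ + ρ) (hε : 0 < ε) (hε1 : ε ≤ 1) :
    V ≤ γ + 1 + ρ^2 ∧ V^2/(1+γ) ≤ 2*γ + 2*ρ^2 ∧ ε * V^2 ≤ 2 * (ε * γ^2) + 2*ρ^2 := by
  have h1 : V^2 ≤ 2*γ^2 + 2*ρ^2 := by nlinarith [sq_nonneg (γ - ρ)]
  refine ⟨by nlinarith [sq_nonneg (ρ - 1/2)], ?_, ?_⟩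
  · rw [div_le_iff₀ (by linarith)]
    nlinarith [mul_nonneg hγ (sq_nonneg ρ)]
  · nlinarith [mul_le_mul_of_nonneg_left h1 hε.le, sq_nonneg ρ]

set_option maxHeartbeats 1000000 in
theorem cacc (h : GoodF f f' L) {K3 : Set (EVec n)} (hK3 : IsCompact K3) {ε : ℝ} (hε : 0 < ε) (hε1 : ε ≤ 1)
    {v : EVec n → VV N} {g : EVec n → MM N n} (mv : MemLp v 2) (mg : MemLp g 2) (wvg : WG univ v g)
    {T : EVec n → MM N n} (mT : MemLp T 2) {D : EVec n → VV N} (mD : MemLp D 2)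
    (hTD : ∀ (ψ : EVec n → VV N) (Dψ : EVec n → MM N n), MemLp ψ 2 → MemLp Dψ 2 → WG univ ψ Dψ →
        ∫ x, ⟪T x, Dψ x⟫ = - ∫ x, ⟪D x, ψ x⟫)
    (heq : ∀ (ψ : EVec n → VV N) (Dψ : EVec n → MM N n), MemLp ψ 2 → MemLp Dψ 2 → WG univ ψ Dψ →
        (∀ᵐ x, x ∉ K3 → ψ x = 0 ∧ Dψ x = 0) →
        ∫ x, (⟪AE f' (g x) + ε • g x - T x, Dψ x⟫ + ε * ⟪v x, ψ x⟫) = 0)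
    {η : EVec n → ℝ} (hη : ContDiff ℝ 1 η) (hηc : HasCompactSupport η) (hη0 : ∀ x, 0 ≤ η x) (hη1 : ∀ x, η x ≤ 1)
    {c0 : ℝ} (hc0 : ∀ x, ‖gr η x‖ ≤ c0) {r : ℝ} (hr : 0 < r) (s : Fin n)
    (hηK : tsupport η ⊆ K3) (hηr : ∀ x ∈ tsupport η, ∀ t, 0 < t → t < r → x + t • ee n s ∈ K3)
    {CT : ℝ} (hCT0 : 0 ≤ CT) (hCT : ∀ x ∈ tsupport η, ∀ t, 0 < t → t < r → ‖D (x + t • ee n s) - D x‖ ≤ CT * t)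
    {Q : ℝ} (hQ1 : ∫ x in K3, ‖g x‖ ≤ Q) (hQ2 : ε * ∫ x in K3, ‖g x‖ ^ 2 ≤ Q) :
    ∀ᶠ t in 𝓝[>] (0:ℝ), ∫ x, η x ^ 2 * ‖dq t (t • ee n s) (fun x => AE f' (g x)) x‖ ^ 2 ≤
      24 * L * (CT * (Q + (volume.restrict K3).real univ + 1) + c0 ^ 2 * (24 * L * (2 * Q + 2) + (2 * Q + 2))) := by
  have hL := h.Lpos
  have two : (1:ℝ≥0∞) ≤ 2 := by norm_num
  have fK : IsFiniteMeasure (volume.restrict K3) := ⟨by simpa using hK3.measure_lt_top⟩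
  have c00 : 0 ≤ c0 := (norm_nonneg _).trans (hc0 0)
  have hlim := (L5v mv mg wvg s).eventually (gt_mem_nhds (zero_lt_one))
  filter_upwards [hlim, self_mem_nhdsWithin, (Ioo_mem_nhdsGT hr)] with t ht1 ht0 htr
  have ht0 : 0 < t := ht0
  have htr : t < r := htr.2
  set c := t • ee n s with hc
  have mA := AE_memLp h mg
  set A : EVec n → MM N n := fun x => AE f' (g x) with hA
  have mdA := dq_memLp mA t c
  have mdg := dq_memLp mg t c
  have mdv := dq_memLp mv t c
  have mdT := dq_memLp mT t c
  have mdD := dq_memLp mD t c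
  have wdv : WG univ (dq t c v) (dq t c g) :=
    ((wvg.translate c).sub wvg ((memLp_translate mv c).locallyIntegrable two) (mv.locallyIntegrable two)
      ((memLp_translate mg c).locallyIntegrable two) (mg.locallyIntegrable two)).smul t⁻¹
  have hη2 : ContDiff ℝ 1 (fun x => η x ^ 2) := hη.pow 2
  have ts2 : tsupport (fun x => η x ^ 2) ⊆ tsupport η := by
    refine closure_mono ?_
    intro x hx hx2
    apply hx; simp [hx2]
  have hη2c : HasCompactSupport (fun x => η x ^ 2) := hηc.of_isClosed_subset (isClosed_tsupport _) ts2
  let w : EVec n → VV N := fun x => η x ^ 2 • dq t c v x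
  let Dw : EVec n → MM N n := fun x => η x ^ 2 • dq t c g x + tens (dq t c v x) (gr (fun x => η x ^ 2) x)
  have ww : WG univ w Dw := wdv.mul (mdv.locallyIntegrable two) (mdg.locallyIntegrable two) hη2 hη2c (subset_univ _)
  have nt : ∀ x, ‖tens (dq t c v x) (gr (fun x => η x ^ 2) x)‖ ≤ 2 * η x * c0 * ‖dq t c v x‖ := by
    intro x
    rw [norm_tens, gr_sq hη, norm_smul, Real.norm_eq_abs, abs_of_nonneg (mul_nonneg zero_le_two (hη0 x)), mul_comm]
    have := hc0 x
    have := hη0 x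
    gcongr
  have η21 : ∀ x, η x ^ 2 ≤ 1 := fun x => pow_le_one₀ (hη0 x) (hη1 x)
  have mw : MemLp w 2 := by
    refine mdv.of_le (hη2.continuous.aestronglyMeasurable.smul mdv.1) (ae_of_all _ fun x => ?_)
    rw [norm_smul, Real.norm_eq_abs, abs_of_nonneg (sq_nonneg _)]
    exact mul_le_of_le_one_left (norm_nonneg _) (η21 x)
  have mDw : MemLp Dw 2 := by
    refine MemLp.add ?_ ?_
    · refine mdg.of_le (hη2.continuous.aestronglyMeasurable.smul mdg.1) (ae_of_all _ fun x => ?_)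
      rw [norm_smul, Real.norm_eq_abs, abs_of_nonneg (sq_nonneg _)]
      exact mul_le_of_le_one_left (norm_nonneg _) (η21 x)
    · refine mdv.of_le_mul (c := 2 * c0) (tens_cont.comp_aestronglyMeasurable (mdv.1.prodMk (continuous_gr hη2).aestronglyMeasurable))
        (ae_of_all _ fun x => ?_)
      refine (nt x).trans ?_
      refine mul_le_mul_of_nonneg_right ?_ (norm_nonneg _)
      have := mul_le_mul_of_nonneg_right (hη1 x) c00
      linarith
  have zw : ∀ x ∉ tsupport η, w x = 0 ∧ Dw x = 0 := by
    intro x hx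
    have h1 : η x = 0 := image_eq_zero_of_notMem_tsupport hx
    have h2 : gr (fun x => η x ^ 2) x = 0 := by rw [gr_sq hη, h1]; simp
    refine ⟨by simp [w, h1], ?_⟩
    simp only [Dw, h1, h2]
    ext p; simp
  let ψ : EVec n → VV N := dq t (-c) w
  let Dψ : EVec n → MM N n := dq t (-c) Dw
  have wψ : WG univ ψ Dψ :=
    ((ww.translate (-c)).sub ww ((memLp_translate mw (-c)).locallyIntegrable two) (mw.locallyIntegrable two)
      ((memLp_translate mDw (-c)).locallyIntegrable two) (mDw.locallyIntegrable two)).smul t⁻¹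
  have mψ : MemLp ψ 2 := dq_memLp mw t (-c)
  have mDψ : MemLp Dψ 2 := dq_memLp mDw t (-c)
  have zψ : ∀ x, x ∉ K3 → ψ x = 0 ∧ Dψ x = 0 := by
    intro x hx
    have h1 : x ∉ tsupport η := fun h => hx (hηK h)
    have h2 : x + -c ∉ tsupport η := fun h => hx (by have := hηr _ h t ht0 htr; rwa [← hc, neg_add_cancel_right] at this)
    simp [ψ, Dψ, dq, zw x h1, zw _ h2]
  have E1 := heq ψ Dψ mψ mDψ wψ (ae_of_all _ zψ)
  have mX : MemLp (fun x => A x + ε • g x) 2 := mA.add (mg.const_smul ε)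
  have E2 : (∫ x, ⟪dq t c (fun x => A x + ε • g x) x, Dw x⟫) + (∫ x, ⟪dq t c D x, w x⟫) + ε * ∫ x, ⟪dq t c v x, w x⟫ = 0 := by
    rw [← dq_sbp mX mDw, ← dq_sbp mD mw, ← dq_sbp mv mw]
    have h1 := hTD ψ Dψ mψ mDψ wψ
    have h2 : ∀ x, ⟪AE f' (g x) + ε • g x - T x, Dψ x⟫ + ε * ⟪v x, ψ x⟫ =
      ⟪A x + ε • g x, Dψ x⟫ - ⟪T x, Dψ x⟫ + ε * ⟪v x, ψ x⟫ := fun x => by rw [inner_sub_left]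
    simp only [h2] at E1
    have k1 := int_inner mX mDψ
    have k2 := int_inner mT mDψ
    have k3 := (int_inner mv mψ).const_mul ε
    have k12 : Integrable (fun x => ⟪A x + ε • g x, Dψ x⟫ - ⟪T x, Dψ x⟫) := k1.sub k2
    rw [integral_add k12 k3, integral_sub k1 k2, h1, integral_const_mul] at E1
    linarith
  have k1 := int_inner (dq_memLp mX t c) mDw
  have k2 := int_inner mdD mw
  have k3 := (int_inner mdv mw).const_mul ε
  have k12 : Integrable (fun x => ⟪dq t c (fun x => A x + ε • g x) x, Dw x⟫ + ⟪dq t c D x, w x⟫) := k1.add k2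
  have k123 : Integrable (fun x => ⟪dq t c (fun x => A x + ε • g x) x, Dw x⟫ + ⟪dq t c D x, w x⟫ + ε * ⟪dq t c v x, w x⟫) := k12.add k3
  have E3 : ∫ x, (⟪dq t c (fun x => A x + ε • g x) x, Dw x⟫ + ⟪dq t c D x, w x⟫ + ε * ⟪dq t c v x, w x⟫) = 0 := by
    rw [integral_add k12 k3, integral_add k1 k2, integral_const_mul]; exact E2
  let ρ : EVec n → VV N := fun x => dq t c v x - col s (g x)
  have mρ : MemLp ρ 2 := mdv.sub (col_memLp mg s)
  have hρ : ∫ x, ‖ρ x‖^2 < 1 := ht1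
  let R : EVec n → ℝ := fun x => CT * (‖g x‖ + 1 + ‖ρ x‖^2) + c0^2 * (24*L*(2*‖g x‖ + 2*‖ρ x‖^2) + (2 * (ε * ‖g x‖^2) + 2 * ‖ρ x‖^2))
  have ig1 : Integrable (fun x => ‖g x‖) (volume.restrict K3) := ((mg.restrict K3).integrable two).norm
  have ig2 : Integrable (fun x => ‖g x‖^2) (volume.restrict K3) := (int_nsq mg).restrict
  have iρ2 : Integrable (fun x => ‖ρ x‖^2) (volume.restrict K3) := (int_nsq mρ).restrict
  have a1 : Integrable (fun x => ‖g x‖ + 1 + ‖ρ x‖^2) (volume.restrict K3) := (ig1.add (integrable_const 1)).add iρ2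
  have a1' : Integrable (fun x => ‖g x‖ + 1) (volume.restrict K3) := (ig1.add (integrable_const 1))
  have b1 : Integrable (fun x => 2*‖g x‖) (volume.restrict K3) := ig1.const_mul 2
  have b2 : Integrable (fun x => 2*‖ρ x‖^2) (volume.restrict K3) := iρ2.const_mul 2
  have b3 : Integrable (fun x => 2*(ε * ‖g x‖^2)) (volume.restrict K3) := (ig2.const_mul ε).const_mul 2
  have a2 : Integrable (fun x => 2*‖g x‖ + 2*‖ρ x‖^2) (volume.restrict K3) := b1.add b2
  have a3 : Integrable (fun x => 2*(ε * ‖g x‖^2) + 2*‖ρ x‖^2) (volume.restrict K3) := b3.add b2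
  have a2' : Integrable (fun x => 24*L*(2*‖g x‖ + 2*‖ρ x‖^2)) (volume.restrict K3) := a2.const_mul _
  have a23 : Integrable (fun x => 24*L*(2*‖g x‖ + 2*‖ρ x‖^2) + (2*(ε * ‖g x‖^2) + 2*‖ρ x‖^2)) (volume.restrict K3) := a2'.add a3
  have iR : Integrable R (volume.restrict K3) := (a1.const_mul CT).add (a23.const_mul (c0^2))
  have iRi : Integrable (K3.indicator R) := IntegrableOn.integrable_indicator iR hK3.measurableSet
  have vR : ∫ x in K3, R x ≤ CT * (Q + (volume.restrict K3).real univ + 1) + c0 ^ 2 * (24 * L * (2 * Q + 2) + (2 * Q + 2)) := by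
    have hρ3 : ∫ x in K3, ‖ρ x‖^2 ≤ 1 :=
      (setIntegral_le_integral (int_nsq mρ) (ae_of_all _ fun x => by positivity)).trans hρ.le
    simp only [R]
    rw [integral_add (a1.const_mul CT) (a23.const_mul (c0^2)), integral_const_mul, integral_const_mul,
      integral_add a1' iρ2, integral_add ig1 (integrable_const 1), integral_add a2' a3, integral_const_mul,
      integral_add b1 b2, integral_add b3 b2, integral_const_mul, integral_const_mul, integral_const_mul, integral_const_mul,
      integral_const]
    simp only [smul_eq_mul, mul_one]
    gcongr <;> linarith
  have iLHS : Integrable (fun x => η x ^ 2 * ‖dq t c A x‖^2/(24*L)) := by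
    have h1 : MemLp (fun x => η x • dq t c A x) 2 := by
      refine mdA.of_le (hη.continuous.aestronglyMeasurable.smul mdA.1) (ae_of_all _ fun x => ?_)
      rw [norm_smul, Real.norm_eq_abs, abs_of_nonneg (hη0 x)]
      exact mul_le_of_le_one_left (norm_nonneg _) (hη1 x)
    refine ((int_nsq h1).div_const (24*L)).congr (ae_of_all _ fun x => ?_)
    simp only [norm_smul, mul_pow, Real.norm_eq_abs, sq_abs]
  have fin : ∫ x, η x ^ 2 * ‖dq t c A x‖^2/(24*L) ≤ ∫ x, ((⟪dq t c (fun x => A x + ε • g x) x, Dw x⟫ + ⟪dq t c D x, w x⟫ + ε * ⟪dq t c v x, w x⟫) + K3.indicator R x) := by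
    refine integral_mono iLHS (k123.add (iRi)) fun x => ?_
    simp only
    by_cases hx : x ∈ tsupport η
    · rw [indicator_of_mem (hηK hx)]
      have hco : (1 + ‖g x‖) * ‖dq t c A x‖^2/(12*L) ≤ ⟪dq t c A x, dq t c g x⟫ := by
        have h1 := h.coco (g x) (g (x + c))
        simp only [dq, norm_smul, real_inner_smul_left, real_inner_smul_right, hA, mul_pow, Real.norm_eq_abs, sq_abs]
        have h2 := mul_le_mul_of_nonneg_left h1 (sq_nonneg t⁻¹)
        calc _ = t⁻¹ ^ 2 * ((1 + ‖g x‖) * ‖AE f' (g (x + c)) - AE f' (g x)‖ ^ 2 / (12 * L)) := by ring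
          _ ≤ _ := h2
          _ = _ := by ring
      have h1 := cacc_pt hL hε (hη0 x) (norm_nonneg (g x)) c00 (norm_nonneg (dq t c v x)) _ _ _ (nt x) hco
      have e1 : dq t c (fun x => A x + ε • g x) x = dq t c A x + ε • dq t c g x := by
        simp only [dq]; module
      have h2 : ⟪dq t c D x, w x⟫ ≥ - (CT * ‖dq t c v x‖) := by
        simp only [w, real_inner_smul_right]
        have h3 : ‖dq t c D x‖ ≤ CT := by
          have := hCT x hx t ht0 htr
          rw [dq, norm_smul, Real.norm_eq_abs, abs_of_pos (inv_pos.2 ht0), inv_mul_le_iff₀ ht0, mul_comm]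
          exact this
        have h4 := abs_real_inner_le_norm (dq t c D x) (dq t c v x)
        have h5 := neg_abs_le ⟪dq t c D x, dq t c v x⟫
        have h6 : ‖dq t c D x‖ * ‖dq t c v x‖ ≤ CT * ‖dq t c v x‖ := by gcongr
        have h7 : 0 ≤ CT * ‖dq t c v x‖ := by positivity
        have h8 := η21 x
        have h9 := sq_nonneg (η x)
        nlinarith
      have h3 : 0 ≤ ε * ⟪dq t c v x, w x⟫ := by
        simp only [w, real_inner_smul_right, real_inner_self_eq_norm_sq]
        positivity
      have hV : ‖dq t c v x‖ ≤ ‖g x‖ + ‖ρ x‖ := by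
        have := norm_add_le (col s (g x)) (ρ x)
        have h4 := norm_col_le s (g x)
        simp only [ρ, add_sub_cancel] at this
        linarith
      obtain ⟨d1, d2, d3⟩ := dv_bounds (norm_nonneg (g x)) (norm_nonneg (ρ x)) (norm_nonneg _) hV hε hε1
      have d4 := mul_le_mul_of_nonneg_left d1 hCT0
      have d5 : c0^2 * (24*L*(‖dq t c v x‖^2/(1+‖g x‖)) + ε * ‖dq t c v x‖^2) ≤
        c0^2 * (24*L*(2*‖g x‖ + 2*‖ρ x‖^2) + (2 * (ε * ‖g x‖^2) + 2 * ‖ρ x‖^2)) := by gcongr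
      rw [e1]
      simp only [R, Dw]
      linarith
    · have h1 : η x = 0 := image_eq_zero_of_notMem_tsupport hx
      rw [(zw x hx).1, (zw x hx).2, h1]
      have : 0 ≤ K3.indicator R x := indicator_nonneg (fun x _ => by simp only [R]; positivity) x
      simpa using this
  rw [integral_add k123 (iRi), E3, integral_indicator hK3.measurableSet, zero_add,
    integral_div, div_le_iff₀ (by positivity)] at fin
  have := mul_le_mul_of_nonneg_right vR (by positivity : 0 ≤ 24 * L)
  linarith

end P11

open MeasureTheory Filter Topology Set
open scoped ENNReal RealInnerProductSpace

section P12
variable {n N : ℕ} {f f' : ℝ → ℝ} {L : ℝ}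

theorem bdA {A : EVec n → MM N n} (mA : MemLp A 2) {η : EVec n → ℝ} (hη : Continuous η)
    (hη0 : ∀ x, 0 ≤ η x) (hη1 : ∀ x, η x ≤ 1) {C : ℝ} (s : Fin n)
    (hev : ∀ᶠ t in 𝓝[>] (0:ℝ), ∫ x, η x ^ 2 * ‖dq t (t • ee n s) A x‖ ^ 2 ≤ C)
    {φ : EVec n → ℝ} (hφ : ContDiff ℝ 1 φ) (hc : HasCompactSupport φ) (h1 : ∀ x ∈ tsupport φ, η x = 1)
    (p : Fin N × Fin n) :
    |∫ x, A x p * fderiv ℝ φ x (ee n s)| ≤ √C * (eLpNorm φ 2 volume).toReal := by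
  have two : (1:ℝ≥0∞) ≤ 2 := by norm_num
  have lA := mA.locallyIntegrable two
  have mAp : MemLp (fun x => A x p) 2 := comp_memLp mA p
  have lAp : LocallyIntegrable (fun x => A x p) := mAp.locallyIntegrable two
  have mφ : MemLp φ 2 := hφ.continuous.memLp_of_hasCompactSupport hc
  have hd := L4 lAp hφ hc (ee n s) 0
  have hd2 := Tendsto.mono_left (y := 𝓝[>] (0:ℝ)) (hasDerivAt_iff_tendsto_slope_zero.1 hd) (nhdsWithin_mono 0 (fun x hx => ne_of_gt hx))
  simp only [zero_smul, sub_zero, mul_neg, zero_add, integral_neg] at hd2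
  rw [← abs_neg]
  refine le_of_tendsto hd2.abs ?_
  filter_upwards [hev, self_mem_nhdsWithin] with t ht ht0
  have md := dq_memLp mA t (t • ee n s)
  have mdp : MemLp (fun x => η x * dq t (t • ee n s) A x p) 2 := by
    refine md.of_le ?_ (ae_of_all _ fun x => ?_)
    · exact hη.aestronglyMeasurable.mul (comp_memLp md p).1
    · rw [norm_mul, Real.norm_eq_abs, abs_of_nonneg (hη0 x)]
      exact (mul_le_of_le_one_left (norm_nonneg _) (hη1 x)).trans (PiLp.norm_apply_le _ _)
  have e1 : t⁻¹ • ((∫ x, A x p * φ (x - t • ee n s)) - ∫ x, A x p * φ x) =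
      ∫ x, (η x * dq t (t • ee n s) A x p) * φ x := by
    rw [← int_shift (v := fun x => A x p) φ (t • ee n s), ← integral_sub, smul_eq_mul, ← integral_const_mul]
    · congr 1; ext x
      by_cases hx : x ∈ tsupport φ
      · rw [h1 x hx]; simp [dq]; ring
      · rw [image_eq_zero_of_notMem_tsupport hx]; simp
    · exact (memLp_translate mAp (t • ee n s)).integrable_mul mφ
    · exact mAp.integrable_mul mφ
  rw [e1]
  refine (l2_cs mdp mφ).trans ?_
  gcongr
  refine Real.le_sqrt_of_sq_le ?_
  rw [← l2_sq mdp]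
  refine le_trans ?_ ht
  have i2 : Integrable (fun x => η x ^ 2 * ‖dq t (t • ee n s) A x‖ ^ 2) := by
    refine (int_nsq md).mono' ((hη.pow 2).aestronglyMeasurable.mul (md.1.norm.pow 2)) (ae_of_all _ fun x => ?_)
    rw [Real.norm_eq_abs, abs_of_nonneg (by positivity)]
    exact mul_le_of_le_one_left (by positivity) (pow_le_one₀ (hη0 x) (hη1 x))
  refine integral_mono mdp.integrable_sq i2 fun x => ?_
  simp only [mul_pow]
  refine mul_le_mul_of_nonneg_left ?_ (sq_nonneg _)
  have := PiLp.norm_apply_le (dq t (t • ee n s) A x) p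
  rw [← sq_abs]
  gcongr
  exact this

theorem mainbd (h : GoodF f f' L) {K3 : Set (EVec n)} (hK3 : IsCompact K3)
    {U0 : EVec n → VV N} {G0 : EVec n → MM N n} (iU : Integrable U0) (iG : Integrable G0)
    (hU : HasCompactSupport U0) (hG : HasCompactSupport G0) (hw : WG univ U0 G0)
    {T : EVec n → MM N n} (mT : MemLp T 2) {θ θ' C0 : ℝ} (hθ0 : 0 ≤ θ)
    (hTθ : ∀ᵐ x, x ∈ K3 → ‖T x‖ ≤ θ) (hθ : θ < θ') (hC0 : 0 ≤ C0) (hco : ∀ t, 0 ≤ t → θ' * t - C0 ≤ f t)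
    (hEL : ∀ (ψ : EVec n → VV N) (Dψ : EVec n → MM N n), MemLp ψ 2 → MemLp Dψ 2 → WG univ ψ Dψ →
        (∀ᵐ x, x ∉ K3 → ψ x = 0 ∧ Dψ x = 0) → ∫ x, ⟪AE f' (G0 x) - T x, Dψ x⟫ = 0)
    {D : EVec n → VV N} (mD : MemLp D 2)
    (hTD : ∀ (ψ : EVec n → VV N) (Dψ : EVec n → MM N n), MemLp ψ 2 → MemLp Dψ 2 → WG univ ψ Dψ →
        ∫ x, ⟪T x, Dψ x⟫ = - ∫ x, ⟪D x, ψ x⟫)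
    {η : EVec n → ℝ} (hη : ContDiff ℝ 1 η) (hηc : HasCompactSupport η) (hη0 : ∀ x, 0 ≤ η x) (hη1 : ∀ x, η x ≤ 1)
    {r : ℝ} (hr : 0 < r) (s : Fin n)
    (hηK : tsupport η ⊆ K3) (hηr : ∀ x ∈ tsupport η, ∀ t, 0 < t → t < r → x + t • ee n s ∈ K3)
    {CT : ℝ} (hCT0 : 0 ≤ CT) (hCT : ∀ x ∈ tsupport η, ∀ t, 0 < t → t < r → ‖D (x + t • ee n s) - D x‖ ≤ CT * t) :
    ∃ B, ∀ φ : EVec n → ℝ, ContDiff ℝ 1 φ → HasCompactSupport φ → (∀ x ∈ tsupport φ, η x = 1) → ∀ p,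
      |∫ x, AE f' (G0 x) p * fderiv ℝ φ x (ee n s)| ≤ B * (eLpNorm φ 2 volume).toReal := by
  have fK : IsFiniteMeasure (volume.restrict K3) := ⟨by simpa using hK3.measure_lt_top⟩
  obtain ⟨Q, hQ, hap⟩ := approx h hK3 iU iG hU hG hw mT hθ0 hTθ hθ hC0 hco hEL
  have cgr : HasCompactSupport (gr η) := by
    refine HasCompactSupport.of_support_subset_isCompact hηc.isCompact fun x hx => ?_
    by_contra hh
    exact hx (gr_zero_of_notMem hh)
  obtain ⟨c0, hc0⟩ := (continuous_gr hη).bounded_above_of_compact_support cgr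
  refine ⟨√(24 * L * (CT * (Q + (volume.restrict K3).real univ + 1) + c0 ^ 2 * (24 * L * (2 * Q + 2) + (2 * Q + 2)))), ?_⟩
  intro φ hφ hc h1 p
  set C := 24 * L * (CT * (Q + (volume.restrict K3).real univ + 1) + c0 ^ 2 * (24 * L * (2 * Q + 2) + (2 * Q + 2)))
  have hdφ := contDiff_fd hφ (ee n s)
  have hdc : HasCompactSupport (fun x => fderiv ℝ φ x (ee n s)) := hc.fderiv_apply (𝕜 := ℝ) _
  have md : MemLp (fun x => fderiv ℝ φ x (ee n s)) 2 := hdφ.memLp_of_hasCompactSupport hdc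
  have φK : tsupport φ ⊆ K3 := fun x hx => hηK (subset_tsupport _ (by
    rw [Function.mem_support, h1 x hx]; exact one_ne_zero))
  have zd : ∀ x, x ∉ K3 → fderiv ℝ φ x (ee n s) = 0 := by
    intro x hx
    have : fderiv ℝ φ x = 0 := by
      by_contra h
      exact hx (φK (support_fderiv_subset ℝ h))
    rw [this]; rfl
  set M := (eLpNorm (fun x => fderiv ℝ φ x (ee n s)) 2 (volume.restrict K3)).toReal
  have mAG1 : Integrable (fun x => AE f' (G0 x)) := by
    rw [← memLp_one_iff_integrable] at iG ⊢
    exact (h.lip (E := MM N n)).comp_memLp AE_zero iG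
  have key : ∀ δ ∈ Ioc (0:ℝ) 1, |∫ x, AE f' (G0 x) p * fderiv ℝ φ x (ee n s)| ≤ √C * (eLpNorm φ 2 volume).toReal + √(Q * δ) * M := by
    intro δ hδ
    obtain ⟨ε, hε, hε1, v, g, mv, mg, wvg, heq, q1, q2, q3, q4⟩ := hap δ hδ.1 hδ.2
    have hca := cacc h hK3 hε hε1 mv mg wvg mT mD hTD heq hη hηc hη0 hη1 hc0 hr s hηK hηr hCT0 hCT q1 q2
    have mA := AE_memLp h mg
    have b1 := bdA mA hη.continuous hη0 hη1 s hca hφ hc h1 p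
    have two : (1:ℝ≥0∞) ≤ 2 := by norm_num
    have i1 := int_comp (mA.locallyIntegrable two) hdφ hdc p
    have i2 := int_comp (mAG1.locallyIntegrable) hdφ hdc p
    have mdiff : MemLp (fun x => AE f' (g x) - AE f' (G0 x)) 2 (volume.restrict K3) := by
      refine MemLp.sub (mA.restrict K3) (MemLp.of_bound mAG1.1.restrict L (ae_of_all _ fun x => h.norm_AE_le _))
    have mdp : MemLp (fun x => AE f' (g x) p - AE f' (G0 x) p) 2 (volume.restrict K3) := by
      have := (EuclideanSpace.proj (𝕜 := ℝ) p).comp_memLp' mdiff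
      exact this
    have e1 : (∫ x, AE f' (g x) p * fderiv ℝ φ x (ee n s)) - ∫ x, AE f' (G0 x) p * fderiv ℝ φ x (ee n s) =
        ∫ x in K3, (AE f' (g x) p - AE f' (G0 x) p) * fderiv ℝ φ x (ee n s) := by
      rw [← integral_sub i1 i2, setIntegral_eq_integral_of_ae_compl_eq_zero]
      · congr 1; ext x; ring
      · exact ae_of_all _ fun x hx => by rw [zd x hx, mul_zero]
    have b2 := l2_cs mdp (md.restrict K3)
    rw [← e1] at b2
    have b3 : (eLpNorm (fun x => AE f' (g x) p - AE f' (G0 x) p) 2 (volume.restrict K3)).toReal ≤ √(Q * δ) := by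
      refine Real.le_sqrt_of_sq_le ?_
      rw [← l2_sq mdp]
      refine le_trans (integral_mono mdp.integrable_sq (int_nsq mdiff) fun x => ?_) q4
      have := PiLp.norm_apply_le (AE f' (g x) - AE f' (G0 x)) p
      simp only
      rw [← sq_abs]
      gcongr
      exact this
    have M0 : 0 ≤ M := ENNReal.toReal_nonneg
    have b4 := mul_le_mul_of_nonneg_right b3 M0
    have b5 := abs_sub_abs_le_abs_sub (∫ x, AE f' (G0 x) p * fderiv ℝ φ x (ee n s)) (∫ x, AE f' (g x) p * fderiv ℝ φ x (ee n s))
    rw [abs_sub_comm] at b5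
    linarith
  have lim : Tendsto (fun δ : ℝ => √C * (eLpNorm φ 2 volume).toReal + √(Q * δ) * M) (𝓝[>] 0)
      (𝓝 (√C * (eLpNorm φ 2 volume).toReal + √(Q * 0) * M)) := by
    refine Tendsto.mono_left (Continuous.tendsto (by fun_prop) 0) nhdsWithin_le_nhds
  simp only [mul_zero, Real.sqrt_zero, zero_mul, add_zero] at lim
  refine ge_of_tendsto lim ?_
  filter_upwards [Ioc_mem_nhdsGT (zero_lt_one)] with δ hδ
  exact key δ hδ

end P12

open MeasureTheory Filter Topology Set
open scoped ENNReal RealInnerProductSpace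

section P13
variable {n N : ℕ} {f f' : ℝ → ℝ} {L : ℝ} {Ω : Set (EVec n)}

theorem cutoff {K : Set (EVec n)} (hK : IsCompact K) {δ : ℝ} (hδ : 0 < δ) :
    ∃ η : EVec n → ℝ, ContDiff ℝ 1 η ∧ HasCompactSupport η ∧ (∀ x, 0 ≤ η x) ∧ (∀ x, η x ≤ 1) ∧
      (∀ x ∈ K, ∀ᶠ y in 𝓝 x, η y = 1) ∧ tsupport η ⊆ Metric.cthickening δ K := by
  have h0 : K ⊆ interior (Metric.cthickening δ K) :=
    (Metric.self_subset_thickening hδ K).trans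
      (Metric.thickening_subset_interior_cthickening δ K)
  obtain ⟨η, h1, h2, h3⟩ := exists_contMDiffMap_one_nhds_of_subset_interior (n := 1) (modelWithCornersSelf ℝ (EVec n)) hK.isClosed h0
  have hs : tsupport η ⊆ Metric.cthickening δ K := by
    refine closure_minimal (fun x hx => ?_) Metric.isClosed_cthickening
    by_contra hh
    exact hx (h2 x hh)
  refine ⟨η, η.contMDiff.contDiff, ?_, fun x => (h3 x).1, fun x => (h3 x).2, ?_, hs⟩
  · exact (hK.cthickening).of_isClosed_subset (isClosed_tsupport _) hs
  · intro x hx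
    exact h1.filter_mono (nhds_le_nhdsSet hx)

/-- the compactly supported component of the datum -/
noncomputable def tau (ζ : EVec n → ℝ) (T₀ : EVec n → Fin N → Fin n → ℝ) (p : Fin N × Fin n) (x : EVec n) : ℝ :=
  ζ x * T₀ x p.1 p.2

theorem tau_ts (ζ : EVec n → ℝ) (T₀ : EVec n → Fin N → Fin n → ℝ) (p : Fin N × Fin n) :
    tsupport (tau ζ T₀ p) ⊆ tsupport ζ := closure_mono (fun y hy => fun h => hy (by simp [tau, h]))

theorem tau_contDiff (hO : IsOpen Ω) {T₀ : EVec n → Fin N → Fin n → ℝ}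
    {DT : EVec n → EVec n →L[ℝ] (Fin N → Fin n → ℝ)} (h2 : ∀ x ∈ Ω, HasFDerivWithinAt T₀ (DT x) Ω x)
    (h4 : ContinuousOn DT Ω) {ζ : EVec n → ℝ} (hζ : ContDiff ℝ 1 ζ) (hs : tsupport ζ ⊆ Ω) (p : Fin N × Fin n) :
    ContDiff ℝ 1 (tau ζ T₀ p) := by
  rw [contDiff_iff_contDiffAt]
  intro x
  by_cases hx : x ∈ tsupport (tau ζ T₀ p)
  swap
  · have : tau ζ T₀ p =ᶠ[𝓝 x] fun _ => 0 := notMem_tsupport_iff_eventuallyEq.1 hx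
    exact contDiffAt_const.congr_of_eventuallyEq this
  have hx' : x ∈ Ω := hs (tau_ts ζ T₀ p hx)
  have hT : ContDiffAt ℝ 1 T₀ x := by
    rw [contDiffAt_one_iff]
    exact ⟨DT, Ω, hO.mem_nhds hx', h4, fun y hy => (h2 y hy).hasFDerivAt (hO.mem_nhds hy)⟩
  have h5 : ContDiffAt ℝ 1 (fun y => T₀ y p.1 p.2) x :=
    contDiffAt_pi.1 (contDiffAt_pi.1 hT p.1) p.2
  exact hζ.contDiffAt.mul h5

noncomputable def divL (N n : ℕ) : (EVec n →L[ℝ] (Fin N → Fin n → ℝ)) →L[ℝ] VV N :=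
  LinearMap.toContinuousLinearMap
    { toFun := fun B => WithLp.toLp 2 (fun a => ∑ i, B (ee n i) a i)
      map_add' := fun x y => by ext p; simp [Finset.sum_add_distrib]
      map_smul' := fun c x => by ext p; simp [Finset.mul_sum] }

@[simp] theorem divL_apply (B : EVec n →L[ℝ] (Fin N → Fin n → ℝ)) (a : Fin N) :
    divL N n B a = ∑ i, B (ee n i) a i := rfl

theorem tau_fderiv (hO : IsOpen Ω) {T₀ : EVec n → Fin N → Fin n → ℝ}
    {DT : EVec n → EVec n →L[ℝ] (Fin N → Fin n → ℝ)} (h2 : ∀ x ∈ Ω, HasFDerivWithinAt T₀ (DT x) Ω x)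
    {ζ : EVec n → ℝ} {x : EVec n} (hx : x ∈ Ω) (h1 : ∀ᶠ y in 𝓝 x, ζ y = 1) (p : Fin N × Fin n) (e : EVec n) :
    fderiv ℝ (tau ζ T₀ p) x e = DT x e p.1 p.2 := by
  have h3 : tau ζ T₀ p =ᶠ[𝓝 x] fun y => T₀ y p.1 p.2 := by
    filter_upwards [h1] with y hy
    simp [tau, hy]
  rw [h3.fderiv_eq]
  have h4 := (h2 x hx).hasFDerivAt (hO.mem_nhds hx)
  have h5 := hasFDerivAt_pi'.1 (hasFDerivAt_pi'.1 h4 p.1) p.2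
  rw [h5.fderiv]
  rfl

noncomputable def TT (ζ : EVec n → ℝ) (T₀ : EVec n → Fin N → Fin n → ℝ) (x : EVec n) : MM N n :=
  WithLp.toLp 2 fun p => tau ζ T₀ p x

noncomputable def DD (ζ : EVec n → ℝ) (T₀ : EVec n → Fin N → Fin n → ℝ) (x : EVec n) : VV N :=
  WithLp.toLp 2 fun a => ∑ i, fderiv ℝ (tau ζ T₀ (a, i)) x (ee n i)

theorem tau_cs {T₀ : EVec n → Fin N → Fin n → ℝ} {ζ : EVec n → ℝ} (hc : HasCompactSupport ζ) (p : Fin N × Fin n) :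
    HasCompactSupport (tau ζ T₀ p) := HasCompactSupport.mul_right hc

theorem toLp_memLp {ι : Type*} [Fintype ι] {F : EVec n → ι → ℝ} (h1 : ∀ a, Continuous fun x => F x a)
    (h2 : ∀ a, HasCompactSupport fun x => F x a) :
    MemLp (fun x => (WithLp.toLp 2 (F x) : EuclideanSpace ℝ ι)) 2 := by
  refine MemLp.of_eval_piLp fun a => ?_
  exact (h1 a).memLp_of_hasCompactSupport (h2 a)

theorem TD {T₀ : EVec n → Fin N → Fin n → ℝ} {ζ : EVec n → ℝ} (hc : HasCompactSupport ζ)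
    (ht : ∀ p, ContDiff ℝ 1 (tau ζ T₀ p)) :
    MemLp (TT ζ T₀) 2 ∧ MemLp (DD ζ T₀) 2 ∧
    (∀ (ψ : EVec n → VV N) (Dψ : EVec n → MM N n), MemLp ψ 2 → MemLp Dψ 2 → WG univ ψ Dψ →
        ∫ x, ⟪TT ζ T₀ x, Dψ x⟫ = - ∫ x, ⟪DD ζ T₀ x, ψ x⟫) := by
  refine ⟨toLp_memLp (fun p => (ht p).continuous) (fun p => tau_cs hc p), toLp_memLp ?_ ?_, ?_⟩
  · intro a
    exact continuous_finsetSum _ fun i _ => contDiff_fd (ht (a,i)) (ee n i)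
  · intro a
    refine HasCompactSupport.of_support_subset_isCompact hc.isCompact fun x hx => ?_
    by_contra hh
    apply hx
    refine Finset.sum_eq_zero fun i _ => ?_
    have : fderiv ℝ (tau ζ T₀ (a,i)) x = 0 := by
      by_contra h
      exact hh (tau_ts ζ T₀ _ (support_fderiv_subset ℝ h))
    rw [this]; rfl
  · intro ψ Dψ mψ mD hw
    have two : (1:ℝ≥0∞) ≤ 2 := by norm_num
    have l1 := mψ.locallyIntegrable two
    have l2 := mD.locallyIntegrable two
    have e1 : ∀ x, ⟪TT ζ T₀ x, Dψ x⟫ = ∑ a, ∑ i, Dψ x (a,i) * tau ζ T₀ (a,i) x := by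
      intro x
      rw [PiLp.inner_apply, Fintype.sum_prod_type]; simp [TT]
    have e2 : ∀ x, ⟪DD ζ T₀ x, ψ x⟫ = ∑ a, ∑ i, ψ x a * fderiv ℝ (tau ζ T₀ (a, i)) x (ee n i) := by
      intro x
      rw [PiLp.inner_apply]; simp [DD, Finset.mul_sum]
    simp only [e1, e2]
    have i1 : ∀ a i, Integrable (fun x => Dψ x (a,i) * tau ζ T₀ (a,i) x) := fun a i =>
      int_comp l2 (ht _).continuous (tau_cs hc _) _
    have i2 : ∀ a i, Integrable (fun x => ψ x a * fderiv ℝ (tau ζ T₀ (a, i)) x (ee n i)) := fun a i =>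
      int_comp l1 (contDiff_fd (ht _) _) ((tau_cs hc _).fderiv_apply (𝕜 := ℝ) _) _
    rw [integral_finsetSum _ fun a _ => integrable_finsetSum _ fun i _ => i1 a i,
      integral_finsetSum _ fun a _ => integrable_finsetSum _ fun i _ => i2 a i, ← Finset.sum_neg_distrib]
    refine Finset.sum_congr rfl fun a _ => ?_
    rw [integral_finsetSum _ fun i _ => i1 a i, integral_finsetSum _ fun i _ => i2 a i, ← Finset.sum_neg_distrib]
    refine Finset.sum_congr rfl fun i _ => ?_
    have := hw _ (ht (a,i)) (tau_cs hc _) (subset_univ _) a i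
    linarith

theorem fd_zero {φ : EVec n → ℝ} {x : EVec n} (hx : x ∉ tsupport φ) (e : EVec n) : fderiv ℝ φ x e = 0 := by
  have : fderiv ℝ φ x = 0 := by
    by_contra h
    exact hx (support_fderiv_subset ℝ h)
  rw [this]; rfl

theorem set_int_eq {F : EVec n → ℝ} (h : ∀ x, x ∉ Ω → F x = 0) : ∫ x in Ω, F x = ∫ x, F x :=
  setIntegral_eq_integral_of_ae_compl_eq_zero (ae_of_all _ h)

theorem WG_to (hfin : volume Ω ≠ ∞) {ψ : EVec n → VV N} {Dψ : EVec n → MM N n} (mψ : MemLp ψ 2) (mD : MemLp Dψ 2)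
    (hw : WG univ ψ Dψ) : HasWeakDerivOn Ω (fun x => (ψ x).ofLp) (fun x => ofM N n (Dψ x)) := by
  have : IsFiniteMeasure (volume.restrict Ω) := ⟨by simpa using hfin.lt_top⟩
  have two : (1:ℝ≥0∞) ≤ 2 := by norm_num
  refine ⟨?_, (ofM N n).integrable_comp ((mD.restrict Ω).integrable two), ?_⟩
  · exact (PiLp.continuousLinearEquiv 2 ℝ (fun _ : Fin N => ℝ)).toContinuousLinearMap.integrable_comp ((mψ.restrict Ω).integrable two)
  · intro φ hφ hc hs a i
    have e := hw φ hφ hc (subset_univ _) a i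
    rw [set_int_eq, set_int_eq]
    · exact e
    · intro x hx
      rw [image_eq_zero_of_notMem_tsupport (fun h => hx (hs h)), mul_zero]
    · intro x hx
      rw [fd_zero (fun h => hx (hs h)), mul_zero]

theorem WG_of (hO : IsOpen Ω) {u : EVec n → Fin N → ℝ} {Du : EVec n → Fin N → Fin n → ℝ}
    (hu : HasWeakDerivOn Ω u Du) :
    Integrable (Ω.indicator fun x => (WithLp.toLp 2 (u x) : VV N)) ∧ Integrable (Ω.indicator fun x => toM N n (Du x)) ∧
    WG Ω (Ω.indicator fun x => (WithLp.toLp 2 (u x) : VV N)) (Ω.indicator fun x => toM N n (Du x)) := by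
  refine ⟨IntegrableOn.integrable_indicator ?_ hO.measurableSet, IntegrableOn.integrable_indicator ?_ hO.measurableSet, ?_⟩
  · exact (PiLp.continuousLinearEquiv 2 ℝ (fun _ : Fin N => ℝ)).symm.toContinuousLinearMap.integrable_comp hu.1
  · exact (toM N n).integrable_comp hu.2.1
  · intro φ hφ hc hs a i
    have e := hu.2.2 φ hφ hc hs a i
    rw [← set_int_eq (Ω := Ω), ← set_int_eq (Ω := Ω)]
    · rw [setIntegral_congr_fun hO.measurableSet (g := fun x => u x a * fderiv ℝ φ x (EuclideanSpace.single i 1)), e,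
        setIntegral_congr_fun hO.measurableSet]
      · intro x hx; simp [indicator_of_mem hx]
      · intro x hx; simp [indicator_of_mem hx]
    · intro x hx; simp [indicator_of_notMem hx]
    · intro x hx; simp [indicator_of_notMem hx]

end P13

open MeasureTheory Filter Topology Set
open scoped ENNReal RealInnerProductSpace

section P14
variable {n N : ℕ} {f f' : ℝ → ℝ} {L : ℝ} {Ω : Set (EVec n)}

theorem theta {T₀ : EVec n → Fin N → Fin n → ℝ} {finf : ℝ} (h : linfNormOn Ω T₀ < ENNReal.ofReal finf) :
    ∃ θ, 0 ≤ θ ∧ θ < finf ∧ ∀ᵐ x ∂(volume.restrict Ω), ‖toM N n (T₀ x)‖ ≤ θ := by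
  refine ⟨(linfNormOn Ω T₀).toReal, ENNReal.toReal_nonneg, ?_, ?_⟩
  · rwa [← ENNReal.lt_ofReal_iff_toReal_lt (ne_top_of_lt h)]
  · filter_upwards [ENNReal.ae_le_essSup (μ := volume.restrict Ω) fun x => ENNReal.ofReal (mnorm (T₀ x))] with x hx
    rw [← mnorm_eq]
    exact (ENNReal.ofReal_le_iff_le_toReal (ne_top_of_lt h)).1 hx

set_option maxHeartbeats 1000000 in
theorem appl (h : GoodF f f' L) (hO : IsOpen Ω) (hfin : volume Ω ≠ ∞)
    {finf : ℝ} (hfinf : Filter.Tendsto (fun t => f t / t) Filter.atTop (nhds finf))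
    {T₀ : EVec n → Fin N → Fin n → ℝ} (hT : MemW2inf Ω T₀) (hTsmall : linfNormOn Ω T₀ < ENNReal.ofReal finf)
    {u : EVec n → Fin N → ℝ} {Du : EVec n → Fin N → Fin n → ℝ}
    (hu : HasWeakDerivOn Ω u Du)
    (hmin : ∀ (w : EVec n → Fin N → ℝ) (Dw : EVec n → Fin N → Fin n → ℝ),
      HasWeakDerivOn Ω w Dw →
        FFgen Ω (fun z => f (mnorm z)) T₀ Du ≤ FFgen Ω (fun z => f (mnorm z)) T₀ Dw)
    {K : Set (EVec n)} (hK : IsCompact K) (hKO : K ⊆ Ω) (s : Fin n) (p : Fin N × Fin n) :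
    ∃ B, ∀ φ : EVec n → ℝ, ContDiff ℝ 1 φ → HasCompactSupport φ → tsupport φ ⊆ K →
      |∫ x in Ω, (Amap f' (Du x) - T₀ x) p.1 p.2 * fderiv ℝ φ x (ee n s)| ≤ B * (eLpNorm φ 2 volume).toReal := by
  obtain ⟨hTm, CT0, hTb⟩ := T_meas hO hT
  obtain ⟨C, DT, -, h2, -, h4⟩ := hT
  obtain ⟨θ, hθ0, hθf, hTθ⟩ := theta hTsmall
  obtain ⟨C0, hC0, hco⟩ := f_coercive h hfinf (θ := (θ + finf)/2) (by linarith) (by linarith)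
  obtain ⟨R, hR, hRO⟩ := hK.exists_cthickening_subset_open hO hKO
  set r := R / 3 with hr
  have r0 : 0 < r := by positivity
  set K3 := Metric.cthickening (2 * r) K with hK3d
  have hK3 : IsCompact K3 := hK.cthickening
  have KK3 : K ⊆ K3 := Metric.self_subset_cthickening K
  have K3Ω : K3 ⊆ Ω := (Metric.cthickening_mono (by linarith) K).trans hRO
  obtain ⟨η, hη, hηc, hη0, hη1, hη2, hηK⟩ := cutoff hK r0
  obtain ⟨ζ, hζ, hζc, hζ0, hζ1, hζ2, hζK⟩ := cutoff hK3 r0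
  have hζΩ : tsupport ζ ⊆ Ω := by
    refine hζK.trans (((Metric.cthickening_cthickening_subset r0.le (by linarith) K).trans ?_).trans hRO)
    exact Metric.cthickening_mono (by linarith) K
  obtain ⟨iu, iDu, wu⟩ := WG_of hO hu
  set uE := Ω.indicator fun x => (WithLp.toLp 2 (u x) : VV N) with huE
  set DE := Ω.indicator fun x => toM N n (Du x) with hDE
  have wU := wu.mul iu.locallyIntegrable iDu.locallyIntegrable hζ hζc hζΩ
  have ht : ∀ q, ContDiff ℝ 1 (tau ζ T₀ q) := fun q => tau_contDiff hO h2 h4.continuousOn hζ hζΩ q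
  obtain ⟨mT, mD, hTD⟩ := TD hζc ht
  have iU : Integrable (fun x => ζ x • uE x) :=
    iu.locallyIntegrable.integrable_smul_left_of_hasCompactSupport hζ.continuous hζc
  have cgr : HasCompactSupport (gr ζ) := by
    refine HasCompactSupport.of_support_subset_isCompact hζc.isCompact fun x hx => ?_
    by_contra hh
    exact hx (gr_zero_of_notMem hh)
  obtain ⟨c0, hc0⟩ := (continuous_gr hζ).bounded_above_of_compact_support cgr
  set G0 : EVec n → MM N n := fun x => ζ x • DE x + tens (uE x) (gr ζ x) with hG0
  have iG : Integrable G0 := by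
    refine Integrable.add (iDu.locallyIntegrable.integrable_smul_left_of_hasCompactSupport hζ.continuous hζc) ?_
    refine (iu.norm.mul_const c0).mono' (tens_cont.comp_aestronglyMeasurable (iu.1.prodMk (continuous_gr hζ).aestronglyMeasurable)) (ae_of_all _ fun x => ?_)
    rw [norm_tens]
    exact mul_le_mul_of_nonneg_left (hc0 x) (norm_nonneg _)
  have cU : HasCompactSupport (fun x => ζ x • uE x) := hζc.smul_right
  have cG : HasCompactSupport G0 := by
    refine HasCompactSupport.of_support_subset_isCompact hζc.isCompact fun x hx => ?_
    by_contra hh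
    apply hx
    simp only [hG0]
    rw [gr_zero_of_notMem hh, image_eq_zero_of_notMem_tsupport hh]
    ext q; simp
  have GK : ∀ x ∈ K3, G0 x = toM N n (Du x) := by
    intro x hx
    have e1 : gr ζ x = 0 := by
      have : fderiv ℝ ζ x = 0 := by
        have h3 : ζ =ᶠ[𝓝 x] fun _ => 1 := hζ2 x hx
        rw [h3.fderiv_eq]; simp
      ext i; rw [gr_apply, this]; rfl
    simp only [hG0]
    rw [e1, (hζ2 x hx).self_of_nhds, hDE, indicator_of_mem (K3Ω hx)]
    ext q; simp
  have TK : ∀ x ∈ K3, TT ζ T₀ x = toM N n (T₀ x) := by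
    intro x hx
    ext q
    simp [TT, tau, (hζ2 x hx).self_of_nhds]
  have hTθ' : ∀ᵐ x, x ∈ K3 → ‖TT ζ T₀ x‖ ≤ θ := by
    filter_upwards [(ae_restrict_iff' hO.measurableSet).1 hTθ] with x hx hx3
    rw [TK x hx3]
    exact hx (K3Ω hx3)
  have hEL : ∀ (ψ : EVec n → VV N) (Dψ : EVec n → MM N n), MemLp ψ 2 → MemLp Dψ 2 → WG univ ψ Dψ →
        (∀ᵐ x, x ∉ K3 → ψ x = 0 ∧ Dψ x = 0) → ∫ x, ⟪AE f' (G0 x) - TT ζ T₀ x, Dψ x⟫ = 0 := by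
    intro ψ Dψ mψ mDψ hw hz
    have e := EL h hfin hTm (hTθ) hu hmin (WG_to hfin mψ mDψ hw)
    simp only [toM_ofM] at e
    rw [← e]
    rw [← setIntegral_eq_integral_of_ae_compl_eq_zero (s := Ω)]
    · refine integral_congr_ae (ae_restrict_of_ae ?_)
      filter_upwards [hz] with x hx
      by_cases h3 : x ∈ K3
      · rw [GK x h3, TK x h3]
      · rw [(hx h3).2]; simp
    · filter_upwards [hz] with x hx hxO
      rw [(hx (fun h => hxO (K3Ω h))).2]; simp
  have sh : ∀ x ∈ tsupport η, ∀ t, 0 < t → t < r → x + t • ee n s ∈ K3 := by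
    intro x hx t ht0 htr
    have h5 : x + t • ee n s ∈ Metric.cthickening r (Metric.cthickening r K) := by
      refine Metric.mem_cthickening_of_dist_le _ x _ _ (hηK hx) ?_
      rw [dist_eq_norm, add_sub_cancel_left, norm_smul, Real.norm_eq_abs, abs_of_pos ht0]
      simp; exact htr.le
    have h6 := Metric.cthickening_cthickening_subset r0.le r0.le K h5
    rw [hK3d, two_mul]; exact h6
  have ηK3 : tsupport η ⊆ K3 := hηK.trans (Metric.cthickening_mono (by linarith) K)
  have DK : ∀ x ∈ K3, DD ζ T₀ x = divL N n (DT x) := by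
    intro x hx
    ext a
    simp only [DD, divL_apply]
    exact Finset.sum_congr rfl fun i _ => tau_fderiv hO h2 (K3Ω hx) (hζ2 x hx) (a, i) (ee n i)
  have hCT : ∀ x ∈ tsupport η, ∀ t, 0 < t → t < r → ‖DD ζ T₀ (x + t • ee n s) - DD ζ T₀ x‖ ≤ (‖divL N n‖ * C) * t := by
    intro x hx t ht0 htr
    have k1 := sh x hx t ht0 htr
    have k2 := ηK3 hx
    rw [DK _ k1, DK _ k2, ← map_sub]
    refine ((divL N n).le_opNorm _).trans ?_
    rw [mul_assoc]
    refine mul_le_mul_of_nonneg_left ?_ (norm_nonneg _)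
    have := h4.norm_sub_le (K3Ω k1) (K3Ω k2)
    rw [add_sub_cancel_left, norm_smul, Real.norm_eq_abs, abs_of_pos ht0] at this
    simpa using this
  obtain ⟨B, hB⟩ := mainbd h hK3 iU iG cU cG wU mT hθ0 hTθ' (by linarith) hC0 hco hEL mD hTD hη hηc hη0 hη1 r0 s
    ηK3 sh (by positivity) hCT
  have mAG1 : Integrable (fun x => AE f' (G0 x)) := by
    rw [← memLp_one_iff_integrable] at iG ⊢
    exact (h.lip (E := MM N n)).comp_memLp AE_zero iG
  have tdc : HasCompactSupport (fun x => fderiv ℝ (tau ζ T₀ p) x (ee n s)) := (tau_cs hζc p).fderiv_apply (𝕜 := ℝ) _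
  have mtd : MemLp (fun x => fderiv ℝ (tau ζ T₀ p) x (ee n s)) 2 := (contDiff_fd (ht p) _).memLp_of_hasCompactSupport tdc
  refine ⟨B + (eLpNorm (fun x => fderiv ℝ (tau ζ T₀ p) x (ee n s)) 2 volume).toReal, ?_⟩
  intro φ hφ hc hs
  have b1 := hB φ hφ hc (fun x hx => (hη2 x (hs hx)).self_of_nhds) p
  have hdφ := contDiff_fd hφ (ee n s)
  have hdc : HasCompactSupport (fun x => fderiv ℝ φ x (ee n s)) := hc.fderiv_apply (𝕜 := ℝ) _
  have mφ : MemLp φ 2 := hφ.continuous.memLp_of_hasCompactSupport hc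
  have i1 := int_comp mAG1.locallyIntegrable hdφ hdc p
  have i2 : Integrable (fun x => tau ζ T₀ p x * fderiv ℝ φ x (ee n s)) :=
    ((ht p).continuous.mul hdφ).integrable_of_hasCompactSupport hdc.mul_left
  have e1 : ∫ x in Ω, (Amap f' (Du x) - T₀ x) p.1 p.2 * fderiv ℝ φ x (ee n s) =
      (∫ x, AE f' (G0 x) p * fderiv ℝ φ x (ee n s)) - ∫ x, tau ζ T₀ p x * fderiv ℝ φ x (ee n s) := by
    rw [← integral_sub i1 i2, set_int_eq]
    · congr 1; ext x
      by_cases hx : x ∈ tsupport φ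
      · have h3 := KK3 (hs hx)
        rw [GK x h3, ← toM_Amap, toM_apply]
        simp only [tau, (hζ2 x h3).self_of_nhds, Pi.sub_apply]
        ring
      · simp [fd_zero hx]
    · intro x hx
      rw [fd_zero (fun h => hx (hKO (hs h))), mul_zero]
  have e2 : ∫ x, tau ζ T₀ p x * fderiv ℝ φ x (ee n s) = - ∫ x, fderiv ℝ (tau ζ T₀ p) x (ee n s) * φ x := by
    refine integral_mul_fderiv_eq_neg_fderiv_mul_of_integrable ?_ i2 ?_ (fun x _ => (ht p).differentiable one_ne_zero x) (fun x _ => hφ.differentiable one_ne_zero x)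
    · exact ((contDiff_fd (ht p) _).mul hφ.continuous).integrable_of_hasCompactSupport hc.mul_left
    · exact ((ht p).continuous.mul hφ.continuous).integrable_of_hasCompactSupport hc.mul_left
  have b2 := l2_cs mtd mφ
  rw [e1, e2, sub_neg_eq_add, add_mul]
  exact (abs_add_le _ _).trans (add_le_add b1 b2)

end P14

open MeasureTheory Filter Topology Set
open scoped ENNReal RealInnerProductSpace

section P15
variable {n N : ℕ} {Ω : Set (EVec n)}

theorem L9 {M H : Type*} [AddCommGroup M] [Module ℝ M] [NormedAddCommGroup H] [InnerProductSpace ℝ H] [CompleteSpace H]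
    (ι : M →ₗ[ℝ] H) (ℓ : M →ₗ[ℝ] ℝ) {C : ℝ} (h : ∀ m, |ℓ m| ≤ C * ‖ι m‖) : ∃ d : H, ∀ m, ℓ m = ⟪d, ι m⟫ := by
  obtain ⟨κ, hκ⟩ := ι.rangeRestrict.exists_rightInverse_of_surjective ι.range_rangeRestrict
  have hκ' : ∀ y, ι (κ y) = y := fun y => by
    have := congrArg (fun g => ((g y : LinearMap.range ι) : H)) hκ
    simpa using this
  let g : LinearMap.range ι →L[ℝ] ℝ := (ℓ.comp κ).mkContinuous C fun y => by
    have := h (κ y)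
    rw [hκ'] at this
    exact this
  obtain ⟨G, hG, -⟩ := exists_extension_norm_eq (LinearMap.range ι) g
  refine ⟨(InnerProductSpace.toDual ℝ H).symm G, fun m => ?_⟩
  rw [InnerProductSpace.toDual_symm_apply]
  have e1 := hG ⟨ι m, LinearMap.mem_range_self ι m⟩
  simp only at e1
  rw [e1]
  simp only [g, LinearMap.mkContinuous_apply, LinearMap.comp_apply]
  have h2 := h (m - κ ⟨ι m, LinearMap.mem_range_self ι m⟩)
  rw [map_sub, map_sub, hκ', sub_self, norm_zero, mul_zero] at h2
  exact sub_eq_zero.1 (abs_nonpos_iff.1 h2)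

def testM (K : Set (EVec n)) : Submodule ℝ (EVec n → ℝ) where
  carrier := {φ | ContDiff ℝ 1 φ ∧ HasCompactSupport φ ∧ tsupport φ ⊆ K}
  add_mem' := fun ha hb => ⟨ha.1.add hb.1, ha.2.1.add hb.2.1, (tsupport_add _ _).trans (union_subset ha.2.2 hb.2.2)⟩
  zero_mem' := ⟨contDiff_const, HasCompactSupport.zero, by simp⟩
  smul_mem' := fun c φ h => ⟨contDiff_const.smul h.1, h.2.1.smul_left (f := fun _ => c), (tsupport_smul_subset_right (fun _ => c) _).trans h.2.2⟩

theorem testM_memLp {K : Set (EVec n)} (φ : testM K) : MemLp (φ : EVec n → ℝ) 2 :=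
  φ.2.1.continuous.memLp_of_hasCompactSupport φ.2.2.1

theorem reprL2 {σ : EVec n → ℝ} (hσ : IntegrableOn σ Ω) (s : Fin n) {K : Set (EVec n)} {B : ℝ}
    (hB : ∀ φ : EVec n → ℝ, ContDiff ℝ 1 φ → HasCompactSupport φ → tsupport φ ⊆ K →
      |∫ x in Ω, σ x * fderiv ℝ φ x (ee n s)| ≤ B * (eLpNorm φ 2 volume).toReal) :
    ∃ d : EVec n → ℝ, MemLp d 2 ∧ ∀ φ : EVec n → ℝ, ContDiff ℝ 1 φ → HasCompactSupport φ → tsupport φ ⊆ K →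
      ∫ x in Ω, σ x * fderiv ℝ φ x (ee n s) = - ∫ x, d x * φ x := by
  have hint : ∀ φ : testM K, Integrable (fun x => σ x * fderiv ℝ φ x (ee n s)) (volume.restrict Ω) := by
    intro φ
    have hd := contDiff_fd φ.2.1 (ee n s)
    obtain ⟨C, hC⟩ := hd.bounded_above_of_compact_support (φ.2.2.1.fderiv_apply (𝕜 := ℝ) _)
    exact Integrable.mul_bdd (c := C) hσ hd.aestronglyMeasurable (ae_of_all _ hC)
  let ι : testM K →ₗ[ℝ] Lp ℝ 2 (volume : Measure (EVec n)) :=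
    { toFun := fun φ => (testM_memLp φ).toLp
      map_add' := fun a b => rfl
      map_smul' := fun a b => rfl }
  let ℓ : testM K →ₗ[ℝ] ℝ :=
    { toFun := fun φ => ∫ x in Ω, σ x * fderiv ℝ φ x (ee n s)
      map_add' := fun a b => by
        rw [← integral_add (hint a) (hint b)]
        congr 1; ext x
        rw [Submodule.coe_add, fderiv_add (a.2.1.differentiable one_ne_zero x) (b.2.1.differentiable one_ne_zero x)]
        simp [mul_add]
      map_smul' := fun c a => by
        simp only [RingHom.id_apply, smul_eq_mul]
        rw [← integral_const_mul]
        congr 1; ext x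
        rw [Submodule.coe_smul, fderiv_const_smul (a.2.1.differentiable one_ne_zero x)]
        simp; ring }
  obtain ⟨d, hd⟩ := L9 ι ℓ (C := B) (fun φ => by
    have := hB φ φ.2.1 φ.2.2.1 φ.2.2.2
    have e : ‖ι φ‖ = (eLpNorm (φ : EVec n → ℝ) 2 volume).toReal := Lp.norm_toLp _ (testM_memLp φ)
    rw [e]
    exact this)
  refine ⟨fun x => -d x, (Lp.memLp d).neg, fun φ h1 h2 h3 => ?_⟩
  have := hd ⟨φ, h1, h2, h3⟩
  rw [L2.inner_def] at this
  change ∫ x in Ω, σ x * fderiv ℝ φ x (ee n s) =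
    ∫ x, ⟪d x, ((testM_memLp (⟨φ, h1, h2, h3⟩ : testM K)).toLp : EVec n → ℝ) x⟫ at this
  rw [this, ← integral_neg]
  refine integral_congr_ae ?_
  filter_upwards [(testM_memLp (⟨φ, h1, h2, h3⟩ : testM K)).coeFn_toLp] with x hx
  rw [hx]
  simp [mul_comm]

theorem exhaust (hO : IsOpen Ω) : ∃ V K : ℕ → Set (EVec n), (∀ j, IsOpen (V j)) ∧ (∀ j, V j ⊆ K j) ∧
    (∀ j, IsCompact (K j)) ∧ (∀ j, K j ⊆ Ω) ∧ Monotone V ∧ Ω ⊆ ⋃ j, V j := by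
  have : LocallyCompactSpace Ω := hO.locallyCompactSpace
  let E : CompactExhaustion Ω := CompactExhaustion.choice Ω
  refine ⟨fun j => Subtype.val '' interior (E j), fun j => Subtype.val '' (E j), ?_, ?_, ?_, ?_, ?_, ?_⟩
  · exact fun j => hO.isOpenMap_subtype_val _ isOpen_interior
  · exact fun j => image_mono interior_subset
  · exact fun j => (E.isCompact j).image continuous_subtype_val
  · rintro j _ ⟨x, -, rfl⟩; exact x.2
  · exact fun i j hij => image_mono (interior_mono (E.subset hij))
  · intro x hx
    have h1 : (⟨x, hx⟩ : Ω) ∈ ⋃ j, E j := by rw [E.iUnion_eq]; trivial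
    obtain ⟨j, hj⟩ := mem_iUnion.1 h1
    exact mem_iUnion.2 ⟨j + 1, ⟨x, hx⟩, E.subset_interior_succ j hj, rfl⟩

theorem glue (hO : IsOpen Ω) (ℓ : (EVec n → ℝ) → ℝ)
    (h : ∀ K : Set (EVec n), IsCompact K → K ⊆ Ω → ∃ d : EVec n → ℝ, MemLp d 2 ∧
      ∀ φ : EVec n → ℝ, ContDiff ℝ 1 φ → HasCompactSupport φ → tsupport φ ⊆ K → ℓ φ = - ∫ x, d x * φ x) :
    ∃ D : EVec n → ℝ, (∀ K : Set (EVec n), IsCompact K → K ⊆ Ω → MemLp D 2 (volume.restrict K)) ∧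
      ∀ φ : EVec n → ℝ, ContDiff ℝ 1 φ → HasCompactSupport φ → tsupport φ ⊆ Ω → ℓ φ = - ∫ x in Ω, D x * φ x := by
  classical
  have two : (1:ℝ≥0∞) ≤ 2 := by norm_num
  obtain ⟨V, K, hV, hVK, hK, hKO, mono, cov⟩ := exhaust hO
  choose d md hd using fun j => h (K j) (hK j) (hKO j)
  have uniq : ∀ i j, i ≤ j → ∀ᵐ x, x ∈ V i → d i x = d j x := by
    intro i j hij
    have := (hV i).ae_eq_zero_of_integral_contDiff_smul_eq_zero (μ := volume) (f := fun x => d i x - d j x)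
      ((((md i).sub (md j)).locallyIntegrable two) |>.locallyIntegrableOn (V i)) (by
        intro g hg hgc hgs
        have hg1 : ContDiff ℝ 1 g := hg.of_le (by exact_mod_cast le_top)
        have mg : MemLp g 2 := hg1.continuous.memLp_of_hasCompactSupport hgc
        have e1 := hd i g hg1 hgc (hgs.trans (hVK i))
        have e2 := hd j g hg1 hgc ((hgs.trans (mono hij)).trans (hVK j))
        have i1 : Integrable (fun x => d i x * g x) := (md i).integrable_mul mg
        have i2 : Integrable (fun x => d j x * g x) := (md j).integrable_mul mg
        have e3 : ∫ x, g x • (d i x - d j x) = (∫ x, d i x * g x) - ∫ x, d j x * g x := by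
          rw [← integral_sub i1 i2]; congr 1; ext x; rw [smul_eq_mul]; ring
        rw [e3]; linarith)
    filter_upwards [this] with x hx hxV
    have := hx hxV
    linarith
  let D : EVec n → ℝ := fun x => if hx : ∃ j, x ∈ V j then d (Nat.find hx) x else 0
  have DJ : ∀ J, ∀ᵐ x, x ∈ V J → D x = d J x := by
    intro J
    have : ∀ᵐ x, ∀ i, i ≤ J → x ∈ V i → d i x = d J x := by
      rw [ae_all_iff]; intro i
      by_cases hi : i ≤ J
      · filter_upwards [uniq i J hi] with x hx _ using hx
      · exact ae_of_all _ fun x h => absurd h hi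
    filter_upwards [this] with x hx hxJ
    have ex : ∃ j, x ∈ V j := ⟨J, hxJ⟩
    simp only [D, dif_pos ex]
    exact hx _ (Nat.find_min' ex hxJ) (Nat.find_spec ex)
  have cof : ∀ S : Set (EVec n), IsCompact S → S ⊆ Ω → ∃ J, S ⊆ V J := by
    intro S hS hSO
    exact hS.elim_directed_cover V hV (hSO.trans cov) (mono.directed_le)
  refine ⟨D, ?_, ?_⟩
  · intro S hS hSO
    obtain ⟨J, hJ⟩ := cof S hS hSO
    refine MemLp.ae_eq ?_ ((md J).restrict S)
    rw [EventuallyEq, ae_restrict_iff' hS.measurableSet]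
    filter_upwards [DJ J] with x hx hxS
    exact (hx (hJ hxS)).symm
  · intro φ h1 h2 h3
    obtain ⟨J, hJ⟩ := cof _ h2.isCompact h3
    rw [hd J φ h1 h2 (hJ.trans (hVK J)), set_int_eq]
    · congr 1
      refine integral_congr_ae ?_
      filter_upwards [DJ J] with x hx
      by_cases hxs : x ∈ tsupport φ
      · rw [hx (hJ hxs)]
      · rw [image_eq_zero_of_notMem_tsupport hxs]; simp
    · intro x hx
      rw [image_eq_zero_of_notMem_tsupport (fun h => hx (h3 h)), mul_zero]

end P15

/-- **Theorem 4.13 (regularity of the dual solution).** Under the assumptions of the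
main theorem, the dual problem for `F(·) = f(|·|)` has a unique solution
`σ ∈ W^{1,2}_loc(Ω;ℝ^{N×n}) ∩ L^∞_⊥(Ω;ℝ^{N×n})`, given by
`σ = f'(|∇u|)|∇u|⁻¹∇u − T₀` a.e. in `Ω`, where `u` is the `W^{1,1}`-minimiser of `𝔉`. -/
theorem dual_solution_regularity
    {n N : ℕ} (Ω : Set (EVec n))
    (hΩ : IsLipschitzDomain Ω) (hΩbdd : Bornology.IsBounded Ω)
    (hΩsc : SimplyConnectedSpace Ω)
    (ν L : ℝ) (hν : 0 < ν) (hνL : ν ≤ L)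
    (f f' f'' : ℝ → ℝ)
    (hderiv : ∀ t ∈ Set.Ici (0:ℝ), HasDerivWithinAt f (f' t) (Set.Ici 0) t)
    (hderiv' : ∀ t ∈ Set.Ici (0:ℝ), HasDerivWithinAt f' (f'' t) (Set.Ici 0) t)
    (hf''cont : ContinuousOn f'' (Set.Ici 0))
    (hstrict : StrictConvexOn ℝ (Set.Ici 0) f)
    (hf0 : f 0 = 0) (hf'0 : f' 0 = 0)
    (hgrowth : ∀ t ∈ Set.Ici (0:ℝ), ν * t - L ≤ f t ∧ f t ≤ L * (t + 1))
    (hsec : ∀ t ∈ Set.Ici (0:ℝ), f'' t ≤ L * (1 + t)⁻¹)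
    (finf : ℝ) (hfinf : Filter.Tendsto (fun t => f t / t) Filter.atTop (nhds finf))
    (T₀ : EVec n → Fin N → Fin n → ℝ)
    (hT : MemW2inf Ω T₀)
    (hTsmall : linfNormOn Ω T₀ < ENNReal.ofReal finf)
    (u : EVec n → Fin N → ℝ) (Du : EVec n → Fin N → Fin n → ℝ)
    (hu : HasWeakDerivOn Ω u Du)
    (hmin : ∀ (w : EVec n → Fin N → ℝ) (Dw : EVec n → Fin N → Fin n → ℝ),
      HasWeakDerivOn Ω w Dw →
        FFgen Ω (fun z => f (mnorm z)) T₀ Du ≤ FFgen Ω (fun z => f (mnorm z)) T₀ Dw) :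
    MemLinfPerp Ω (fun x => Amap f' (Du x) - T₀ x) ∧
    (∀ χ : EVec n → Fin N → Fin n → ℝ, MemLinfPerp Ω χ →
      Rdual Ω (fun z => f (mnorm z)) T₀ χ ≤
        Rdual Ω (fun z => f (mnorm z)) T₀ (fun x => Amap f' (Du x) - T₀ x)) ∧
    (∀ χ : EVec n → Fin N → Fin n → ℝ, MemLinfPerp Ω χ →
      Rdual Ω (fun z => f (mnorm z)) T₀ χ =
        Rdual Ω (fun z => f (mnorm z)) T₀ (fun x => Amap f' (Du x) - T₀ x) →
      χ =ᵐ[volume.restrict Ω] fun x => Amap f' (Du x) - T₀ x) ∧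
    -- `σ ∈ W^{1,2}_loc(Ω;ℝ^{N×n})`
    (∃ Dσ : EVec n → (Fin N × Fin n) → Fin n → ℝ,
      HasLocWeakDerivOn Ω
        (fun x (p : Fin N × Fin n) => (Amap f' (Du x) - T₀ x) p.1 p.2) Dσ ∧
      ∀ K : Set (EVec n), IsCompact K → K ⊆ Ω →
        IntegrableOn (fun x => mnorm (Dσ x) ^ 2) K volume) := by
  have hO : IsOpen Ω := hΩ.1
  have hfin : volume Ω ≠ ∞ := hΩbdd.measure_lt_top.ne
  have h : GoodF f f' L := goodF_of hν hνL hderiv hderiv' hstrict hf0 hf'0 hgrowth hsec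
  have h1 := part1 h hO hfin hT hu hmin
  refine ⟨h1, fun χ hχ => (part23 h hO hfin hT hu hmin χ hχ).1,
    fun χ hχ => (part23 h hO hfin hT hu hmin χ hχ).2, ?_⟩
  have hint : ∀ p : Fin N × Fin n, IntegrableOn (fun x => (Amap f' (Du x) - T₀ x) p.1 p.2) Ω := by
    intro p
    obtain ⟨hm, ⟨C, hC⟩, -⟩ := h1
    haveI : IsFiniteMeasure (volume.restrict Ω) := ⟨by rw [Measure.restrict_apply_univ]; exact hfin.lt_top⟩
    refine Integrable.of_bound (C := C) ?_ ?_
    · exact ((continuous_apply p.2).comp (continuous_apply p.1)).comp_aestronglyMeasurable hm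
    · refine (ae_restrict_iff' hO.measurableSet).2 (ae_of_all _ fun x hx => ?_)
      have h2 := hC x hx
      rw [mnorm_eq] at h2
      have h3 := PiLp.norm_apply_le (toM N n (Amap f' (Du x) - T₀ x)) p
      rw [toM_apply] at h3
      exact h3.trans h2
  have key : ∀ (s : Fin n) (p : Fin N × Fin n), ∃ D : EVec n → ℝ,
      (∀ K : Set (EVec n), IsCompact K → K ⊆ Ω → MemLp D 2 (volume.restrict K)) ∧
      ∀ φ : EVec n → ℝ, ContDiff ℝ 1 φ → HasCompactSupport φ → tsupport φ ⊆ Ω →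
        ∫ x in Ω, (Amap f' (Du x) - T₀ x) p.1 p.2 * fderiv ℝ φ x (ee n s) = - ∫ x in Ω, D x * φ x := by
    intro s p
    refine glue hO (fun φ => ∫ x in Ω, (Amap f' (Du x) - T₀ x) p.1 p.2 * fderiv ℝ φ x (ee n s)) ?_
    intro K hK hKO
    obtain ⟨B, hB⟩ := appl h hO hfin hfinf hT hTsmall hu hmin hK hKO s p
    exact reprL2 (hint p) s hB
  choose D hD1 hD2 using key
  refine ⟨fun x p s => D s p x, ⟨fun K hK hKO => ?_, fun φ a b c p s => hD2 s p φ a b c⟩, fun K hK hKO => ?_⟩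
  · haveI : IsFiniteMeasure (volume.restrict K) :=
      ⟨by rw [Measure.restrict_apply_univ]; exact hK.measure_lt_top⟩
    refine Integrable.of_eval fun p => Integrable.of_eval fun s => ?_
    exact (hD1 s p K hK hKO).integrable (by norm_num)
  · have e : ∀ x, mnorm (fun (p : Fin N × Fin n) (s : Fin n) => D s p x) ^ 2 = ∑ p, ∑ s, D s p x ^ 2 := by
      intro x
      rw [mnorm, mdot, Real.sq_sqrt (Finset.sum_nonneg fun p _ => Finset.sum_nonneg fun s _ => mul_self_nonneg _)]
      simp only [sq]
    simp only [e]
    exact integrable_finsetSum _ fun p _ => integrable_finsetSum _ fun s _ => (hD1 s p K hK hKO).integrable_sq
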